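/- arXiv:math/0208078 — 8 statements merged into one kernel-verified Lean document; each statement's English description precedes it below -/
import Mathlib

section
/- Let R and S be integral domains that are finitely generated ℂ-algebras with the same transcendence degree over ℂ, let ι : R → S be an injective ℂ-algebra homomorphism, and let F : S → S and G : R → R be ℂ-algebra homomorphisms with ι ∘ G = F ∘ ι. Then F is injective with the induced endomorphism of Frac(S) bijective if and only if G is injective with the induced endomorphism of Frac(R) bijective (i.e., f is birational if and only if g is birational). -/
/-- The transcendence degree of a commutative `k`-algebra `A`: the supremum of the
cardinalities of algebraically independent subsets of `A` over `k`. -/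
noncomputable def trdeg (k A : Type*) [CommRing k] [CommRing A] [Algebra k A] : Cardinal :=
  ⨆ s : {s : Set A // AlgebraicIndependent k ((↑) : s → A)}, Cardinal.mk s.1

universe u v

/-!
By additivity of the transcendence degree, `S` is algebraic over `R`, so with finite generation
`Frac S` is a finite extension of `Frac R`. Algebraicity also transfers injectivity: a ring
homomorphism out of `S` is injective as soon as its restriction to `R` is. The extensions `ψ` and
`φ` of `G` and `F` to the fraction fields satisfy `j ∘ ψ = φ ∘ j` for the embedding
`j : Frac R → Frac S`. The degree `deg f = [L : f(K)]` of field homomorphisms `f : K → L` is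
multiplicative, hence `deg ψ * deg j = deg j * deg φ`. Cancelling the finite degree of `j` gives
`deg ψ = deg φ`, and a field homomorphism is bijective exactly when its degree is one.
-/

open Function Module

section Degree

variable {K L M : Type*} [Field K] [Field L] [Field M]

lemma finrank_fieldRange_comp (f : K →+* L) (g : L →+* M) :
    finrank (g.comp f).fieldRange M = finrank f.fieldRange L * finrank g.fieldRange M := by
  have hrel : (g.comp f).fieldRange.relfinrank g.fieldRange = finrank f.fieldRange L := by
    rw [← RingHom.map_fieldRange, RingHom.fieldRange_eq_map g, Subfield.relfinrank_map_map,
      Subfield.relfinrank_top_right]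
  have hle : (g.comp f).fieldRange ≤ g.fieldRange := by
    rintro _ ⟨x, rfl⟩
    exact ⟨f x, rfl⟩
  rw [← hrel, Subfield.relfinrank_mul_finrank_top hle]

lemma finrank_fieldRange_eq_one_iff (f : K →+* L) :
    finrank f.fieldRange L = 1 ↔ Bijective f := by
  rw [← Subfield.relfinrank_top_right, Subfield.relfinrank_eq_one_iff, top_le_iff,
    RingHom.fieldRange_eq_top_iff]
  exact ⟨fun hf => ⟨f.injective, hf⟩, Bijective.surjective⟩

lemma finrank_fieldRange_algebraMap [Algebra K L] :
    finrank (algebraMap K L).fieldRange L = finrank K L :=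
  (Algebra.finrank_eq_of_equiv_equiv (algebraMap K L).rangeRestrictFieldEquiv (.refl L) rfl).symm

lemma bijective_iff_of_comp_algebraMap_eq [Algebra K L] [Module.Finite K L]
    {φ : L →+* L} {ψ : K →+* K} (h : φ.comp (algebraMap K L) = (algebraMap K L).comp ψ) :
    Bijective φ ↔ Bijective ψ := by
  have hdeg : finrank K L * finrank φ.fieldRange L = finrank K L * finrank ψ.fieldRange K := by
    rw [← finrank_fieldRange_algebraMap, ← finrank_fieldRange_comp, h, finrank_fieldRange_comp,
      mul_comm]
  rw [← finrank_fieldRange_eq_one_iff, ← finrank_fieldRange_eq_one_iff,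
    Nat.eq_of_mul_eq_mul_left finrank_pos hdeg]

end Degree

section AlgebraicExtension

lemma injective_comp_algebraMap_iff {R S T : Type*} [CommRing R] [CommRing S] [CommRing T]
    [NoZeroDivisors S] [Algebra R S] [FaithfulSMul R S] [Algebra.IsAlgebraic R S] (f : S →+* T) :
    Injective (f.comp (algebraMap R S)) ↔ Injective f := by
  let := f.toAlgebra
  let := (f.comp (algebraMap R S)).toAlgebra
  have : IsScalarTower R S T := .of_algebraMap_eq' rfl
  exact ⟨Algebra.IsAlgebraic.injective_tower_top S,
    fun hf => hf.comp (FaithfulSMul.algebraMap_injective R S)⟩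

lemma finite_fractionRing_of_isAlgebraic (R S K L : Type*) [CommRing R] [CommRing S]
    [Field K] [Field L] [Algebra R S] [Algebra R K] [Algebra R L] [Algebra S L] [Algebra K L]
    [IsScalarTower R S L] [IsScalarTower R K L] [IsFractionRing R K] [IsFractionRing S L]
    [Algebra.EssFiniteType R S] [Algebra.IsAlgebraic R S] : Module.Finite K L := by
  have : IsDomain R := (IsFractionRing.injective R K).isDomain (algebraMap R K)
  have : FaithfulSMul R L := .trans R K L
  have : Algebra.IsAlgebraic R L := (IsFractionRing.isAlgebraic_iff' R S L).1 inferInstance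
  have : Algebra.IsAlgebraic K L := IsFractionRing.comap_isAlgebraic_iff.1 ‹_›
  have : Algebra.EssFiniteType S L := .of_isLocalization L (nonZeroDivisors S)
  have : Algebra.EssFiniteType R L := .comp R S L
  have : Algebra.EssFiniteType K L := .of_comp R K L
  exact Algebra.finite_of_essFiniteType_of_isAlgebraic

end AlgebraicExtension

section TranscendenceDegree

lemma trdeg_eq_algebra_trdeg (k A : Type*) [CommRing k] [CommRing A] [Algebra k A] :
    trdeg k A = Algebra.trdeg k A :=
  rfl

lemma trdeg_lt_aleph0_of_essFiniteType (k A : Type*) [CommRing k] [CommRing A] [IsDomain A]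
    [Algebra k A] [FaithfulSMul k A] [Algebra.EssFiniteType k A] :
    Algebra.trdeg k A < Cardinal.aleph0 := by
  have : IsDomain k := .of_faithfulSMul k A
  obtain ⟨B, M, hB, hloc⟩ := (Algebra.essFiniteType_iff_exists_subalgebra k A).1 ‹_›
  rw [← trdeg_add_eq k B, trdeg_eq_zero_iff.2 hloc.isAlgebraic, add_zero]
  exact trdeg_lt_aleph0_of_finiteType

lemma isAlgebraic_of_lift_trdeg_eq {k : Type*} {R : Type u} {S : Type v} [CommRing k]
    [CommRing R] [CommRing S] [NoZeroDivisors S] [Algebra k R] [Algebra k S] [Algebra R S]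
    [IsScalarTower k R S] [Nontrivial k] [FaithfulSMul k R] [FaithfulSMul R S]
    (hfin : Algebra.trdeg k S < Cardinal.aleph0)
    (htr : Cardinal.lift.{v} (Algebra.trdeg k R) = Cardinal.lift.{u} (Algebra.trdeg k S)) :
    Algebra.IsAlgebraic R S := by
  have hadd := lift_trdeg_add_eq k R S
  rw [htr] at hadd
  have hzero : Cardinal.lift.{u} (Algebra.trdeg R S) = 0 :=
    Cardinal.eq_of_add_eq_add_left (hadd.trans (add_zero _).symm) (Cardinal.lift_lt_aleph0.2 hfin)
  exact trdeg_eq_zero_iff.1 (Cardinal.lift_eq_zero.1 hzero)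

end TranscendenceDegree

section Birational

/-- A ring endomorphism is birational if it is injective and the endomorphism it induces on the
total ring of fractions is bijective: for a domain `A`, the corresponding endomorphism of `Spec A`
is then birational. The induced endomorphism is unique when it exists, so it is quantified
existentially rather than constructed from injectivity. -/
def IsBirational {A : Type*} [CommRing A] (E : A →+* A) : Prop :=
  Injective E ∧ ∃ Φ : FractionRing A →+* FractionRing A,
    (∀ a, Φ (algebraMap A (FractionRing A) a) = algebraMap A (FractionRing A) (E a)) ∧ Bijective Φ

lemma isBirational_iff_bijective {A : Type*} [CommRing A] {E : A →+* A}
    {φ : FractionRing A →+* FractionRing A}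
    (hφ : φ.comp (algebraMap A (FractionRing A)) = (algebraMap A (FractionRing A)).comp E) :
    IsBirational E ↔ Bijective φ := by
  constructor
  · rintro ⟨-, Φ, hΦ, hbij⟩
    have : Φ = φ := IsLocalization.ringHom_ext (nonZeroDivisors A) <|
      (RingHom.ext hΦ).trans hφ.symm
    rwa [← this]
  · intro hbij
    have hinj : Injective ((algebraMap A (FractionRing A)).comp E) :=
      hφ ▸ hbij.injective.comp (IsFractionRing.injective A (FractionRing A))
    have hE : Injective E := Injective.of_comp (f := algebraMap A (FractionRing A)) hinj
    exact ⟨hE, φ, RingHom.congr_fun hφ, hbij⟩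

theorem isBirational_iff_of_isAlgebraic {R S : Type*} [CommRing R] [CommRing S] [IsDomain S]
    [Algebra R S] [FaithfulSMul R S] [Algebra.EssFiniteType R S] [Algebra.IsAlgebraic R S]
    {F : S →+* S} {G : R →+* R} (h : F.comp (algebraMap R S) = (algebraMap R S).comp G) :
    IsBirational F ↔ IsBirational G := by
  have : IsDomain R := .of_faithfulSMul R S
  have hinj : Injective F ↔ Injective G := by
    rw [← injective_comp_algebraMap_iff (R := R), h]
    exact (FaithfulSMul.algebraMap_injective R S).of_comp_iff G
  suffices key : Injective F → Injective G → (IsBirational F ↔ IsBirational G) from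
    ⟨fun hF => (key hF.1 (hinj.1 hF.1)).1 hF, fun hG => (key (hinj.2 hG.1) hG.1).2 hG⟩
  intro hF hG
  let := FractionRing.liftAlgebra R (FractionRing S)
  have := finite_fractionRing_of_isAlgebraic R S (FractionRing R) (FractionRing S)
  let φ : FractionRing S →+* FractionRing S := IsFractionRing.map hF
  let ψ : FractionRing R →+* FractionRing R := IsFractionRing.map hG
  have hφ : φ.comp (algebraMap S _) = (algebraMap S _).comp F := IsLocalization.map_comp _
  have hψ : ψ.comp (algebraMap R _) = (algebraMap R _).comp G := IsLocalization.map_comp _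
  rw [isBirational_iff_bijective hφ, isBirational_iff_bijective hψ]
  refine bijective_iff_of_comp_algebraMap_eq (IsFractionRing.ringHom_ext (A := R) fun r => ?_)
  calc φ (algebraMap _ _ (algebraMap R _ r))
      = φ (algebraMap S _ (algebraMap R S r)) := by simp only [← IsScalarTower.algebraMap_apply]
    _ = algebraMap S _ (F (algebraMap R S r)) := RingHom.congr_fun hφ _
    _ = algebraMap S _ (algebraMap R S (G r)) := congrArg _ (RingHom.congr_fun h r)
    _ = algebraMap _ _ (algebraMap R _ (G r)) := by simp only [← IsScalarTower.algebraMap_apply]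
    _ = algebraMap _ _ (ψ (algebraMap R _ r)) := congrArg _ (RingHom.congr_fun hψ r).symm

end Birational

theorem birational_iff_general {k : Type*} {R : Type u} {S : Type v} [CommRing k] [CommRing R]
    [CommRing S] [IsDomain S] [Algebra k R] [Algebra k S] [FaithfulSMul k R]
    [Algebra.EssFiniteType k S]
    (htr : Cardinal.lift.{v} (trdeg k R) = Cardinal.lift.{u} (trdeg k S))
    (ι : R →ₐ[k] S) (hι : Injective ι)
    (F : S →+* S) (G : R →+* R) (hcomm : ∀ r, ι (G r) = F (ι r)) :
    IsBirational F ↔ IsBirational G := by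
  rw [trdeg_eq_algebra_trdeg, trdeg_eq_algebra_trdeg] at htr
  let := ι.toRingHom.toAlgebra
  have : IsScalarTower k R S := .of_algebraMap_eq' ι.comp_algebraMap.symm
  have : FaithfulSMul R S := (faithfulSMul_iff_algebraMap_injective R S).2 hι
  have : FaithfulSMul k S := .trans k R S
  have : IsDomain k := .of_faithfulSMul k S
  have : Algebra.EssFiniteType R S := .of_comp k R S
  have : Algebra.IsAlgebraic R S :=
    isAlgebraic_of_lift_trdeg_eq (trdeg_lt_aleph0_of_essFiniteType k S) htr
  exact isBirational_iff_of_isAlgebraic (RingHom.ext fun r => (hcomm r).symm)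

/-- Let `R`, `S` be affine domains over `ℂ` with the same transcendence degree over `ℂ`
and `ι : R → S` an injective `ℂ`-algebra homomorphism.  Let `F : S → S` and `G : R → R`
be `ℂ`-algebra homomorphisms with `ι ∘ G = F ∘ ι`.  Then `f` is birational iff `g` is
birational, i.e. `F` is injective with bijective induced endomorphism of `Frac(S)` iff
`G` is injective with bijective induced endomorphism of `Frac(R)`. -/
theorem birational_iff
    {R : Type u} {S : Type v} [CommRing R] [IsDomain R] [CommRing S] [IsDomain S]
    [Algebra ℂ R] [Algebra ℂ S] [Algebra.FiniteType ℂ R] [Algebra.FiniteType ℂ S]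
    (htr : Cardinal.lift.{v} (trdeg ℂ R) = Cardinal.lift.{u} (trdeg ℂ S))
    (ι : R →ₐ[ℂ] S) (hι : Function.Injective ι)
    (F : S →ₐ[ℂ] S) (G : R →ₐ[ℂ] R) (hcomm : ∀ r, ι (G r) = F (ι r)) :
    (Function.Injective F ∧
      ∃ Φ : FractionRing S →+* FractionRing S,
        (∀ s, Φ (algebraMap S (FractionRing S) s) = algebraMap S (FractionRing S) (F s)) ∧
        Function.Bijective Φ) ↔
    (Function.Injective G ∧
      ∃ Ψ : FractionRing R →+* FractionRing R,
        (∀ r, Ψ (algebraMap R (FractionRing R) r) = algebraMap R (FractionRing R) (G r)) ∧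
        Function.Bijective Ψ) :=
  birational_iff_general htr ι hι F G hcomm
end

section
/- Let R and S be integral domains that are finitely generated ℂ-algebras, let ι : R → S be an injective ℂ-algebra homomorphism, assume R is integrally closed in its fraction field (so Y = Spec R is normal), let F : S → S be a bijective ℂ-algebra homomorphism, and let G : R → R be a ℂ-algebra homomorphism with ι ∘ G = F ∘ ι. Then there exists a nonempty (hence dense) open subscheme U of Spec R such that the morphism Spec(G) : Spec R → Spec R restricts to an automorphism of U; that is, there is an isomorphism of schemes e : U ≅ U such that the inclusion of U composed with Spec(G) equals e followed by the inclusion of U. -/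
/-!
Write `f : X ⟶ Y` for `Spec ι`, `φ` for the automorphism `Spec F` of `X = Spec S`, and `g` for
`Spec G`, so that `f ≫ g = φ ≫ f`.

The morphism `g` is birational: the automorphism of `Frac S` induced by `F` maps `Frac R` into
itself, and it maps `Frac R` onto itself because intermediate fields of a finitely generated
extension satisfy the ascending chain condition.

Let `W` be the smooth locus of `f`, which is nonempty in characteristic zero. If `f ≫ g` is smooth
at `x`, hence flat there, then the denominators of `g⁻¹` can be cleared at `g (f x)` by the
equational criterion for flatness, so `g` is an isomorphism over a neighbourhood of `g (f x)` and
`f` is smooth at `x`. Since `f ≫ g = φ ≫ f`, this says `φ⁻¹ W ⊆ W`, and then `φ⁻¹ W = W` because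
`X` is Noetherian. Thus `U = f(W)` is open, `g` maps `U` onto `U`, and `g` is a local isomorphism
over every point of `g(U)`, so `g` restricts to an automorphism of `U`.
-/

open AlgebraicGeometry CategoryTheory

universe u

theorem apply_eq_of_le_apply {α : Type*} [PartialOrder α] [WellFoundedGT α] {f : α → α}
    (hmono : Monotone f) (hinj : Function.Injective f) {a : α} (h : a ≤ f a) : f a = a := by
  have hchain : Monotone fun n : ℕ ↦ f^[n] a :=
    monotone_nat_of_le_succ fun n ↦ by
      rw [Function.iterate_succ_apply]
      exact hmono.iterate n h
  obtain ⟨n, hn⟩ := WellFoundedGT.monotone_chain_condition ⟨_, hchain⟩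
  have hstable : f^[n] a = f^[n] (f a) := hn (n + 1) n.le_succ
  exact (hinj.iterate n hstable).symm

/-! ### Birationality -/

section IntermediateFields

open TensorProduct

variable {k L : Type*} [Field k] [Field L] [Algebra k L]

/-- The ideal of `L ⊗[k] L` generated by the elements `m ⊗ 1 - 1 ⊗ m` with `m ∈ M`, that is, the
kernel of `L ⊗[k] L → L ⊗[M] L`. It encodes intermediate fields of `L / k` as ideals of a
ring that is Noetherian when `L / k` is finitely generated. -/
def diagonalIdeal (M : IntermediateField k L) : Ideal (L ⊗[k] L) :=
  Ideal.span (Algebra.TensorProduct.includeLeftSubRight k L '' M)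

theorem includeLeftSubRight_mem_diagonalIdeal_iff {M : IntermediateField k L} {z : L} :
    Algebra.TensorProduct.includeLeftSubRight k L z ∈ diagonalIdeal M ↔ z ∈ M := by
  refine ⟨fun hz ↦ ?_, fun hz ↦ Ideal.subset_span ⟨z, hz, rfl⟩⟩
  let π : L ⊗[k] L →+* L ⊗[M] L := (Algebra.TensorProduct.mapOfCompatibleSMul M k k L L).toRingHom
  have hπ (x y : L) : π (x ⊗ₜ y) = x ⊗ₜ y := rfl
  have hker : diagonalIdeal M ≤ RingHom.ker π := by
    refine Ideal.span_le.mpr ?_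
    rintro _ ⟨m, hm, rfl⟩
    have hsmul := TensorProduct.smul_tmul (R := M) (⟨m, hm⟩ : M) (1 : L) (1 : L)
    rw [SetLike.mem_coe, RingHom.mem_ker, Algebra.TensorProduct.includeLeftSubRight_apply, map_sub,
      hπ, hπ, sub_eq_zero]
    simpa [Algebra.smul_def] using hsmul
  obtain ⟨m, rfl⟩ := (Algebra.IsEffective.of_faithfullyFlat M L z).mp (hker hz)
  exact m.2

theorem diagonalIdeal_strictMono :
    StrictMono (diagonalIdeal : IntermediateField k L → Ideal (L ⊗[k] L)) := by
  refine Monotone.strictMono_of_injective (fun M N h ↦ Ideal.span_mono (Set.image_mono h))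
    fun M N h ↦ ?_
  ext z
  rw [← includeLeftSubRight_mem_diagonalIdeal_iff, h, includeLeftSubRight_mem_diagonalIdeal_iff]

variable [Algebra.EssFiniteType k L]

theorem wellFoundedGT_intermediateField : WellFoundedGT (IntermediateField k L) :=
  have : IsNoetherianRing (L ⊗[k] L) := Algebra.EssFiniteType.isNoetherianRing L _
  diagonalIdeal_strictMono.wellFoundedGT

theorem intermediateField_map_eq_of_map_le (σ : L ≃ₐ[k] L) {M : IntermediateField k L}
    (h : M.map (σ : L →ₐ[k] L) ≤ M) : M.map (σ : L →ₐ[k] L) = M := by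
  have := wellFoundedGT_intermediateField (k := k) (L := L)
  have hle : M ≤ M.map (σ.symm : L →ₐ[k] L) := by
    simpa [IntermediateField.map_map, IntermediateField.map_id] using
      IntermediateField.map_mono (σ.symm : L →ₐ[k] L) h
  have heq : M.map (σ.symm : L →ₐ[k] L) = M :=
    apply_eq_of_le_apply (fun _ _ ↦ IntermediateField.map_mono _)
      (IntermediateField.map_injective _) hle
  conv_lhs => rw [← heq]
  simp [IntermediateField.map_map, IntermediateField.map_id]

theorem surjective_of_semiconj_algEquiv {K : Type*} [Field K] [Algebra k K] (κ : K →ₐ[k] L)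
    (γ : K →ₐ[k] K) (σ : L ≃ₐ[k] L) (h : Function.Semiconj κ γ σ) : Function.Surjective γ := by
  have hcomp : (σ : L →ₐ[k] L).comp κ = κ.comp γ := AlgHom.ext fun x ↦ (h x).symm
  have hrange : κ.fieldRange.map (σ : L →ₐ[k] L) = κ.fieldRange := by
    refine intermediateField_map_eq_of_map_le σ ?_
    rintro _ ⟨_, ⟨x, rfl⟩, rfl⟩
    exact ⟨γ x, h x⟩
  intro x
  obtain ⟨y, hy⟩ : κ x ∈ (κ.comp γ).fieldRange := by
    rw [← hcomp, ← AlgHom.map_fieldRange, hrange]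
    exact ⟨x, rfl⟩
  exact ⟨y, κ.injective hy⟩

end IntermediateFields

/-- An injective ring homomorphism along which every element of the target becomes a fraction of
elements of the source; between domains, this says that it induces an isomorphism of fraction
fields. -/
structure IsBirational_s9 {A B : Type*} [CommRing A] [CommRing B] (g : A →+* B) : Prop where
  injective : Function.Injective g
  exists_map_eq_mul_map (b : B) : ∃ x y, y ≠ 0 ∧ g x = b * g y

section FractionFields

variable {k R S : Type*} [CommRing k] [CommRing R] [IsDomain R] [CommRing S] [IsDomain S]
  [Algebra k R] [Algebra k S]

/-- The homomorphism of fraction fields induced by an injective homomorphism of `k`-algebras. -/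
noncomputable def fractionRingMap (ψ : R →ₐ[k] S) (hψ : Function.Injective ψ) :
    FractionRing R →ₐ[k] FractionRing S :=
  IsFractionRing.liftAlgHom (g := (IsScalarTower.toAlgHom k S (FractionRing S)).comp ψ)
    ((IsFractionRing.injective S (FractionRing S)).comp hψ)

theorem fractionRingMap_algebraMap (ψ : R →ₐ[k] S) (hψ : Function.Injective ψ) (r : R) :
    fractionRingMap ψ hψ (algebraMap R _ r) = algebraMap S _ (ψ r) :=
  IsLocalization.lift_eq _ r

theorem isBirational_of_surjective_fractionRingMap {ψ : R →ₐ[k] S} {hψ : Function.Injective ψ}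
    (h : Function.Surjective (fractionRingMap ψ hψ)) : IsBirational_s9 (ψ : R →+* S) where
  injective := hψ
  exists_map_eq_mul_map s := by
    obtain ⟨x, hx⟩ := h (algebraMap S _ s)
    obtain ⟨a, b, hb, rfl⟩ := IsFractionRing.div_surjective (A := R) x
    have hb0 : b ≠ 0 := nonZeroDivisors.ne_zero hb
    have hψb : algebraMap S (FractionRing S) (ψ b) ≠ 0 :=
      (map_ne_zero_iff _ (IsFractionRing.injective S _)).mpr ((map_ne_zero_iff ψ hψ).mpr hb0)
    refine ⟨a, b, hb0, IsFractionRing.injective S (FractionRing S) ?_⟩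
    rw [map_div₀, fractionRingMap_algebraMap, fractionRingMap_algebraMap, div_eq_iff hψb] at hx
    exact hx.trans (map_mul _ _ _).symm

end FractionFields

theorem isBirational_of_semiconj {k R S : Type*} [Field k] [CommRing R] [IsDomain R] [CommRing S]
    [IsDomain S] [Algebra k R] [Algebra k S] [Algebra.EssFiniteType k S] {ι : R →ₐ[k] S}
    (hι : Function.Injective ι) {G : R →ₐ[k] R} {F : S →ₐ[k] S} (hF : Function.Bijective F)
    (h : Function.Semiconj ι G F) : IsBirational_s9 (G : R →+* R) := by
  have hG : Function.Injective G := .of_comp (h.comp_eq ▸ hF.injective.comp hι)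
  have : Algebra.EssFiniteType S (FractionRing S) := .of_isLocalization _ (nonZeroDivisors S)
  have : Algebra.EssFiniteType k (FractionRing S) := .comp k S _
  let σ : FractionRing S ≃ₐ[k] FractionRing S :=
    IsFractionRing.fieldEquivOfAlgEquiv k _ _ (AlgEquiv.ofBijective F hF)
  have hσ (s : S) : σ (algebraMap S _ s) = algebraMap S _ (F s) :=
    IsFractionRing.fieldEquivOfAlgEquiv_algebraMap k _ _ (AlgEquiv.ofBijective F hF) s
  have hcomp : (fractionRingMap ι hι).comp (fractionRingMap G hG) =
      (σ : FractionRing S →ₐ[k] FractionRing S).comp (fractionRingMap ι hι) := by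
    refine IsLocalization.algHom_ext (nonZeroDivisors R) (AlgHom.ext fun r ↦ ?_)
    change fractionRingMap ι hι (fractionRingMap G hG (algebraMap R _ r)) =
      σ (fractionRingMap ι hι (algebraMap R _ r))
    rw [fractionRingMap_algebraMap, fractionRingMap_algebraMap, fractionRingMap_algebraMap, hσ, h r]
  exact isBirational_of_surjective_fractionRingMap (hψ := hG)
    (surjective_of_semiconj_algEquiv (fractionRingMap ι hι) (fractionRingMap G hG) σ
      fun x ↦ DFunLike.congr_fun hcomp x)

/-! ### Clearing denominators by flatness -/

theorem exists_mul_eq_mul_of_flat {A C : Type*} [CommRing A] [CommRing C] [Algebra A C]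
    [Module.Flat A C] {q : Ideal C} (hq : q ≠ ⊤) {a b : A} {c : C}
    (h : algebraMap A C a = algebraMap A C b * c) :
    ∃ d e : A, algebraMap A C d ∉ q ∧ a * d = b * e := by
  have hrel : ∑ i, ![a, -b] i • ![(1 : C), c] i = 0 := by
    simp [Algebra.smul_def, h]
  obtain ⟨κ, t, z, hz, ht⟩ := 
    Module.Flat.isTrivialRelation_of_sum_smul_eq_zero (R := A) (M := C) (f := ![a, -b])
      (x := ![(1 : C), c]) hrel
  obtain ⟨j, hj⟩ : ∃ j, algebraMap A C (t 0 j) ∉ q := by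
    by_contra! hmem
    refine hq ((Ideal.eq_top_iff_one q).mpr ?_)
    rw [show (1 : C) = ∑ j, t 0 j • z j from hz 0]
    exact sum_mem fun j _ ↦ Algebra.smul_def (t 0 j) (z j) ▸ q.mul_mem_right _ (hmem j)
  refine ⟨t 0 j, t 1 j, hj, ?_⟩
  have := ht j
  simp only [Fin.sum_univ_two, Matrix.cons_val_zero, Matrix.cons_val_one, neg_mul] at this
  exact add_neg_eq_zero.mp this

section Localization

variable {A B : Type*} [CommRing A] [CommRing B] [Algebra A B]

theorem exists_awayMap_surjective [Algebra.FiniteType A B] (M : Submonoid A)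
    (hM : ∀ b : B, ∃ d ∈ M, ∃ a, algebraMap A B a = b * algebraMap A B d) :
    ∃ s ∈ M, Function.Surjective (Localization.awayMap (algebraMap A B) s) := by
  classical
  choose d hdM n hn using hM
  obtain ⟨T, hT⟩ := Algebra.FiniteType.out (R := A) (A := B)
  refine ⟨∏ t ∈ T, d t, prod_mem fun t _ ↦ hdM t,
    Localization.awayMap_surjective_iff.mpr fun b ↦ ?_⟩
  have hb : b ∈ Algebra.adjoin A (T : Set B) := hT ▸ Algebra.mem_top
  induction hb using Algebra.adjoin_induction with
  | mem t ht =>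
    refine ⟨n t * ∏ i ∈ T.erase t, d i, 1, ?_⟩
    rw [pow_one, ← Finset.mul_prod_erase T d ht, map_mul, map_mul, hn]
    ring
  | algebraMap a => exact ⟨a, 0, by simp⟩
  | add x y _ _ hx hy =>
    obtain ⟨a, k, ha⟩ := hx
    obtain ⟨b, l, hb⟩ := hy
    refine ⟨a * (∏ t ∈ T, d t) ^ l + b * (∏ t ∈ T, d t) ^ k, k + l, ?_⟩
    rw [map_add, map_mul, map_mul, ha, hb, map_pow, map_pow]
    ring
  | mul x y _ _ hx hy =>
    obtain ⟨a, k, ha⟩ := hx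
    obtain ⟨b, l, hb⟩ := hy
    refine ⟨a * b, k + l, ?_⟩
    rw [map_mul, ha, hb]
    ring

theorem exists_awayMap_bijective_of_flat [IsDomain B] [Algebra.FiniteType A B]
    (hg : IsBirational_s9 (algebraMap A B)) {C : Type*} [CommRing C]
    [Algebra A C] [Algebra B C] [IsScalarTower A B C] [Module.Flat A C] (q : Ideal C) [q.IsPrime] :
    ∃ s, algebraMap A C s ∉ q ∧ Function.Bijective (Localization.awayMap (algebraMap A B) s) := by
  obtain ⟨s, hs, hsurj⟩ := exists_awayMap_surjective (B := B)
    (q.primeCompl.comap (algebraMap A C)) fun b ↦ by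
      obtain ⟨x, y, hy, hxy⟩ := hg.exists_map_eq_mul_map b
      have hC : algebraMap A C x = algebraMap A C y * algebraMap B C b := by
        simp only [IsScalarTower.algebraMap_apply A B C, hxy, map_mul, mul_comm]
      obtain ⟨d, e, hd, hde⟩ := exists_mul_eq_mul_of_flat (Ideal.IsPrime.ne_top ‹_›) hC
      refine ⟨d, hd, e, mul_left_cancel₀ ((map_ne_zero_iff _ hg.injective).mpr hy) ?_⟩
      rw [← map_mul, ← hde, map_mul, hxy]
      ring
  refine ⟨s, hs, Localization.awayMap_injective_iff.mpr fun a ha ↦ ⟨0, ?_⟩, hsurj⟩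
  rw [pow_zero, one_mul]
  exact (map_eq_zero_iff _ hg.injective).mp ha

end Localization

theorem isIso_morphismRestrict_basicOpen {A B : Type u} [CommRing A] [CommRing B] (g : A →+* B)
    {s : A} (hs : Function.Bijective (Localization.awayMap g s)) :
    IsIso (Spec.map (CommRingCat.ofHom g) ∣_ PrimeSpectrum.basicOpen s) := by
  have : IsIso (CommRingCat.ofHom (Localization.awayMap g s)) :=
    (ConcreteCategory.isIso_iff_bijective _).mpr hs
  exact ((MorphismProperty.isomorphisms Scheme).arrow_mk_iso_iff
    (SpecMapRestrictBasicOpenIso (CommRingCat.ofHom g) s)).mpr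
      (inferInstanceAs (IsIso (Spec.map (CommRingCat.ofHom (Localization.awayMap g s)))))

/-! ### Smooth loci -/

section Smooth

variable (R : Type*) {S : Type*} [CommRing R] [CommRing S] [Algebra R S]

theorem flat_atPrime_of_isSmoothAt [Algebra.FinitePresentation R S] (p : Ideal S) [p.IsPrime]
    [Algebra.IsSmoothAt R p] : Module.Flat R (Localization.AtPrime p) := by
  obtain ⟨r, hr, _⟩ := Algebra.IsSmoothAt.exists_notMem_smooth R p
  have hrp : Submonoid.powers r ≤ p.primeCompl := Submonoid.powers_le.mpr hr
  let := IsLocalization.localizationAlgebraOfSubmonoidLe (Localization.Away r)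
    (Localization.AtPrime p) _ _ hrp
  have := IsLocalization.localization_isScalarTower_of_submonoid_le (Localization.Away r)
    (Localization.AtPrime p) _ _ hrp
  have := IsLocalization.isLocalization_of_submonoid_le (Localization.Away r)
    (Localization.AtPrime p) _ _ hrp
  have : Module.Flat (Localization.Away r) (Localization.AtPrime p) :=
    IsLocalization.flat _ (p.primeCompl.map (algebraMap S (Localization.Away r)))
  have : IsScalarTower R (Localization.Away r) (Localization.AtPrime p) := .to₁₃₄ _ S _ _
  exact .trans R (Localization.Away r) _

theorem isSmoothAt_bot [IsDomain R] [IsDomain S] [CharZero R] [Algebra.FiniteType R S]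
    [FaithfulSMul R S] : Algebra.IsSmoothAt R (⊥ : Ideal S) := by
  let := FractionRing.liftAlgebra R (FractionRing S)
  have := FractionRing.isScalarTower_liftAlgebra R (FractionRing S)
  have : Algebra.EssFiniteType S (FractionRing S) := .of_isLocalization _ (nonZeroDivisors S)
  have : Algebra.EssFiniteType R (FractionRing S) := .comp R S _
  have : Algebra.EssFiniteType (FractionRing R) (FractionRing S) := .of_comp R _ _
  have : Algebra.FormallySmooth R (FractionRing R) := .of_isLocalization (nonZeroDivisors R)
  have : Algebra.FormallySmooth R (FractionRing S) := .comp R (FractionRing R) _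
  have : IsFractionRing S (Localization.AtPrime (⊥ : Ideal S)) := by
    rw [IsFractionRing, ← Ideal.primeCompl_bot]
    infer_instance
  exact .of_equiv ((FractionRing.algEquiv S (Localization.AtPrime (⊥ : Ideal S))).restrictScalars R)

end Smooth

theorem mem_smoothLocus_specMap_iff (R : Type u) {S : Type u} [CommRing R] [CommRing S]
    [Algebra R S] [LocallyOfFinitePresentation (Spec.map (CommRingCat.ofHom (algebraMap R S)))]
    {x : PrimeSpectrum S} :
    x ∈ (Spec.map (CommRingCat.ofHom (algebraMap R S))).smoothLocus ↔
      Algebra.IsSmoothAt R x.asIdeal := by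
  let p := x.asIdeal.comap (algebraMap R S)
  let := Localization.AtPrime.algebraOfLiesOver p x.asIdeal
  rw [Algebra.IsSmoothAt,
    Algebra.FormallySmooth.iff_restrictScalars (A := Localization.AtPrime p),
    ← RingHom.formallySmooth_algebraMap]
  exact RingHom.FormallySmooth.respectsIso.arrow_mk_iso_iff
    (Scheme.arrowStalkMapSpecIso (CommRingCat.ofHom (algebraMap R S)) x)

section Schemes

variable {X Y : Scheme.{u}}

theorem isIso_stalkMap_of_isIso_morphismRestrict (g : X ⟶ Y) {V : Y.Opens} [IsIso (g ∣_ V)] {x : X}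
    (hx : g x ∈ V) : IsIso (g.stalkMap x) :=
  ((MorphismProperty.isomorphisms CommRingCat).arrow_mk_iso_iff
    (morphismRestrictStalkMap g V ⟨x, hx⟩)).mp <|
      (inferInstance : ∀ y, IsIso ((g ∣_ V).stalkMap y)) ⟨x, hx⟩

theorem isOpenImmersion_ι_comp (g : X ⟶ Y) {W : X.Opens}
    (h : ∀ x ∈ W, ∃ V : Y.Opens, g x ∈ V ∧ IsIso (g ∣_ V)) : IsOpenImmersion (W.ι ≫ g) := by
  choose V hxV hV using fun x : W ↦ h x x.2
  refine IsZariskiLocalAtTarget.of_range_subset_iSup (P := @IsOpenImmersion) V ?_ fun x ↦ ?_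
  · rintro _ ⟨x, rfl⟩
    exact TopologicalSpace.Opens.mem_iSup.mpr ⟨x, hxV x⟩
  · have : IsIso (g ∣_ V x) := hV x
    rw [morphismRestrict_comp]
    exact MorphismProperty.comp_mem (@IsOpenImmersion) (W.ι ∣_ g ⁻¹ᵁ V x) (g ∣_ V x)
      inferInstance inferInstance

theorem exists_restriction_iso (g : Y ⟶ Y) {U : Y.Opens} [IsOpenImmersion (U.ι ≫ g)]
    (hU : g '' U = U) : ∃ e : U.toScheme ≅ U.toScheme, U.ι ≫ g = e.hom ≫ U.ι := by
  have hrange : Set.range (U.ι ≫ g) = Set.range U.ι := by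
    rw [Scheme.Hom.comp_base, TopCat.coe_comp, Set.range_comp, Scheme.Opens.range_ι, hU]
  exact ⟨IsOpenImmersion.isoOfRangeEq _ _ hrange, (IsOpenImmersion.isoOfRangeEq_hom_fac ..).symm⟩

theorem isOpen_image_smoothLocus (f : X ⟶ Y) [LocallyOfFinitePresentation f] :
    IsOpen (f '' f.smoothLocus) := by
  have : Smooth (f.smoothLocus.ι ≫ f) := by
    rw [← Scheme.Hom.smoothLocus_eq_top_iff, ← Scheme.Hom.preimage_smoothLocus_eq]
    simp
  have h := (f.smoothLocus.ι ≫ f).isOpenMap.isOpen_range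
  rwa [Scheme.Hom.comp_base, TopCat.coe_comp, Set.range_comp, Scheme.Opens.range_ι] at h

theorem mem_smoothLocus_of_comp {Z : Scheme.{u}} (f : X ⟶ Y) (g : Y ⟶ Z)
    [LocallyOfFinitePresentation f] [LocallyOfFinitePresentation g] {x : X}
    [IsIso (g.stalkMap (f x))] (hx : x ∈ (f ≫ g).smoothLocus) : x ∈ f.smoothLocus := by
  rw [Scheme.Hom.mem_smoothLocus, Scheme.Hom.stalkMap_comp] at hx
  exact (RingHom.FormallySmooth.respectsIso.cancel_left_isIso (g.stalkMap (f x))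
    (f.stalkMap x)).mp hx

theorem preimage_eq_of_preimage_le [TopologicalSpace.NoetherianSpace X] (φ : X ≅ X) {W : X.Opens}
    (h : φ.hom ⁻¹ᵁ W ≤ W) : φ.hom ⁻¹ᵁ W = W := by
  have hle : W ≤ φ.inv ⁻¹ᵁ W := by
    simpa [← Scheme.Hom.comp_preimage] using φ.inv.preimage_mono h
  have heq : φ.inv ⁻¹ᵁ W = W :=
    apply_eq_of_le_apply (fun _ _ ↦ φ.inv.preimage_mono)
      (φ.symm.hom.homeomorph.symm.opensCongr.injective) hle
  conv_lhs => rw [← heq]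
  simp [← Scheme.Hom.comp_preimage]

theorem exists_restriction_iso_image_smoothLocus [TopologicalSpace.NoetherianSpace X]
    {f : X ⟶ Y} {g : Y ⟶ Y} [LocallyOfFinitePresentation f] [LocallyOfFinitePresentation g]
    {φ : X ≅ X} (hcomm : f ≫ g = φ.hom ≫ f)
    (hg : ∀ x ∈ (f ≫ g).smoothLocus, ∃ V : Y.Opens, g (f x) ∈ V ∧ IsIso (g ∣_ V)) :
    ∃ U : Y.Opens, (U : Set Y) = f '' f.smoothLocus ∧
      ∃ e : U.toScheme ≅ U.toScheme, U.ι ≫ g = e.hom ≫ U.ι := by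
  have hpre : φ.hom ⁻¹ᵁ f.smoothLocus = (f ≫ g).smoothLocus := by
    rw [Scheme.Hom.preimage_smoothLocus_eq]
    simp only [hcomm]
  have hle : (f ≫ g).smoothLocus ≤ f.smoothLocus := fun x hx ↦ by
    obtain ⟨V, hxV, _⟩ := hg x hx
    have := isIso_stalkMap_of_isIso_morphismRestrict g hxV
    exact mem_smoothLocus_of_comp f g hx
  have hinv : φ.hom ⁻¹ᵁ f.smoothLocus = f.smoothLocus :=
    preimage_eq_of_preimage_le φ (hpre ▸ hle)
  refine ⟨⟨_, isOpen_image_smoothLocus f⟩, rfl, ?_⟩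
  have := isOpenImmersion_ι_comp (W := ⟨_, isOpen_image_smoothLocus f⟩) g <| by
    rintro _ ⟨x, hx, rfl⟩
    exact hg x (by rwa [← hpre, hinv])
  refine exists_restriction_iso g ?_
  have himage : φ.hom '' f.smoothLocus = f.smoothLocus := by
    nth_rw 1 [← hinv]
    exact Set.image_preimage_eq (f.smoothLocus : Set X) φ.hom.surjective
  calc g '' (f '' f.smoothLocus) = (f ≫ g) '' f.smoothLocus := by simp [Set.image_image]
    _ = f '' (φ.hom '' f.smoothLocus) := by simp [hcomm, Set.image_image]
    _ = f '' f.smoothLocus := by rw [himage]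

end Schemes

/-! ### Affine schemes -/

theorem exists_awayMap_bijective_of_isSmoothAt {A B C : Type*} [CommRing A] [CommRing B]
    [IsDomain B] [CommRing C] [Algebra A B] [Algebra A C] [Algebra B C] [IsScalarTower A B C]
    [Algebra.FiniteType A B] [Algebra.FinitePresentation A C]
    (hg : IsBirational_s9 (algebraMap A B)) (p : Ideal C) [p.IsPrime] [Algebra.IsSmoothAt A p] :
    ∃ s, algebraMap A C s ∉ p ∧ Function.Bijective (Localization.awayMap (algebraMap A B) s) := by
  have := flat_atPrime_of_isSmoothAt A p
  obtain ⟨s, hs, hbij⟩ := exists_awayMap_bijective_of_flat (A := A) (B := B) hg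
    (IsLocalRing.maximalIdeal (Localization.AtPrime p))
  rw [IsScalarTower.algebraMap_apply A C, IsLocalization.AtPrime.to_map_mem_maximal_iff _ p] at hs
  exact ⟨s, hs, hbij⟩

theorem mem_smoothLocus_specMap_comp_iff {A B C : Type u} [CommRing A] [CommRing B] [CommRing C]
    [Algebra A B] [Algebra A C] [Algebra B C] [IsScalarTower A B C] {x : PrimeSpectrum C}
    [LocallyOfFinitePresentation (Spec.map (CommRingCat.ofHom (algebraMap B C)) ≫
      Spec.map (CommRingCat.ofHom (algebraMap A B)))] :
    x ∈ (Spec.map (CommRingCat.ofHom (algebraMap B C)) ≫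
      Spec.map (CommRingCat.ofHom (algebraMap A B))).smoothLocus ↔
      Algebra.IsSmoothAt A x.asIdeal := by
  have hcomp : Spec.map (CommRingCat.ofHom (algebraMap B C)) ≫
      Spec.map (CommRingCat.ofHom (algebraMap A B)) =
      Spec.map (CommRingCat.ofHom (algebraMap A C)) := by
    rw [← Spec.map_comp, ← CommRingCat.ofHom_comp, IsScalarTower.algebraMap_eq A B C]
  have : LocallyOfFinitePresentation (Spec.map (CommRingCat.ofHom (algebraMap A C))) :=
    hcomp ▸ ‹_›
  simp only [hcomp]
  exact mem_smoothLocus_specMap_iff A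

theorem exists_isIso_morphismRestrict_of_isSmoothAt {A B C : Type u} [CommRing A] [CommRing B]
    [IsDomain B] [CommRing C] [Algebra A B] [Algebra A C] [Algebra B C] [IsScalarTower A B C]
    [Algebra.FiniteType A B] [Algebra.FinitePresentation A C]
    (hg : IsBirational_s9 (algebraMap A B)) {x : PrimeSpectrum C}
    (hx : Algebra.IsSmoothAt A x.asIdeal) :
    ∃ V : (Spec (.of A)).Opens,
      Spec.map (CommRingCat.ofHom (algebraMap A B))
          (Spec.map (CommRingCat.ofHom (algebraMap B C)) x) ∈ V ∧
        IsIso (Spec.map (CommRingCat.ofHom (algebraMap A B)) ∣_ V) := by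
  obtain ⟨s, hs, hbij⟩ := exists_awayMap_bijective_of_isSmoothAt hg x.asIdeal
  rw [IsScalarTower.algebraMap_apply A B C] at hs
  exact ⟨PrimeSpectrum.basicOpen s, hs, isIso_morphismRestrict_basicOpen _ hbij⟩

theorem exists_isIso_morphismRestrict_of_mem_smoothLocus_comp {A B C : Type u} [CommRing A]
    [CommRing B] [IsDomain B] [CommRing C] {g : A →+* B} (hg : IsBirational_s9 g)
    (hfin : g.FiniteType) {f : B →+* C} (hfp : (f.comp g).FinitePresentation) {x : PrimeSpectrum C}
    [LocallyOfFinitePresentation (Spec.map (CommRingCat.ofHom f) ≫ Spec.map (CommRingCat.ofHom g))]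
    (hx : x ∈ (Spec.map (CommRingCat.ofHom f) ≫ Spec.map (CommRingCat.ofHom g)).smoothLocus) :
    ∃ V : (Spec (.of A)).Opens,
      Spec.map (CommRingCat.ofHom g) (Spec.map (CommRingCat.ofHom f) x) ∈ V ∧
        IsIso (Spec.map (CommRingCat.ofHom g) ∣_ V) := by
  algebraize [g, f, f.comp g]
  exact exists_isIso_morphismRestrict_of_isSmoothAt hg (mem_smoothLocus_specMap_comp_iff.mp hx)

theorem bot_mem_smoothLocus_specMap {R S : Type u} [CommRing R] [IsDomain R] [CharZero R]
    [CommRing S] [IsDomain S] {f : R →+* S} (hf : Function.Injective f) (hfin : f.FiniteType)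
    [LocallyOfFinitePresentation (Spec.map (CommRingCat.ofHom f))] :
    (⊥ : PrimeSpectrum S) ∈ (Spec.map (CommRingCat.ofHom f)).smoothLocus := by
  algebraize [f]
  have : FaithfulSMul R S := (faithfulSMul_iff_algebraMap_injective R S).mpr hf
  exact (mem_smoothLocus_specMap_iff R).mpr (isSmoothAt_bot R)

theorem finitePresentation_toRingHom {k R S : Type*} [CommRing k] [IsNoetherianRing k] [CommRing R]
    [CommRing S] [Algebra k R] [Algebra k S] [Algebra.FiniteType k R] [Algebra.FiniteType k S]
    (ψ : R →ₐ[k] S) : ψ.toRingHom.FinitePresentation := by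
  have := Algebra.FiniteType.isNoetherianRing k R
  refine RingHom.FinitePresentation.of_finiteType.mp
    (RingHom.FiniteType.of_comp_finiteType (f := algebraMap k R) ?_)
  rw [AlgHom.toRingHom_eq_coe, ψ.comp_algebraMap]
  exact RingHom.finiteType_algebraMap.mpr ‹_›

theorem exists_open_subscheme_restriction_automorphism_general {k : Type*} [Field k] [CharZero k]
    {R S : Type u} [CommRing R] [IsDomain R] [CommRing S] [IsDomain S]
    [Algebra k R] [Algebra k S] [Algebra.FiniteType k R] [Algebra.FiniteType k S]
    (ι : R →ₐ[k] S) (hι : Function.Injective ι)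
    (F : S →ₐ[k] S) (hF : Function.Bijective F)
    (G : R →ₐ[k] R) (hcomm : ∀ r, ι (G r) = F (ι r)) :
    ∃ U : (Spec (CommRingCat.of R)).Opens, Nonempty ↥U ∧
      ∃ e : U.toScheme ≅ U.toScheme,
        U.ι ≫ Spec.map (CommRingCat.ofHom G.toRingHom) = e.hom ≫ U.ι := by
  have : CharZero R := charZero_of_injective_algebraMap (algebraMap k R).injective
  have : IsNoetherianRing S := Algebra.FiniteType.isNoetherianRing k S
  have hfpι := finitePresentation_toRingHom ι
  have hfpG := finitePresentation_toRingHom G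
  have hG : IsBirational_s9 G.toRingHom := isBirational_of_semiconj hι hF hcomm
  have : LocallyOfFinitePresentation (Spec.map (CommRingCat.ofHom ι.toRingHom)) :=
    HasRingHomProperty.Spec_iff.mpr hfpι
  have : LocallyOfFinitePresentation (Spec.map (CommRingCat.ofHom G.toRingHom)) :=
    HasRingHomProperty.Spec_iff.mpr hfpG
  have : IsIso (CommRingCat.ofHom F.toRingHom) := (ConcreteCategory.isIso_iff_bijective _).mpr hF
  have hsq : Spec.map (CommRingCat.ofHom ι.toRingHom) ≫ Spec.map (CommRingCat.ofHom G.toRingHom) =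
      Spec.map (CommRingCat.ofHom F.toRingHom) ≫ Spec.map (CommRingCat.ofHom ι.toRingHom) := by
    simp only [← Spec.map_comp, ← CommRingCat.ofHom_comp]
    exact congrArg (fun ψ ↦ Spec.map (CommRingCat.ofHom ψ)) (RingHom.ext hcomm)
  obtain ⟨U, hU, he⟩ := exists_restriction_iso_image_smoothLocus
    (φ := asIso (Spec.map (CommRingCat.ofHom F.toRingHom))) hsq fun x ↦
      exists_isIso_morphismRestrict_of_mem_smoothLocus_comp hG
        (.of_finitePresentation hfpG) (hfpι.comp hfpG)
  have hmem := bot_mem_smoothLocus_specMap hι (.of_finitePresentation hfpι)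
  exact ⟨U, ⟨_, hU.ge ⟨_, hmem, rfl⟩⟩, he⟩

/-- Let `R`, `S` be affine domains over `ℂ`, `ι : R → S` an injective `ℂ`-algebra
homomorphism, `R` integrally closed in its fraction field (so `Y = Spec R` is normal),
`F : S → S` a bijective `ℂ`-algebra homomorphism, and `G : R → R` a `ℂ`-algebra
homomorphism with `ι ∘ G = F ∘ ι`.  Then there is a nonempty (hence dense) open
subscheme `U` of `Spec R` such that `Spec G : Spec R ⟶ Spec R` restricts to an
automorphism of `U`. -/
theorem exists_open_subscheme_restriction_automorphism
    {R S : Type u} [CommRing R] [IsDomain R] [CommRing S] [IsDomain S]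
    [Algebra ℂ R] [Algebra ℂ S] [Algebra.FiniteType ℂ R] [Algebra.FiniteType ℂ S]
    [IsIntegrallyClosed R]
    (ι : R →ₐ[ℂ] S) (hι : Function.Injective ι)
    (F : S →ₐ[ℂ] S) (hF : Function.Bijective F)
    (G : R →ₐ[ℂ] R) (hcomm : ∀ r, ι (G r) = F (ι r)) :
    ∃ U : (Spec (CommRingCat.of R)).Opens, Nonempty ↥U ∧
      ∃ e : U.toScheme ≅ U.toScheme,
        U.ι ≫ Spec.map (CommRingCat.ofHom G.toRingHom) = e.hom ≫ U.ι :=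
  exists_open_subscheme_restriction_automorphism_general ι hι F hF G hcomm
end

section
/- Let R and S be integral domains that are finitely generated ℂ-algebras with the same transcendence degree over ℂ, let ι : R → S be an injective ℂ-algebra homomorphism, assume S is integrally closed in its fraction field (so X = Spec S is normal), let G : R → R be a bijective ℂ-algebra homomorphism, and let F : S → S be a ℂ-algebra homomorphism with ι ∘ G = F ∘ ι. Then there exists a nonempty (hence dense) open subscheme U of Spec S such that the morphism Spec(F) : Spec S → Spec S restricts to an automorphism of U; that is, there is an isomorphism of schemes e : U ≅ U such that the inclusion of U composed with Spec(F) equals e followed by the inclusion of U. -/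
/-!
Regard `R` as a subring of `S`, and let `L = Frac S`. Equality of transcendence degrees makes `S`
algebraic over `R`, so `F` is injective and extends to an endomorphism `φ` of `L`. As `L` is finite
over `Frac R`, on which `φ` is surjective, `φ` is an automorphism of `L`.

Let `T` be the integral closure of `R` in `L`. Then `φ⁻¹ T ⊆ T ⊆ φ T` and `φ S ⊆ S`. Let `J ⊆ R` be
the ideal of those `r` for which `S_r = T_r`. The elements `r` with `S_r ⊆ T_r` form an ideal `J₁`,
nonzero because `S` is finitely generated over `R`; those with `T_r ⊆ S_r` form an ideal `J₂`,
nonzero because some `S_s` is normal. The above inclusions give `G⁻¹ J₁ ⊆ J₁` and `J₂ ⊆ G⁻¹ J₂`, and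
both are equalities because `R` is Noetherian and `G` is bijective. Hence `G⁻¹ J = J`.

If `r ∈ J`, then also `G r ∈ J`, and `φ` maps `S_r = T_r` onto `T_{G r} = S_{G r}`. So `Spec F` is
an isomorphism over each `D(r)` with `r ∈ J`, with preimage `D(G r)`, and it restricts to an
automorphism of the union of these basic opens.
-/

open AlgebraicGeometry CategoryTheory

universe u

/-! ### Isomorphisms over open subschemes -/

theorem isIso_morphismRestrict_basicOpen_s10 {A B : CommRingCat.{u}} (f : A ⟶ B) (a : A)
    (h : Function.Bijective (Localization.awayMap f.hom a)) :
    IsIso (Spec.map f ∣_ (PrimeSpectrum.basicOpen a : (Spec A).Opens)) := by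
  have : IsIso (CommRingCat.ofHom (Localization.awayMap f.hom a)) :=
    (RingEquiv.ofBijective _ h).toCommRingCatIso.isIso_hom
  exact (MorphismProperty.arrow_mk_iso_iff (.isomorphisms _)
    (SpecMapRestrictBasicOpenIso f a)).mpr (.infer_property _)

theorem isIso_morphismRestrict_iSup {X Y : Scheme.{u}} (f : X ⟶ Y) {α : Type*} (V : α → Y.Opens)
    (hV : ∀ i, IsIso (f ∣_ V i)) : IsIso (f ∣_ ⨆ i, V i) := by
  refine (IsZariskiLocalAtTarget.iff_of_iSup_eq_top (P := .isomorphisms _)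
    (fun i ↦ (⨆ i, V i).ι ⁻¹ᵁ V i) ?_).mpr fun i ↦ ?_
  · rw [← Scheme.Hom.preimage_iSup, Scheme.Opens.ι_preimage_self]
  · have himage : (⨆ i, V i).ι ''ᵁ (⨆ i, V i).ι ⁻¹ᵁ V i = V i := by
      rw [Scheme.Hom.image_preimage_eq_opensRange_inf, Scheme.Opens.opensRange_ι,
        inf_eq_right.mpr (le_iSup V i)]
    exact (MorphismProperty.arrow_mk_iso_iff (.isomorphisms _)
      (morphismRestrictRestrict .. ≪≫ morphismRestrictEq f himage)).mpr (hV i)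

theorem exists_iso_iSup_of_preimage_eq {X : Scheme.{u}} (f : X ⟶ X) {α : Type*} (V : α → X.Opens)
    {σ : α → α} (hσ : Function.Surjective σ) (hV : ∀ i, f ⁻¹ᵁ V i = V (σ i))
    (hiso : ∀ i, IsIso (f ∣_ V i)) :
    ∃ e : (⨆ i, V i).toScheme ≅ (⨆ i, V i).toScheme, (⨆ i, V i).ι ≫ f = e.hom ≫ (⨆ i, V i).ι := by
  have hpre : f ⁻¹ᵁ ⨆ i, V i = ⨆ i, V i := by
    rw [Scheme.Hom.preimage_iSup, funext hV, hσ.iSup_comp]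
  have := isIso_morphismRestrict_iSup f V hiso
  exact ⟨X.isoOfEq hpre.symm ≪≫ asIso (f ∣_ ⨆ i, V i), by simp⟩

/-! ### Rigidity of strictly monotone maps -/

theorem apply_eq_of_strictMono_of_le_apply {α : Type*} [PartialOrder α] [WellFoundedGT α]
    {f : α → α} (hf : StrictMono f) {x : α} (hx : x ≤ f x) : f x = x :=
  (hx.eq_of_not_lt fun hlt ↦
    not_strictMono_of_wellFoundedGT _ (hf.strictMono_iterate_of_lt_map hlt)).symm

theorem apply_eq_of_strictMono_of_apply_le {α : Type*} [PartialOrder α] [WellFoundedLT α]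
    {f : α → α} (hf : StrictMono f) {x : α} (hx : f x ≤ x) : f x = x :=
  apply_eq_of_strictMono_of_le_apply (α := αᵒᵈ) hf.dual hx

theorem orderIso_apply_eq_of_apply_le {α : Type*} [PartialOrder α] [WellFoundedGT α] (e : α ≃o α)
    {x : α} (hx : e x ≤ x) : e x = x := by
  have h : x ≤ e.symm x := e.le_symm_apply.mpr hx
  rw [← e.eq_symm_apply, apply_eq_of_strictMono_of_le_apply e.symm.strictMono h]

theorem semilinearMap_surjective_of_injective {R M : Type*} [Ring R] [AddCommGroup M] [Module R M]
    [IsArtinian R M] {σ : R →+* R} [RingHomSurjective σ] (φ : M →ₛₗ[σ] M)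
    (hφ : Function.Injective φ) : Function.Surjective φ := by
  rw [← LinearMap.range_eq_top, LinearMap.range_eq_map]
  exact apply_eq_of_strictMono_of_apply_le (Submodule.map_strictMono_of_injective hφ) le_top

section NoetherianRing

variable {R : Type*} [CommRing R] [IsNoetherianRing R] {G : R →+* R}

theorem comap_eq_of_le_comap (hG : Function.Surjective G) {I : Ideal R} (hI : I ≤ I.comap G) :
    I.comap G = I :=
  apply_eq_of_strictMono_of_le_apply (Ideal.orderEmbeddingOfSurjective G hG).strictMono hI

theorem ringHom_injective_of_surjective (hG : Function.Surjective G) : Function.Injective G := by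
  rw [RingHom.injective_iff_ker_eq_bot]
  exact comap_eq_of_le_comap hG bot_le

theorem comap_eq_of_comap_le (hG : Function.Surjective G) {I : Ideal R} (hI : I.comap G ≤ I) :
    I.comap G = I :=
  orderIso_apply_eq_of_apply_le (RingEquiv.ofBijective G
    ⟨ringHom_injective_of_surjective hG, hG⟩).idealComapOrderIso hI

end NoetherianRing

/-! ### Local transporters -/

section Transporter

variable {R R' M M' : Type*} [CommRing R] [CommRing R'] [AddCommGroup M] [AddCommGroup M']
  [Module R M] [Module R' M']

/-- The ideal of all `r : R` such that `N_r ⊆ P_r` as submodules of the localization `M_r`. The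
power of `r` carrying an element of `N` into `P` may depend on that element. -/
def localTransporter (N P : Submodule R M) : Ideal R :=
  ⨅ x : N, (P.colon {(x : M)}).radical

theorem mem_localTransporter {N P : Submodule R M} {r : R} :
    r ∈ localTransporter N P ↔ ∀ x ∈ N, ∃ n : ℕ, r ^ n • x ∈ P := by
  simp only [localTransporter, Ideal.mem_iInf, Ideal.mem_radical_iff,
    Submodule.mem_colon_singleton, Subtype.forall]

variable {σ : R →+* R'} (φ : M →ₛₗ[σ] M') {N P : Submodule R M} {N' P' : Submodule R' M'}

theorem comap_localTransporter_le (hN : N ≤ N'.comap φ) (hP : P'.comap φ ≤ P) :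
    (localTransporter N' P').comap σ ≤ localTransporter N P := by
  intro r hr
  rw [Ideal.mem_comap, mem_localTransporter] at hr
  refine mem_localTransporter.mpr fun x hx ↦ ?_
  obtain ⟨n, hn⟩ := hr (φ x) (hN hx)
  exact ⟨n, hP (by rwa [Submodule.mem_comap, map_smulₛₗ, map_pow])⟩

theorem localTransporter_le_comap [RingHomSurjective σ] (hN : N' ≤ N.map φ) (hP : P ≤ P'.comap φ) :
    localTransporter N P ≤ (localTransporter N' P').comap σ := by
  intro r hr
  refine mem_localTransporter.mpr fun y hy ↦ ?_
  obtain ⟨x, hx, rfl⟩ := hN hy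
  obtain ⟨n, hn⟩ := mem_localTransporter.mp hr x hx
  exact ⟨n, by simpa only [Submodule.mem_comap, map_smulₛₗ, map_pow] using hP hn⟩

end Transporter

/-! ### Semilinear ring homomorphisms -/

section Algebra

variable {R R' A A' : Type*} [CommRing R] [CommRing R'] [CommRing A] [CommRing A'] [Algebra R A]
  [Algebra R' A'] {σ : R →+* R'} {φ : A →+* A'}

/-- A ring homomorphism `φ` between algebras, viewed as a semilinear map over the homomorphism
`σ` of base rings that it covers, so that submodules can be moved along `φ`. -/
def semilinearMapOfRingHom (h : ∀ r, φ (algebraMap R A r) = algebraMap R' A' (σ r)) :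
    A →ₛₗ[σ] A' where
  __ := φ
  map_smul' r a := by simp [Algebra.smul_def, h]

theorem isIntegral_of_isIntegral_map (hφ : Function.Injective φ) (hσ : Function.Surjective σ)
    (h : ∀ r, φ (algebraMap R A r) = algebraMap R' A' (σ r)) {a : A} (ha : IsIntegral R' (φ a)) :
    IsIntegral R a := by
  obtain ⟨p, hp, hpa⟩ := ha
  obtain ⟨q, rfl, -, hq⟩ := Polynomial.lifts_and_natDegree_eq_and_monic
    ((Polynomial.mem_lifts p).mpr (Polynomial.map_surjective σ hσ p)) hp
  refine ⟨q, hq, hφ ?_⟩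
  rw [map_zero, ← hpa, Polynomial.hom_eval₂, Polynomial.eval₂_map,
    show φ.comp (algebraMap R A) = (algebraMap R' A').comp σ from RingHom.ext h]

theorem ringHom_surjective_of_finiteDimensional {K L : Type*} [Field K] [Field L] [Algebra K L]
    [FiniteDimensional K L] {σ : K →+* K} (hσ : Function.Surjective σ) {φ : L →+* L}
    (h : ∀ x, φ (algebraMap K L x) = algebraMap K L (σ x)) : Function.Surjective φ :=
  have : RingHomSurjective σ := ⟨hσ⟩
  semilinearMap_surjective_of_injective (semilinearMapOfRingHom h) φ.injective

end Algebra

theorem ringHom_injective_of_isAlgebraic {R S : Type*} [CommRing R] [CommRing S] [IsDomain S]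
    [Algebra R S] [FaithfulSMul R S] [Algebra.IsAlgebraic R S] {G : R →+* R} {F : S →+* S}
    (hG : Function.Injective G)
    (h : ∀ r, F (algebraMap R S r) = algebraMap R S (G r)) : Function.Injective F := by
  rw [injective_iff_map_eq_zero]
  intro s hs
  by_contra hne
  obtain ⟨r, hr, c, hc⟩ := (Algebra.IsAlgebraic.isAlgebraic (R := R) s).exists_nonzero_dvd
    (mem_nonZeroDivisors_of_ne_zero hne)
  have hGr : algebraMap R S (G r) = 0 := by rw [← h, hc, map_mul, hs, zero_mul]
  rw [FaithfulSMul.algebraMap_eq_zero_iff, map_eq_zero_iff G hG] at hGr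
  exact hr hGr

section FieldExtension

variable {R L : Type*} [CommRing R] [Field L] [Algebra R L] [FaithfulSMul R L]
  [Algebra.IsAlgebraic R L] [Algebra.EssFiniteType R L] {G : R →+* R} {φ : L →+* L}

theorem ringHom_surjective_of_essFiniteType (hG : Function.Bijective G)
    (h : ∀ r, φ (algebraMap R L r) = algebraMap R L (G r)) : Function.Surjective φ := by
  have : IsDomain R := .of_faithfulSMul R L
  let K := FractionRing R
  let _ : Algebra K L := FractionRing.liftAlgebra R L
  have : Algebra.IsAlgebraic K L := (IsFractionRing.comap_isAlgebraic_iff (A := R)).mp ‹_›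
  have : Algebra.EssFiniteType K L := .of_comp R K L
  have : FiniteDimensional K L := Algebra.finite_of_essFiniteType_of_isAlgebraic
  let σ : K ≃+* K := IsFractionRing.ringEquivOfRingEquiv (RingEquiv.ofBijective G hG)
  suffices φ.comp (algebraMap K L) = (algebraMap K L).comp σ.toRingHom from
    ringHom_surjective_of_finiteDimensional σ.surjective (RingHom.congr_fun this)
  refine IsLocalization.ringHom_ext (nonZeroDivisors R) (RingHom.ext fun r ↦ ?_)
  simp [σ, h, ← IsScalarTower.algebraMap_apply R K L]

theorem exists_isIntegral_map_eq (hG : Function.Bijective G)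
    (h : ∀ r, φ (algebraMap R L r) = algebraMap R L (G r)) {y : L} (hy : IsIntegral R y) :
    ∃ x : L, IsIntegral R x ∧ φ x = y := by
  obtain ⟨x, rfl⟩ := ringHom_surjective_of_essFiniteType hG h y
  exact ⟨x, isIntegral_of_isIntegral_map φ.injective hG.surjective h hy, rfl⟩

end FieldExtension

/-! ### The locus where `S` is the integral closure of `R` -/

theorem exists_pow_smul_isIntegral (R S : Type*) [CommRing R] [NoZeroDivisors R] [CommRing S]
    [Algebra R S] [Algebra.FiniteType R S] [Algebra.IsAlgebraic R S] :
    ∃ r : R, r ≠ 0 ∧ ∀ s : S, ∃ n : ℕ, IsIntegral R (r ^ n • s) := by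
  obtain ⟨t, ht⟩ := (Algebra.FiniteType.out : (⊤ : Subalgebra R S).FG)
  obtain ⟨r, hr, hrt⟩ := Algebra.IsAlgebraic.exists_integral_multiples R t
  refine ⟨r, hr, fun s ↦ ?_⟩
  obtain ⟨n, hn⟩ := Algebra.pow_smul_mem_of_smul_subset_of_mem_adjoin r (t : Set S)
    (integralClosure R S) (Set.smul_set_subset_iff.mpr hrt) (ht ▸ Algebra.mem_top : s ∈ _)
    isIntegral_algebraMap
  exact ⟨n, hn n le_rfl⟩

theorem exists_pow_smul_mem_range_of_isIntegral {A L : Type*} [CommRing A] [IsDomain A] [Field L]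
    [Algebra A L] [IsFractionRing A L] {s : A} (hs : s ≠ 0)
    [IsIntegrallyClosed (Localization.Away s)] {x : L} (hx : IsIntegral A x) :
    ∃ n : ℕ, s ^ n • x ∈ Set.range (algebraMap A L) := by
  have hle : Submonoid.powers s ≤ nonZeroDivisors A :=
    powers_le_nonZeroDivisors_of_noZeroDivisors hs
  let _ : Algebra (Localization.Away s) L :=
    IsLocalization.localizationAlgebraOfSubmonoidLe _ _ _ _ hle
  have : IsScalarTower A (Localization.Away s) L :=
    IsLocalization.localization_isScalarTower_of_submonoid_le _ _ _ _ hle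
  have : IsFractionRing (Localization.Away s) L :=
    IsFractionRing.isFractionRing_of_isLocalization (Submonoid.powers s) _ _ hle
  obtain ⟨y, rfl⟩ := IsIntegrallyClosed.isIntegral_iff.mp (hx.tower_top (A := Localization.Away s))
  obtain ⟨n, a, hna⟩ := IsLocalization.Away.surj s y
  refine ⟨n, a, ?_⟩
  rw [IsScalarTower.algebraMap_apply A (Localization.Away s) L, ← hna, map_mul, map_pow,
    ← IsScalarTower.algebraMap_apply, Algebra.smul_def, mul_comm, map_pow]

section IntegralClosureIdeal

variable (R S L : Type*) [CommRing R] [CommRing S] [CommRing L] [Algebra R S]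
  [Algebra R L] [Algebra S L] [IsScalarTower R S L]

/-- The ideal of all `r : R` such that `S` and the integral closure of `R` in `L` become equal after
inverting `r`, as `R`-submodules of `L`. When `L = Frac S`, the map `Spec S ⟶ Spec R` is, over the
union of the corresponding basic opens `D(r)`, the normalization of `Spec R` in `L`. -/
noncomputable def integralClosureIdeal : Ideal R :=
  localTransporter (IsScalarTower.toAlgHom R S L).range.toSubmodule
      (integralClosure R L).toSubmodule ⊓
    localTransporter (integralClosure R L).toSubmodule
      (IsScalarTower.toAlgHom R S L).range.toSubmodule

variable {R S L}

theorem mem_integralClosureIdeal {r : R} : r ∈ integralClosureIdeal R S L ↔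
    (∀ s : S, ∃ n : ℕ, IsIntegral R (r ^ n • algebraMap S L s)) ∧
      ∀ x : L, IsIntegral R x → ∃ n : ℕ, r ^ n • x ∈ Set.range (algebraMap S L) := by
  simp [integralClosureIdeal, mem_localTransporter, mem_integralClosure_iff]

end IntegralClosureIdeal

section FractionField

variable {R S L : Type*} [CommRing R] [CommRing S] [Field L] [Algebra R S] [Algebra R L]
  [Algebra S L] [IsScalarTower R S L]

theorem exists_ne_zero_mem_integralClosureIdeal [IsDomain S] [IsFractionRing S L]
    [FaithfulSMul R S] [Algebra.FiniteType R S] [Algebra.IsAlgebraic R S] {s : S} (hs : s ≠ 0)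
    [IsIntegrallyClosed (Localization.Away s)] : ∃ r ∈ integralClosureIdeal R S L, r ≠ 0 := by
  have : IsDomain R := .of_faithfulSMul R S
  obtain ⟨a, ha, haint⟩ := exists_pow_smul_isIntegral R S
  obtain ⟨b, hb, c, hc⟩ := (Algebra.IsAlgebraic.isAlgebraic (R := R) s).exists_nonzero_dvd
    (mem_nonZeroDivisors_of_ne_zero hs)
  refine ⟨b * a, mem_integralClosureIdeal.mpr ⟨fun t ↦ ?_, fun x hx ↦ ?_⟩, mul_ne_zero hb ha⟩
  · obtain ⟨n, hn⟩ := haint t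
    refine ⟨n, ?_⟩
    rw [mul_pow, mul_smul, ← algebraMap.coe_smul]
    exact (hn.algebraMap (B := L)).smul _
  · obtain ⟨n, y, hy⟩ := exists_pow_smul_mem_range_of_isIntegral hs (hx.tower_top (A := S))
    refine ⟨n, (c * algebraMap R S a) ^ n * y, ?_⟩
    rw [map_mul, hy, ← Algebra.smul_def, smul_smul, ← mul_pow, ← algebraMap_smul S ((b * a) ^ n),
      map_pow, map_mul, hc, mul_comm _ s, mul_assoc]

variable [FaithfulSMul R L] [Algebra.IsAlgebraic R L] [Algebra.EssFiniteType R L]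
  {G : R →+* R} {F : S →+* S} {φ : L →+* L}

theorem comap_integralClosureIdeal [IsNoetherianRing R] (hG : Function.Surjective G)
    (hR : ∀ r, φ (algebraMap R L r) = algebraMap R L (G r))
    (hS : ∀ s, φ (algebraMap S L s) = algebraMap S L (F s)) :
    (integralClosureIdeal R S L).comap G = integralClosureIdeal R S L := by
  have : RingHomSurjective G := ⟨hG⟩
  let ψ : L →ₛₗ[G] L := semilinearMapOfRingHom hR
  have hrange : (IsScalarTower.toAlgHom R S L).range.toSubmodule ≤
      (IsScalarTower.toAlgHom R S L).range.toSubmodule.comap ψ := by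
    rintro _ ⟨s, rfl⟩
    exact ⟨F s, (hS s).symm⟩
  have hcomap : (integralClosure R L).toSubmodule.comap ψ ≤ (integralClosure R L).toSubmodule :=
    fun x ↦ isIntegral_of_isIntegral_map φ.injective hG hR
  have hmap : (integralClosure R L).toSubmodule ≤ (integralClosure R L).toSubmodule.map ψ :=
    fun y ↦ exists_isIntegral_map_eq ⟨ringHom_injective_of_surjective hG, hG⟩ hR
  rw [integralClosureIdeal, Ideal.comap_inf,
    comap_eq_of_comap_le hG (comap_localTransporter_le ψ hrange hcomap),
    comap_eq_of_le_comap hG (localTransporter_le_comap ψ hmap hrange)]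

theorem awayMap_bijective_of_mem_integralClosureIdeal [FaithfulSMul S L] (hG : Function.Bijective G)
    (hR : ∀ r, φ (algebraMap R L r) = algebraMap R L (G r))
    (hS : ∀ s, φ (algebraMap S L s) = algebraMap S L (F s)) {r : R}
    (hr : r ∈ integralClosureIdeal R S L) (hGr : G r ∈ integralClosureIdeal R S L) :
    Function.Bijective (Localization.awayMap F (algebraMap R S r)) := by
  have hinj : Function.Injective (algebraMap S L) := FaithfulSMul.algebraMap_injective S L
  refine ⟨Localization.awayMap_injective_iff.mpr fun a ha ↦ ⟨0, ?_⟩,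
    Localization.awayMap_surjective_iff.mpr fun a ↦ ?_⟩
  · have haL : φ (algebraMap S L a) = 0 := by rw [hS, ha, map_zero]
    rw [map_eq_zero, map_eq_zero_iff _ hinj] at haL
    rw [haL, mul_zero]
  · obtain ⟨n, hn⟩ := (mem_integralClosureIdeal.mp hGr).1 a
    obtain ⟨x, hx, hxa⟩ := exists_isIntegral_map_eq hG hR hn
    obtain ⟨m, b, hb⟩ := (mem_integralClosureIdeal.mp hr).2 x hx
    refine ⟨b, m + n, hinj ?_⟩
    calc
      algebraMap S L (F b) = φ (algebraMap R L r) ^ m * φ x := by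
        rw [← hS, hb, Algebra.smul_def, map_mul, map_pow, map_pow]
      _ = φ (algebraMap R L r) ^ m * (φ (algebraMap R L r) ^ n * algebraMap S L a) := by
        rw [hxa, Algebra.smul_def, map_pow, hR]
      _ = algebraMap S L (F (algebraMap R S r) ^ (m + n) * a) := by
        rw [map_mul, map_pow, ← hS, ← IsScalarTower.algebraMap_apply, pow_add, mul_assoc]

end FractionField

/-! ### The invariant open subscheme -/

theorem isAlgebraic_of_trdeg_eq {k : Type*} {R S : Type u} [Field k] [CommRing R] [CommRing S]
    [IsDomain S] [Algebra k R] [Algebra k S] [Algebra R S] [IsScalarTower k R S]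
    [FaithfulSMul R S] (hfin : Algebra.trdeg k R < Cardinal.aleph0)
    (h : Algebra.trdeg k R = Algebra.trdeg k S) : Algebra.IsAlgebraic R S := by
  have : IsDomain R := .of_faithfulSMul R S
  rw [← trdeg_eq_zero_iff]
  exact Cardinal.eq_of_add_eq_add_left (by rw [trdeg_add_eq k R (A := S), add_zero, h]) hfin

theorem exists_open_subscheme_restriction_automorphism_up_general {R : Type*} {S : Type u}
    [CommRing R] [IsNoetherianRing R] [CommRing S] [IsDomain S] [Algebra R S] [FaithfulSMul R S]
    [Algebra.FiniteType R S] [Algebra.IsAlgebraic R S]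
    {s : S} (hs : s ≠ 0) [IsIntegrallyClosed (Localization.Away s)]
    {G : R →+* R} (hG : Function.Surjective G) {F : S →+* S}
    (h : ∀ r, F (algebraMap R S r) = algebraMap R S (G r)) :
    ∃ U : (Spec (CommRingCat.of S)).Opens, Nonempty ↥U ∧
      ∃ e : U.toScheme ≅ U.toScheme,
        U.ι ≫ Spec.map (CommRingCat.ofHom F) = e.hom ≫ U.ι := by
  let L := FractionRing S
  have : FaithfulSMul R L := .trans R S L
  have : Algebra.IsAlgebraic S L := IsLocalization.isAlgebraic L (nonZeroDivisors S)
  have : Algebra.IsAlgebraic R L := .trans R S L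
  have : Algebra.EssFiniteType S L := .of_isLocalization L (nonZeroDivisors S)
  have : Algebra.EssFiniteType R L := .comp R S L
  have hGbij : Function.Bijective G := ⟨ringHom_injective_of_surjective hG, hG⟩
  let φ : L →+* L := IsFractionRing.map (ringHom_injective_of_isAlgebraic hGbij.injective h)
  have hS (x : S) : φ (algebraMap S L x) = algebraMap S L (F x) := IsLocalization.map_eq _ x
  have hR (r : R) : φ (algebraMap R L r) = algebraMap R L (G r) := by
    rw [IsScalarTower.algebraMap_apply R S L, hS, h, ← IsScalarTower.algebraMap_apply]
  let J := integralClosureIdeal R S L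
  have hJ (r : R) : G r ∈ J ↔ r ∈ J := by
    rw [← Ideal.mem_comap, comap_integralClosureIdeal hG hR hS]
  let V (r : J) : (Spec (CommRingCat.of S)).Opens := PrimeSpectrum.basicOpen (algebraMap R S r)
  let σ (r : J) : J := ⟨G r, (hJ r).mpr r.2⟩
  have hσ : Function.Surjective σ := by
    rintro ⟨r, hr⟩
    obtain ⟨t, rfl⟩ := hG r
    exact ⟨⟨t, (hJ t).mp hr⟩, rfl⟩
  refine ⟨⨆ r, V r, ?_, exists_iso_iSup_of_preimage_eq _ V hσ (fun r ↦ ?_) fun r ↦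
    isIso_morphismRestrict_basicOpen_s10 _ _
      (awayMap_bijective_of_mem_integralClosureIdeal hGbij hR hS r.2 (σ r).2)⟩
  · obtain ⟨r, hr, hr0⟩ := exists_ne_zero_mem_integralClosureIdeal (R := R) (L := L) hs
    refine ⟨⟨(⊥ : PrimeSpectrum S), le_iSup V ⟨r, hr⟩ ?_⟩⟩
    exact fun h0 ↦ hr0 ((FaithfulSMul.algebraMap_eq_zero_iff R S).mp h0)
  · exact congrArg PrimeSpectrum.basicOpen (h r)

/-- Let `R`, `S` be affine domains over `ℂ` with the same transcendence degree,
`ι : R → S` an injective `ℂ`-algebra homomorphism, `S` integrally closed in its fraction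
field (so `X = Spec S` is normal), `G : R → R` a bijective `ℂ`-algebra homomorphism, and
`F : S → S` a `ℂ`-algebra homomorphism with `ι ∘ G = F ∘ ι`.  Then there is a nonempty
(hence dense) open subscheme `U` of `Spec S` such that `Spec F : Spec S ⟶ Spec S`
restricts to an automorphism of `U`. -/
theorem exists_open_subscheme_restriction_automorphism_up
    {R S : Type u} [CommRing R] [IsDomain R] [CommRing S] [IsDomain S]
    [Algebra ℂ R] [Algebra ℂ S] [Algebra.FiniteType ℂ R] [Algebra.FiniteType ℂ S]
    [IsIntegrallyClosed S]
    (htr : trdeg ℂ R = trdeg ℂ S)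
    (ι : R →ₐ[ℂ] S) (hι : Function.Injective ι)
    (G : R →ₐ[ℂ] R) (hG : Function.Bijective G)
    (F : S →ₐ[ℂ] S) (hcomm : ∀ r, ι (G r) = F (ι r)) :
    ∃ U : (Spec (CommRingCat.of S)).Opens, Nonempty ↥U ∧
      ∃ e : U.toScheme ≅ U.toScheme,
        U.ι ≫ Spec.map (CommRingCat.ofHom F.toRingHom) = e.hom ≫ U.ι := by
  let _ : Algebra R S := ι.toRingHom.toAlgebra
  have : IsScalarTower ℂ R S := .of_algebraMap_eq fun z ↦ (ι.commutes z).symm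
  have : FaithfulSMul R S := (faithfulSMul_iff_algebraMap_injective R S).mpr hι
  have : Algebra.FiniteType R S := .of_restrictScalars_finiteType ℂ R S
  have : IsNoetherianRing R := Algebra.FiniteType.isNoetherianRing ℂ R
  have : Algebra.IsAlgebraic R S := isAlgebraic_of_trdeg_eq trdeg_lt_aleph0_of_finiteType htr
  have : IsIntegrallyClosed (Localization.Away (1 : S)) :=
    isIntegrallyClosed_of_isLocalization _ (Submonoid.powers (1 : S))
      (powers_le_nonZeroDivisors_of_noZeroDivisors one_ne_zero)
  exact exists_open_subscheme_restriction_automorphism_up_general one_ne_zero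
    (G := G.toRingHom) hG.surjective fun r ↦ (hcomm r).symm
end

section
/- Let R be an integral domain that is a finitely generated ℂ-algebra and is integrally closed in its fraction field (so Y = Spec R is a normal affine variety). Let G : R → R be an injective ℂ-algebra homomorphism such that the induced endomorphism of Frac(R) is bijective (g = Spec(G) : Y → Y is a birational endomorphism) but G is not surjective (g is not an automorphism). Assume there is a nonempty open subscheme U of Spec R such that Spec(G) restricts to an automorphism of U. Then: (1) there exists a prime ideal p of R with height p = 1 and height G⁻¹(p) ≥ 2 (an exceptional divisor D = V(p) with codim_Y g(D) ≥ 2 exists); and (2) there exist an integer m ≥ 1 and a prime ideal p of R with height p = 1 such that height (G^m)⁻¹(p) ≥ 2 and G^m(p) ⊆ p (replacing g by g^m, one can take the exceptional divisor D with g(D) ⊆ D). -/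
/-!
View all local rings `R_p` as subrings of the fraction field `K`, let `g = Spec G`, and let `Φ` be
the automorphism of `K` induced by `G`. For a point `p` of codimension one, `R_p` is a valuation
ring, so `Φ⁻¹(R_y) = R_{g y}` as soon as `g y` has codimension one; and `R` is the intersection of
these `R_p`, so `G` would be surjective if every prime divisor were in the image of `g`.

Let `P` be the union of `U` and the periodic points of `g`. Then `g` maps `P` onto a set containing
`P`, and the set `F` of prime divisors outside `P` is finite and nonempty. For `D ∈ F` choose
`s = Φ k` whose poles are exactly the points of `D`. Then `k` has a pole along some prime divisor
`E ∋ g D`, and `D` is the only point that can lie over `E`; hence `E ∉ P`. Choosing `E` for each `D`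
gives a self-map of `F`, and a cycle of it gives `D ∈ F` with `g^m D ∈ D`. Since `D` is not
periodic, `g^m D` is not the generic point of `D`, so it has codimension at least two.
-/

open AlgebraicGeometry CategoryTheory

universe u

/-- The height of an ideal `I`: the infimum of the heights of the prime ideals
containing `I` (in the prime spectrum, ordered by inclusion). -/
noncomputable def Ideal.heightOf {R : Type*} [CommRing R] (I : Ideal R) : ℕ∞ :=
  ⨅ p ∈ {p : PrimeSpectrum R | I ≤ p.asIdeal}, Order.height p

section Order

theorem exists_le_iterate_of_finite {α : Type*} [Preorder α] {g : α → α} (hg : Monotone g)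
    {F : Set α} (hfin : F.Finite) (hne : F.Nonempty) (hF : ∀ x ∈ F, ∃ y ∈ F, y ≤ g x) :
    ∃ x ∈ F, ∃ m > 0, x ≤ g^[m] x := by
  -- `φ` maps the finite set `F` to itself, so the `φ`-orbit of a point of `F` repeats a value.
  choose! φ hφF hφg using hF
  obtain ⟨x₀, hx₀⟩ := hne
  have hmem (n : ℕ) : φ^[n] x₀ ∈ F := Set.MapsTo.iterate hφF n hx₀
  have hsucc (n : ℕ) : φ^[n + 1] x₀ ≤ g (φ^[n] x₀) := by
    simpa only [Function.iterate_succ_apply'] using hφg _ (hmem n)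
  obtain ⟨i, -, j, -, hij, heq⟩ :=
    Set.infinite_univ.exists_lt_map_eq_of_mapsTo (fun n _ => hmem n) hfin
  obtain ⟨m, rfl⟩ := Nat.exists_eq_add_of_le hij.le
  refine ⟨φ^[i] x₀, hmem i, m, by lia, ?_⟩
  calc φ^[i] x₀ = φ^[i + m] x₀ := heq
    _ ≤ g^[m] (φ^[i] x₀) :=
      hg.seq_le_seq (x := fun k => φ^[i + k] x₀) (y := fun k => g^[k] (φ^[i] x₀)) m le_rfl
        (fun k _ => hsucc (i + k)) fun k _ => (Function.iterate_succ_apply' g k _).ge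

theorem orderHeight_eq_one_iff_isAtom {α : Type*} [PartialOrder α] [OrderBot α] {x : α} :
    Order.height x = 1 ↔ IsAtom x := by
  have hle : Order.height x ≤ 1 ↔ ∀ y < x, y = ⊥ := by
    simpa [Order.lt_one_iff] using Order.height_le_coe_iff (x := x) (n := 1)
  have hge : 1 ≤ Order.height x ↔ x ≠ ⊥ := by
    simp [Order.one_le_iff_ne_zero]
  rw [le_antisymm_iff, hle, hge, IsAtom, and_comm]

end Order

/-- The prime divisors of `Spec R`: the points of codimension one. -/
def primeDivisors (R : Type*) [CommRing R] : Set (PrimeSpectrum R) :=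
  {p | p.asIdeal.height = 1}

section PrimeDivisors

variable {R : Type*} [CommRing R] [IsDomain R] {p : PrimeSpectrum R}

theorem mem_primeDivisors_iff_isAtom : p ∈ primeDivisors R ↔ IsAtom p := by
  rw [← orderHeight_eq_one_iff_isAtom, ← PrimeSpectrum.height_eq_orderHeight]; rfl

theorem mem_primeDivisors_of_height_le_one (hp : p ≠ ⊥) (h : p.asIdeal.height ≤ 1) :
    p ∈ primeDivisors R := by
  refine h.antisymm (Order.one_le_iff_ne_zero.2 fun h0 => hp ?_)
  exact PrimeSpectrum.ext (Ideal.height_eq_zero_iff_eq_bot.1 h0)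

theorem two_le_height_of_notMem_primeDivisors (hp : p ≠ ⊥) (h : p ∉ primeDivisors R) :
    2 ≤ p.asIdeal.height := by
  by_contra! hlt
  exact h (mem_primeDivisors_of_height_le_one hp (Order.le_of_lt_add_one hlt))

theorem asIdeal_mem_minimalPrimes_span_singleton (hp : p ∈ primeDivisors R) {t : R}
    (ht : t ∈ p.asIdeal) (ht0 : t ≠ 0) : p.asIdeal ∈ (Ideal.span {t}).minimalPrimes := by
  have : p.asIdeal.FiniteHeight := ⟨Or.inr (hp.trans_ne ENat.one_ne_top)⟩
  exact Ideal.mem_minimalPrimes_of_height_le ((Ideal.span_singleton_le_iff_mem _).2 ht) <|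
    hp.trans_le <|
      Ideal.one_le_height_span_singleton_of_mem_nonZeroDivisors (mem_nonZeroDivisors_of_ne_zero ht0)

end PrimeDivisors

section LocalRing

variable {R : Type*} (K : Type*) [CommRing R] [IsDomain R] [Field K] [Algebra R K]
  [IsFractionRing R K]

/-- The local ring `R_p` of `Spec R` at the point `p`, as a subring of the fraction field `K`. -/
noncomputable abbrev localRingAt (p : PrimeSpectrum R) : Subalgebra R K :=
  Localization.subalgebra.ofField K p.asIdeal.primeCompl p.asIdeal.primeCompl_le_nonZeroDivisors

variable {K} {p q : PrimeSpectrum R} {k : K}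

theorem mem_localRingAt_iff :
    k ∈ localRingAt K p ↔ ∃ a, ∃ b ∉ p.asIdeal, k = algebraMap R K a / algebraMap R K b := by
  simp only [div_eq_mul_inv, ← exists_prop]
  rfl

theorem localRingAt_bot : localRingAt K (⊥ : PrimeSpectrum R) = ⊤ := by
  refine eq_top_iff.2 fun k _ => mem_localRingAt_iff.2 ?_
  obtain ⟨a, b, hb, rfl⟩ := IsFractionRing.div_surjective (A := R) k
  exact ⟨a, b, by simpa using hb, rfl⟩

omit [IsDomain R] in
theorem algebraMap_ne_zero_of_notMem {b : R} (hb : b ∉ p.asIdeal) : algebraMap R K b ≠ 0 :=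
  (map_ne_zero_iff _ (IsFractionRing.injective R K)).2 fun h => hb (h ▸ zero_mem _)

theorem inv_algebraMap_mem_localRingAt_iff {r : R} (hr : r ≠ 0) :
    (algebraMap R K r)⁻¹ ∈ localRingAt K p ↔ r ∉ p.asIdeal := by
  rw [mem_localRingAt_iff]
  have hrK : algebraMap R K r ≠ 0 := by simpa using hr
  refine ⟨?_, fun h => ⟨1, r, h, by simp⟩⟩
  rintro ⟨a, b, hb, h⟩ hrp
  have hbK : algebraMap R K b ≠ 0 := algebraMap_ne_zero_of_notMem hb
  field_simp at h
  have hba : b = r * a := IsFractionRing.injective R K (by rw [map_mul, h])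
  exact hb (hba ▸ Ideal.mul_mem_right a _ hrp)

theorem localRingAt_le_iff : localRingAt K p ≤ localRingAt K q ↔ q ≤ p := by
  constructor
  · intro h r hrq
    by_contra hrp
    have hr : r ≠ 0 := fun h0 => hrp (h0 ▸ zero_mem _)
    exact (inv_algebraMap_mem_localRingAt_iff hr).1
      (h ((inv_algebraMap_mem_localRingAt_iff hr).2 hrp)) hrq
  · intro h k hk
    obtain ⟨a, b, hb, rfl⟩ := mem_localRingAt_iff.1 hk
    exact mem_localRingAt_iff.2 ⟨a, b, fun hbq => hb (h hbq), rfl⟩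

theorem div_mem_localRingAt_iff {a b : R} (hb : b ≠ 0) :
    algebraMap R K a / algebraMap R K b ∈ localRingAt K p ↔
      ¬ (Ideal.span {b}).colon {a} ≤ p.asIdeal := by
  have hbK : algebraMap R K b ≠ 0 := by simpa using hb
  simp only [mem_localRingAt_iff, SetLike.not_le_iff_exists, Submodule.mem_colon_singleton,
    smul_eq_mul, Ideal.mem_span_singleton']
  constructor
  · rintro ⟨c, d, hd, h⟩
    have hdK : algebraMap R K d ≠ 0 := algebraMap_ne_zero_of_notMem hd
    refine ⟨d, ⟨c, IsFractionRing.injective R K ?_⟩, hd⟩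
    field_simp at h
    simpa only [map_mul, mul_comm] using h.symm
  · rintro ⟨d, ⟨c, h⟩, hd⟩
    have hdK : algebraMap R K d ≠ 0 := algebraMap_ne_zero_of_notMem hd
    refine ⟨c, d, hd, ?_⟩
    rw [div_eq_div_iff hbK hdK, ← map_mul, ← map_mul, h, mul_comm]

section Noetherian

variable [IsNoetherianRing R]

variable (K) in
theorem exists_mem_localRingAt_iff_not_le (hp : p ∈ primeDivisors R) :
    ∃ s : K, ∀ q : PrimeSpectrum R, s ∈ localRingAt K q ↔ ¬ p ≤ q := by
  obtain ⟨t, htp, ht0⟩ := (Submodule.ne_bot_iff _).1 (Ideal.ne_bot_of_height_eq_one hp)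
  have hcolon : (Ideal.span {t}).colon {1} = Ideal.span {t} := by
    ext r
    rw [Submodule.mem_colon_singleton, smul_eq_mul, mul_one]
  have hmin := asIdeal_mem_minimalPrimes_span_singleton hp htp ht0
  rw [← hcolon] at hmin
  obtain ⟨c, hc⟩ := Submodule.exists_eq_colon_of_mem_minimalPrimes hmin
  refine ⟨algebraMap R K c / algebraMap R K t, fun q => ?_⟩
  rw [div_mem_localRingAt_iff ht0, ← hc, PrimeSpectrum.asIdeal_le_asIdeal]

end Noetherian

section IntegrallyClosed

variable [IsIntegrallyClosed R]

theorem dvd_of_span_mul_le_span_mul {I : Ideal R} (hfg : I.FG) (hI : I ≠ ⊥) {b c : R}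
    (hb : b ≠ 0) (h : Ideal.span {c} * I ≤ Ideal.span {b} * I) : b ∣ c := by
  let K := FractionRing R
  have hbK : algebraMap R K b ≠ 0 := by simpa using hb
  rw [Ideal.span_singleton_mul_le_span_singleton_mul] at h
  have hint : IsIntegral R (algebraMap R K c / algebraMap R K b) := by
    refine isIntegral_of_smul_mem_submodule (M := K)
      (Submodule.map (Algebra.linearMap R K) I) ?_ (Submodule.FG.map _ hfg) _ ?_
    · obtain ⟨r, hr, hr0⟩ := (Submodule.ne_bot_iff _).1 hI
      exact (Submodule.ne_bot_iff _).2 ⟨_, ⟨r, hr, rfl⟩, by simpa using hr0⟩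
    · rintro _ ⟨r, hr, rfl⟩
      obtain ⟨w, hw, hrw⟩ := h r hr
      refine ⟨w, hw, ?_⟩
      simp only [Algebra.linearMap_apply, smul_eq_mul]
      rw [div_mul_eq_mul_div, eq_div_iff hbK, ← map_mul, ← map_mul, hrw, mul_comm]
  obtain ⟨y, hy⟩ := IsIntegrallyClosed.algebraMap_eq_of_integral hint
  refine ⟨y, IsFractionRing.injective R K ?_⟩
  rw [map_mul, hy, mul_div_cancel₀ _ hbK]

variable [IsNoetherianRing R]

theorem mem_primeDivisors_of_eq_colon {b c : R} (hb : b ≠ 0)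
    (hp : p.asIdeal = (Ideal.span {b}).colon {c}) : p ∈ primeDivisors R := by
  have hmem (r : R) : r ∈ p.asIdeal ↔ b ∣ c * r := by
    rw [hp, Submodule.mem_colon_singleton, smul_eq_mul, Ideal.mem_span_singleton, mul_comm]
  have hbp : b ∈ p.asIdeal := (hmem b).2 (dvd_mul_left b c)
  have hp0 : p.asIdeal ≠ ⊥ := (Submodule.ne_bot_iff _).2 ⟨b, hbp, hb⟩
  have hbc : ¬ b ∣ c := fun h =>
    p.isPrime.ne_top ((Ideal.eq_top_iff_one _).2 ((hmem 1).2 (by rwa [mul_one])))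
  -- Otherwise multiplication by `c / b` would map `p` to itself, so `c / b` would be integral.
  -- Since `c / b = v / u` and `v` is a unit at `p`, the maximal ideal of `R_p` is generated by `u`.
  obtain ⟨u, hu, v, huv, hv⟩ : ∃ u ∈ p.asIdeal, ∃ v, c * u = b * v ∧ v ∉ p.asIdeal := by
    by_contra! hcon
    refine hbc (dvd_of_span_mul_le_span_mul (IsNoetherian.noetherian p.asIdeal) hp0 hb ?_)
    refine Ideal.span_singleton_mul_le_span_singleton_mul.2 fun u hu => ?_
    obtain ⟨v, huv⟩ := (hmem u).1 hu
    exact ⟨v, hcon u hu v huv, huv⟩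
  have hmin : p.asIdeal ∈ (Ideal.span {u}).minimalPrimes := by
    refine ⟨⟨p.isPrime, (Ideal.span_singleton_le_iff_mem _).2 hu⟩, ?_⟩
    rintro z ⟨hz, huz⟩ hzp r hr
    obtain ⟨w, hw⟩ := (hmem r).1 hr
    have hrv : r * v = u * w := mul_left_cancel₀ hb (by linear_combination (-r) * huv + u * hw)
    have hrvz : r * v ∈ z :=
      hrv ▸ z.mul_mem_right w ((Ideal.span_singleton_le_iff_mem z).1 huz)
    exact (hz.mem_or_mem hrvz).resolve_right fun h => hv (hzp h)
  exact mem_primeDivisors_of_height_le_one (fun h => hp0 (by simp [h]))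
    (Ideal.height_le_one_of_isPrincipal_of_mem_minimalPrimes _ _ hmin)

theorem mem_localRingAt_of_forall_primeDivisors
    (h : ∀ q ∈ primeDivisors R, q ≤ p → k ∈ localRingAt K q) : k ∈ localRingAt K p := by
  obtain ⟨a, b, hb, rfl⟩ := IsFractionRing.div_surjective (A := R) k
  have hb0 : b ≠ 0 := nonZeroDivisors.ne_zero hb
  rw [div_mem_localRingAt_iff hb0]
  intro hle
  obtain ⟨q, hq, hqp⟩ := Ideal.exists_minimalPrimes_le hle
  obtain ⟨c, hc⟩ := Submodule.exists_eq_colon_of_mem_minimalPrimes hq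
  let q' : PrimeSpectrum R := ⟨q, hq.1.1⟩
  exact (div_mem_localRingAt_iff hb0).1
    (h q' (mem_primeDivisors_of_eq_colon hb0 hc) hqp) hq.1.2

theorem iInf_primeDivisors_localRingAt : ⨅ q ∈ primeDivisors R, localRingAt K q = ⊥ := by
  refine bot_unique (le_trans (le_iInf fun p k hk => ?_)
    (PrimeSpectrum.iInf_localization_eq_bot R K).le)
  simp only [Algebra.mem_iInf] at hk
  exact mem_localRingAt_of_forall_primeDivisors fun q hq _ => hk q hq

theorem valuationRing_localRingAt (hp : p ∈ primeDivisors R) :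
    ValuationRing (localRingAt K p) := by
  let A := localRingAt K p
  have : IsLocalization.AtPrime A p.asIdeal := inferInstance
  have hloc : IsLocalRing A := IsLocalization.AtPrime.isLocalRing A p.asIdeal
  have hnoeth : IsNoetherianRing A := IsLocalization.isNoetherianRing p.asIdeal.primeCompl A ‹_›
  have hic : IsIntegrallyClosed A := isIntegrallyClosed_of_isLocalization A _
    p.asIdeal.primeCompl_le_nonZeroDivisors
  have hdim : Ring.KrullDimLE 1 A := by
    rw [Ring.krullDimLE_iff, IsLocalization.AtPrime.ringKrullDim_eq_height p.asIdeal A,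
      show p.asIdeal.height = 1 from hp]
    rfl
  have htfae := (tfae_of_isNoetherianRing_of_isLocalRing_of_isDomain A).out 3 1
  exact htfae.1 ⟨hic, fun P hP hPp => IsLocalRing.eq_maximalIdeal (hPp.isMaximal_of_ne_bot hP)⟩

theorem mem_localRingAt_or_exists_mul_eq (hp : p ∈ primeDivisors R) (k : K) :
    k ∈ localRingAt K p ∨
      ∃ d ∈ p.asIdeal, ∃ s ∉ p.asIdeal, k * algebraMap R K d = algebraMap R K s := by
  have := valuationRing_localRingAt (K := K) hp
  rcases ValuationRing.isInteger_or_isInteger (localRingAt K p) k with ⟨x, rfl⟩ | ⟨x, hx⟩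
  · exact Or.inl x.2
  · by_cases hk : k = 0
    · exact Or.inl (hk ▸ zero_mem _)
    obtain ⟨d, s, hs, hds⟩ := mem_localRingAt_iff.1 x.2
    have hkd : k * algebraMap R K d = algebraMap R K s := by
      have hsK : algebraMap R K s ≠ 0 := algebraMap_ne_zero_of_notMem hs
      have hinv : k⁻¹ = algebraMap R K d / algebraMap R K s := hx.symm.trans hds
      field_simp at hinv
      exact hinv.symm
    by_cases hd : d ∈ p.asIdeal
    · exact Or.inr ⟨d, hd, s, hs, hkd⟩
    · exact Or.inl (mem_localRingAt_iff.2
        ⟨s, d, hd, (eq_div_iff (algebraMap_ne_zero_of_notMem hd)).2 hkd⟩)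

end IntegrallyClosed

end LocalRing

section Birational

variable {A B K L : Type*} [CommRing A] [IsDomain A] [CommRing B] [IsDomain B]
  [Field K] [Algebra A K] [IsFractionRing A K] [Field L] [Algebra B L] [IsFractionRing B L]
  {φ : A →+* B} {Φ : K →+* L} (hΦ : ∀ a, Φ (algebraMap A K a) = algebraMap B L (φ a))
  {y : PrimeSpectrum B} {k : K}

include hΦ

theorem map_mem_localRingAt (h : k ∈ localRingAt K (y.comap φ)) : Φ k ∈ localRingAt L y := by
  obtain ⟨a, b, hb, rfl⟩ := mem_localRingAt_iff.1 h
  exact mem_localRingAt_iff.2 ⟨φ a, φ b, hb, by rw [map_div₀, hΦ, hΦ]⟩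

theorem map_mem_localRingAt_iff [IsNoetherianRing A] [IsIntegrallyClosed A]
    (hy : y.comap φ ∈ primeDivisors A) :
    Φ k ∈ localRingAt L y ↔ k ∈ localRingAt K (y.comap φ) := by
  refine ⟨fun h => ?_, map_mem_localRingAt hΦ⟩
  refine (mem_localRingAt_or_exists_mul_eq hy k).resolve_right ?_
  rintro ⟨d, hd, s, hs, hk⟩
  obtain ⟨a, b, hb, hab⟩ := mem_localRingAt_iff.1 h
  have heq : a * φ d = φ s * b := by
    refine IsFractionRing.injective B L ?_
    rw [map_mul, map_mul, ← hΦ, ← hΦ, ← hk, map_mul, hab]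
    field_simp [algebraMap_ne_zero_of_notMem hb]
  have hmem : φ s * b ∈ y.asIdeal := heq ▸ y.asIdeal.mul_mem_left a hd
  exact (y.isPrime.mem_or_mem hmem).elim hs hb

theorem comap_eq_bot_iff_of_birational (hsurj : Function.Surjective Φ) : y.comap φ = ⊥ ↔ y = ⊥ := by
  constructor
  · intro h
    refine le_bot_iff.1 ((localRingAt_le_iff (K := L)).1 ?_)
    rintro l -
    obtain ⟨k, rfl⟩ := hsurj l
    exact map_mem_localRingAt hΦ (by simp [h, localRingAt_bot])
  · rintro rfl
    refine le_bot_iff.1 fun a ha => ?_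
    have hφa : φ a = 0 := ha
    have : algebraMap A K a = 0 := (map_eq_zero Φ).1 (by rw [hΦ, hφa, map_zero])
    exact IsFractionRing.injective A K (this.trans (map_zero _).symm)

variable [IsNoetherianRing A] [IsIntegrallyClosed A]

theorem mem_primeDivisors_of_comap (hsurj : Function.Surjective Φ)
    (hy : y.comap φ ∈ primeDivisors A) : y ∈ primeDivisors B := by
  have hatom := mem_primeDivisors_iff_isAtom.1 hy
  refine mem_primeDivisors_iff_isAtom.2
    ⟨fun h => hatom.1 ((comap_eq_bot_iff_of_birational hΦ hsurj).2 h), fun z hzy => ?_⟩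
  have hle : z.comap φ ≤ y.comap φ := Ideal.comap_mono hzy.le
  refine (comap_eq_bot_iff_of_birational hΦ hsurj).1 <|
    (hatom.le_iff.1 hle).resolve_right fun heq => ?_
  refine hzy.not_ge ((localRingAt_le_iff (K := L)).1 fun l hl => ?_)
  obtain ⟨k, rfl⟩ := hsurj l
  have hk : k ∈ localRingAt K (z.comap φ) := (map_mem_localRingAt_iff hΦ (heq ▸ hy)).1 hl
  exact map_mem_localRingAt hΦ (heq ▸ hk)

theorem surjective_of_primeDivisors_subset_range (hsurj : Function.Surjective Φ)
    (h : primeDivisors A ⊆ Set.range (PrimeSpectrum.comap φ)) : Function.Surjective φ := by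
  intro b
  obtain ⟨k, hk⟩ := hsurj (algebraMap B L b)
  have hkA : k ∈ (⊥ : Subalgebra A K) := by
    simp only [← iInf_primeDivisors_localRingAt, Algebra.mem_iInf]
    intro q hq
    obtain ⟨y, rfl⟩ := h hq
    exact (map_mem_localRingAt_iff hΦ hq).1 (hk ▸ algebraMap_mem _ b)
  obtain ⟨a, rfl⟩ := Algebra.mem_bot.1 hkA
  exact ⟨a, IsFractionRing.injective B L ((hΦ a).symm.trans hk)⟩

theorem exists_primeDivisor_le_comap [IsNoetherianRing B] (hsurj : Function.Surjective Φ)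
    {D : PrimeSpectrum B} (hD : D ∈ primeDivisors B) :
    ∃ E ∈ primeDivisors A, E ≤ D.comap φ ∧ ∀ y : PrimeSpectrum B, y.comap φ = E → y = D := by
  -- The poles of `s = Φ k` are exactly the points of `D`, so `k` has a pole `E` through the image
  -- of `D`, and the points over `E` are poles of `s`.
  obtain ⟨s, hs⟩ := exists_mem_localRingAt_iff_not_le L hD
  obtain ⟨k, rfl⟩ := hsurj s
  have hk : k ∉ localRingAt K (D.comap φ) := fun h =>
    (hs D).1 (map_mem_localRingAt hΦ h) le_rfl
  obtain ⟨E, hE, hED, hkE⟩ : ∃ E ∈ primeDivisors A, E ≤ D.comap φ ∧ k ∉ localRingAt K E := by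
    by_contra! hcon
    exact hk (mem_localRingAt_of_forall_primeDivisors hcon)
  refine ⟨E, hE, hED, ?_⟩
  rintro y rfl
  have hDy : D ≤ y := by
    by_contra hDy
    exact hkE ((map_mem_localRingAt_iff hΦ hE).1 ((hs y).2 hDy))
  have hy := mem_primeDivisors_iff_isAtom.1 (mem_primeDivisors_of_comap hΦ hsurj hE)
  exact ((hy.le_iff.1 hDy).resolve_left (mem_primeDivisors_iff_isAtom.1 hD).1).symm

end Birational

theorem finite_primeDivisors_diff {R : Type*} [CommRing R] [IsDomain R] [IsNoetherianRing R]
    {U : Set (PrimeSpectrum R)} (hUo : IsOpen U) (hU : U.Nonempty) :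
    (primeDivisors R \ U).Finite := by
  obtain ⟨x, hx⟩ := hU
  obtain ⟨_, ⟨f, rfl⟩, hxf, hfU⟩ :=
    PrimeSpectrum.isTopologicalBasis_basic_opens.exists_subset_of_mem_open hx hUo
  have hf : f ≠ 0 := fun h => hxf (h ▸ zero_mem _)
  refine Set.Finite.of_finite_image
    ((Ideal.finite_minimalPrimes_of_isNoetherianRing R (Ideal.span {f})).subset ?_)
    fun p _ q _ h => PrimeSpectrum.ext h
  rintro _ ⟨p, ⟨hp, hpU⟩, rfl⟩
  exact asIdeal_mem_minimalPrimes_span_singleton hp (not_not.1 fun hfp => hpU (hfU hfp)) hf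

theorem exists_primeDivisor_lt_iterate_comap {R K : Type*} [CommRing R] [IsDomain R]
    [IsNoetherianRing R] [IsIntegrallyClosed R] [Field K] [Algebra R K] [IsFractionRing R K]
    {G : R →+* R} {Φ : K →+* K} (hΦ : ∀ r, Φ (algebraMap R K r) = algebraMap R K (G r))
    (hsurj : Function.Surjective Φ) (hG : ¬ Function.Surjective G)
    {U : Set (PrimeSpectrum R)} (hUo : IsOpen U) (hU : U.Nonempty)
    (hGU : Set.SurjOn (PrimeSpectrum.comap G) U U) :
    ∃ D ∈ primeDivisors R, ∃ m > 0, D < (PrimeSpectrum.comap G)^[m] D := by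
  set g := PrimeSpectrum.comap G
  let P := U ∪ Function.periodicPts g
  have hP : Set.SurjOn g P P := hGU.union_union (Function.bijOn_periodicPts g).surjOn
  have hfin : (primeDivisors R \ P).Finite :=
    (finite_primeDivisors_diff hUo hU).subset (Set.sdiff_subset_sdiff_right Set.subset_union_left)
  have hne : (primeDivisors R \ P).Nonempty := by
    rw [Set.sdiff_nonempty]
    exact fun h => hG <| surjective_of_primeDivisors_subset_range hΦ hsurj <|
      h.trans (hP.trans (Set.image_subset_range g P))
  have hstep : ∀ D ∈ primeDivisors R \ P, ∃ E ∈ primeDivisors R \ P, E ≤ g D := by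
    rintro D ⟨hD, hDP⟩
    obtain ⟨E, hE, hED, hfib⟩ := exists_primeDivisor_le_comap hΦ hsurj hD
    refine ⟨E, ⟨hE, fun hEP => ?_⟩, hED⟩
    obtain ⟨y, hyP, hy⟩ := hP hEP
    exact hDP (hfib y hy ▸ hyP)
  obtain ⟨D, ⟨hD, hDP⟩, m, hm, hle⟩ :=
    exists_le_iterate_of_finite (g := g) (fun _ _ h => Ideal.comap_mono h) hfin hne hstep
  exact ⟨D, hD, m, hm, hle.lt_of_ne fun h => hDP (Or.inr ⟨m, hm, h.symm⟩)⟩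

theorem primeSpectrum_comap_pow {R : Type*} [CommSemiring R] (G : R →+* R) (m : ℕ) :
    PrimeSpectrum.comap (G ^ m) = (PrimeSpectrum.comap G)^[m] := by
  induction m with
  | zero => ext1 p; rfl
  | succ m ih =>
    rw [pow_succ, RingHom.mul_def, PrimeSpectrum.comap_comp, ih, Function.iterate_succ']

theorem exists_exceptional_divisor_general {R K : Type*} [CommRing R] [IsDomain R]
    [IsNoetherianRing R] [IsIntegrallyClosed R] [Field K] [Algebra R K] [IsFractionRing R K]
    {G : R →+* R} {Φ : K →+* K} (hΦ : ∀ r, Φ (algebraMap R K r) = algebraMap R K (G r))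
    (hsurj : Function.Surjective Φ) (hG : ¬ Function.Surjective G)
    {U : Set (PrimeSpectrum R)} (hUo : IsOpen U) (hU : U.Nonempty)
    (hGU : Set.SurjOn (PrimeSpectrum.comap G) U U) :
    (∃ p : Ideal R, p.IsPrime ∧ p.height = 1 ∧ 2 ≤ (p.comap G).height) ∧
    ∃ m : ℕ, 1 ≤ m ∧ ∃ p : Ideal R, p.IsPrime ∧ p.height = 1 ∧
      2 ≤ (p.comap (G ^ m)).height ∧ p.map (G ^ m) ≤ p := by
  obtain ⟨D, hD, m, hm, hlt⟩ := exists_primeDivisor_lt_iterate_comap hΦ hsurj hG hUo hU hGU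
  have hatom := mem_primeDivisors_iff_isAtom.1 hD
  have hDm : (PrimeSpectrum.comap G)^[m] D ∉ primeDivisors R := fun h =>
    hatom.1 ((mem_primeDivisors_iff_isAtom.1 h).2 D hlt)
  refine ⟨?_, m, hm, D.asIdeal, D.isPrime, hD, ?_⟩
  · by_contra! hcon
    have hmaps : Set.MapsTo (PrimeSpectrum.comap G) (primeDivisors R) (primeDivisors R) := by
      intro p hp
      by_contra hGp
      have hne : p.comap G ≠ ⊥ := fun h =>
        (mem_primeDivisors_iff_isAtom.1 hp).1 ((comap_eq_bot_iff_of_birational hΦ hsurj).1 h)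
      have hGp2 : 2 ≤ (p.comap G).asIdeal.height := two_le_height_of_notMem_primeDivisors hne hGp
      exact (hcon p.asIdeal p.isPrime hp).not_ge hGp2
    exact hDm (hmaps.iterate m hD)
  · rw [← primeSpectrum_comap_pow] at hlt hDm
    have hDm2 : 2 ≤ (D.comap (G ^ m)).asIdeal.height :=
      two_le_height_of_notMem_primeDivisors hlt.ne_bot hDm
    exact ⟨hDm2, Ideal.map_le_iff_le_comap.2 hlt.le⟩

theorem algHom_coe_ringHom_pow {S A : Type*} [CommSemiring S] [Semiring A] [Algebra S A]
    (G : A →ₐ[S] A) (m : ℕ) : ((G ^ m : A →ₐ[S] A) : A →+* A) = (G : A →+* A) ^ m := by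
  ext a
  simp

theorem heightOf_eq_height {R : Type*} [CommRing R] (I : Ideal R) : I.heightOf = I.height := by
  simp only [Ideal.heightOf, ← PrimeSpectrum.height_eq_orderHeight]
  refine le_antisymm ?_ (le_iInf₂ fun q hq => Ideal.height_mono hq)
  rw [I.height_eq_inf_minimalPrimes]
  refine le_iInf₂ fun J hJ => ?_
  exact iInf₂_le (⟨J, hJ.1.1⟩ : PrimeSpectrum R) hJ.1.2

theorem surjOn_comap_of_restrict_iso {R : Type u} [CommRing R] {G : R →+* R}
    {U : (Spec (CommRingCat.of R)).Opens} (e : U.toScheme ≅ U.toScheme)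
    (he : U.ι ≫ Spec.map (CommRingCat.ofHom G) = e.hom ≫ U.ι) :
    Set.SurjOn (PrimeSpectrum.comap G) U.carrier U.carrier := by
  intro q hq
  obtain ⟨x, hx⟩ : ∃ x : U.toScheme, U.ι x = q := ⟨⟨q, hq⟩, rfl⟩
  obtain ⟨y, rfl⟩ : ∃ y, e.hom y = x :=
    ⟨e.inv x, by rw [← Scheme.Hom.comp_apply, e.inv_hom_id]; rfl⟩
  refine ⟨U.ι y, y.2, ?_⟩
  rw [← hx, ← Scheme.Hom.comp_apply, ← he, Scheme.Hom.comp_apply]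
  rfl

/-- Proposition 2.4.  Let `R` be an affine domain over `ℂ`, integrally closed in its
fraction field (so `Y = Spec R` is a normal affine variety).  Let `G : R → R` be an
injective `ℂ`-algebra homomorphism whose induced endomorphism of `Frac R` is bijective
(`g = Spec G` is a birational endomorphism) but which is not surjective (`g` is not an
automorphism), and suppose `Spec G` restricts to an automorphism of a nonempty open
subscheme `U` of `Spec R`.  Then (1) there is an exceptional divisor: a height-one prime
`p` with `height G⁻¹(p) ≥ 2`; and (2) after replacing `G` by some power `G^m`, the
exceptional divisor can be chosen invariant: `G^m(p) ⊆ p`. -/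
theorem exists_exceptional_divisor
    {R : Type u} [CommRing R] [IsDomain R] [Algebra ℂ R] [Algebra.FiniteType ℂ R]
    [IsIntegrallyClosed R]
    (G : R →ₐ[ℂ] R) (hGinj : Function.Injective G)
    (hGbir : ∃ Φ : FractionRing R →+* FractionRing R,
      (∀ r, Φ (algebraMap R (FractionRing R) r) = algebraMap R (FractionRing R) (G r)) ∧
      Function.Bijective Φ)
    (hGns : ¬ Function.Surjective G)
    (U : (Spec (CommRingCat.of R)).Opens) (hU : Nonempty ↥U)
    (e : U.toScheme ≅ U.toScheme)
    (he : U.ι ≫ Spec.map (CommRingCat.ofHom G.toRingHom) = e.hom ≫ U.ι) :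
    (∃ p : Ideal R, p.IsPrime ∧ p.heightOf = 1 ∧ 2 ≤ (Ideal.comap G p).heightOf) ∧
    (∃ m : ℕ, 1 ≤ m ∧ ∃ p : Ideal R, p.IsPrime ∧ p.heightOf = 1 ∧
      2 ≤ (Ideal.comap (G ^ m) p).heightOf ∧ Ideal.map (G ^ m) p ≤ p) := by
  obtain ⟨Φ, hΦ, -, hsurj⟩ := hGbir
  have := Algebra.FiniteType.isNoetherianRing ℂ R
  simpa only [heightOf_eq_height, ← algHom_coe_ringHom_pow, Ideal.comap_coe, Ideal.map_coe] using
    exists_exceptional_divisor_general (G := (G : R →+* R)) hΦ hsurj hGns U.2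
      (hU.elim fun x => ⟨x.1, x.2⟩) (surjOn_comap_of_restrict_iso e he)
end

section
/- Let R be an integral domain that is a finitely generated ℂ-algebra and is integrally closed in its fraction field. Let G : R → R be an injective ℂ-algebra homomorphism such that the induced endomorphism of Frac(R) is bijective, and suppose there is a nonempty open subscheme U of Spec R such that Spec(G) restricts to an automorphism of U. Then the complement of U is forward-invariant: for every prime ideal q of R not belonging to U, the prime ideal G⁻¹(q) does not belong to U. (Geometrically: for the birational endomorphism g = Spec(G) of the normal affine variety Y = Spec R that restricts to an automorphism of Y⁰ = U, one has g(Y ∖ Y⁰) ⊆ Y ∖ Y⁰.) -/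
/-!
Write `g = Spec G`. On `g⁻¹(U)` the inclusion `U ⟶ g⁻¹(U)` followed by the separated morphism
`g⁻¹(U) ⟶ U` is the given automorphism of `U`, which is universally closed. Cancelling the
separated factor, the inclusion `U ⟶ g⁻¹(U)` is itself universally closed, so `U` is closed in
`g⁻¹(U)`; being also dense, it is all of `g⁻¹(U)`.
-/

open AlgebraicGeometry CategoryTheory

universe u

section Restriction

variable {X Y : Scheme.{u}} {f : X ⟶ Y} {U : X.Opens} {V : Y.Opens}

theorem le_preimage_of_ι_comp_eq {p : U.toScheme ⟶ V} (h : U.ι ≫ f = p ≫ V.ι) :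
    U ≤ f ⁻¹ᵁ V := by
  intro x hx
  have hfx : f x = (p ⟨x, hx⟩).1 := congr($h ⟨x, hx⟩)
  rw [Scheme.Hom.mem_preimage, hfx]
  exact (p ⟨x, hx⟩).2

theorem resLE_eq_of_ι_comp_eq {p : U.toScheme ⟶ V} (h : U.ι ≫ f = p ≫ V.ι) :
    f.resLE V U (le_preimage_of_ι_comp_eq h) = p := by
  rw [← cancel_mono V.ι, Scheme.Hom.resLE_comp_ι, h]

end Restriction

theorem le_of_surjective_homOfLE {X : Scheme.{u}} {U V : X.Opens} (h : U ≤ V)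
    [Surjective (X.homOfLE h)] : V ≤ U := by
  intro x hx
  obtain ⟨y, hy⟩ := (X.homOfLE h).surjective ⟨x, hx⟩
  have hyx : y.1 = x := (X.homOfLE_apply h y).symm.trans congr(($hy).1)
  exact hyx ▸ y.2

theorem surjective_of_isDominant_of_universallyClosed_comp {X Y Z : Scheme.{u}}
    (j : X ⟶ Y) (g : Y ⟶ Z) [IsDominant j] [UniversallyClosed (j ≫ g)] [IsSeparated g] :
    Surjective j :=
  have : UniversallyClosed j := .of_comp_of_isSeparated j g
  inferInstance

theorem preimage_eq_of_universallyClosed_resLE {X Y : Scheme.{u}} (f : X ⟶ Y) [IsSeparated f]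
    {U : X.Opens} {V : Y.Opens} (hU : Dense (U : Set X)) (hUV : U ≤ f ⁻¹ᵁ V)
    [UniversallyClosed (f.resLE V U hUV)] : f ⁻¹ᵁ V = U := by
  have : IsDominant (X.homOfLE hUV) := Opens.isDominant_homOfLE hU hUV
  have : UniversallyClosed (X.homOfLE hUV ≫ f ∣_ V) :=
    inferInstanceAs (UniversallyClosed (f.resLE V U hUV))
  have := surjective_of_isDominant_of_universallyClosed_comp (X.homOfLE hUV) (f ∣_ V)
  exact (le_of_surjective_homOfLE hUV).antisymm hUV

theorem complement_forward_invariant_general {X : Scheme.{u}} (f : X ⟶ X) [IsSeparated f]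
    (U : X.Opens) (hU : Dense (U : Set X)) (p : U.toScheme ⟶ U.toScheme) [UniversallyClosed p]
    (hp : U.ι ≫ f = p ≫ U.ι) : ∀ x ∉ U, f x ∉ U := by
  have : UniversallyClosed (f.resLE U U (le_preimage_of_ι_comp_eq hp)) := by
    rwa [resLE_eq_of_ι_comp_eq hp]
  have hpre : f ⁻¹ᵁ U = U := preimage_eq_of_universallyClosed_resLE f hU _
  exact fun x hx hfx ↦ hx (hpre.le hfx)

/-- Let `R` be an affine domain over `ℂ`, integrally closed in its fraction field.  Let
`G : R → R` be an injective `ℂ`-algebra homomorphism whose induced endomorphism of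
`Frac R` is bijective (`g = Spec G` is a birational endomorphism of the normal affine
variety `Y = Spec R`), and suppose `Spec G` restricts to an automorphism of a nonempty
open subscheme `U = Y⁰` of `Spec R`.  Then the complement of `U` is forward invariant:
for every prime `q ∉ U`, the point `Spec G (q) = G⁻¹(q)` is not in `U` either
(geometrically, `g(Y ∖ Y⁰) ⊆ Y ∖ Y⁰`). -/
theorem complement_forward_invariant
    {R : Type u} [CommRing R] [IsDomain R] [Algebra ℂ R] [Algebra.FiniteType ℂ R]
    [IsIntegrallyClosed R]
    (G : R →ₐ[ℂ] R) (hGinj : Function.Injective G)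
    (hGbir : ∃ Φ : FractionRing R →+* FractionRing R,
      (∀ r, Φ (algebraMap R (FractionRing R) r) = algebraMap R (FractionRing R) (G r)) ∧
      Function.Bijective Φ)
    (U : (Spec (CommRingCat.of R)).Opens) (hU : Nonempty ↥U)
    (e : U.toScheme ≅ U.toScheme)
    (he : U.ι ≫ Spec.map (CommRingCat.ofHom G.toRingHom) = e.hom ≫ U.ι) :
    ∀ q : PrimeSpectrum R, q ∉ U →
      (Spec.map (CommRingCat.ofHom G.toRingHom)).base q ∉ U := by
  have : IsDomain (CommRingCat.of R) := inferInstanceAs (IsDomain R)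
  exact complement_forward_invariant_general _ U
    (U.isOpen.dense (Set.nonempty_coe_sort.mp hU)) e.hom he
end

section
/- Let R and S be integral domains that are finitely generated ℂ-algebras, let ι : R → S be an injective ℂ-algebra homomorphism, assume R is integrally closed in its fraction field, let F : S → S be a bijective ℂ-algebra homomorphism, and let G : R → R be a ℂ-algebra homomorphism with ι ∘ G = F ∘ ι. If G is not bijective, then there exist an integer m ≥ 1 and a prime ideal p of R with height p = 1 such that the prime ideal (G^m)⁻¹(p) has height at least 2 and G^m(p) ⊆ p. (Geometrically: replacing g by some power g^m, there is an exceptional divisor D ⊂ Y = Spec R with codim_Y g^m(D) ≥ 2 and g^m(D) ⊆ D.) -/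
/-!
Let `g = Spec G`, acting on the points of `Y = Spec R`; a hypersurface is missed by a morphism if
its generic point is not in the image.

*`g` is birational.* The rings `Aₙ = F⁻ⁿ(ι R)` increase with `n`, so the ideals of `S ⊗ S` generated
by the `x ⊗ 1 - 1 ⊗ x` with `x ∈ Aₙ` stabilize. Membership of `x ⊗ 1 - 1 ⊗ x` in the `n`-th one
forces `x ∈ Frac Aₙ`, because the field extension `Frac S / Frac Aₙ` is faithfully flat.

*Codimension one.* If `g p` has codimension at most one, then the local ring of `Y` at `g p` is a
valuation ring, so `g` is an isomorphism over it: `p` has the same codimension and is determined by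
`g p`. If no hypersurface through a point is missed by `g`, algebraic Hartogs makes `g` an
isomorphism over that point. So some hypersurface is missed when `G` is not bijective, and `g D`
lies in a missed hypersurface whenever `g` contracts the hypersurface `D`.

*Dynamics.* A hypersurface missed by some power of `g` is missed by `Spec S → Y`, since `Spec F` is
surjective; by Chevalley's theorem there are only finitely many. The forward orbit of a missed
hypersurface consists of distinct hypersurfaces of this kind until it is contracted into another
missed one. Passing from one missed hypersurface to the next in this way, one returns to a previous
one, which yields a missed `D` contracted into itself by a power of `g`.
-/

section IntegrallyClosed

variable {R : Type*} [CommRing R] [IsDomain R] [IsIntegrallyClosed R]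

lemma dvd_of_forall_mem_exists_mul_eq {I : Ideal R} (hI : I ≠ ⊥) (hfg : I.FG) {a c : R}
    (hc : c ≠ 0) (h : ∀ x ∈ I, ∃ y ∈ I, x * a = c * y) : c ∣ a := by
  let K := FractionRing R
  have hcK : algebraMap R K c ≠ 0 := by simpa using hc
  have hint : IsIntegral R (algebraMap R K a / algebraMap R K c) := by
    refine isIntegral_of_smul_mem_submodule (Submodule.map (Algebra.linearMap R K) I) ?_
      (Submodule.FG.map _ hfg) _ ?_
    · rwa [Ne, (Submodule.map_injective_of_injective (f := Algebra.linearMap R K)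
        (IsFractionRing.injective R K)).eq_iff' (Submodule.map_bot _)]
    · rintro _ ⟨x, hx, rfl⟩
      obtain ⟨y, hy, hxy⟩ := h x hx
      refine ⟨y, hy, ?_⟩
      have hxy' := congrArg (algebraMap R K) hxy
      simp only [map_mul] at hxy'
      rw [Algebra.linearMap_apply, Algebra.linearMap_apply, smul_eq_mul, div_mul_eq_mul_div,
        eq_div_iff hcK]
      linear_combination -hxy'
  obtain ⟨b, hb⟩ := IsIntegrallyClosed.algebraMap_eq_of_integral hint
  rw [eq_div_iff hcK, ← map_mul] at hb
  exact ⟨b, by rw [mul_comm, IsFractionRing.injective R K hb]⟩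

variable [IsNoetherianRing R]

/- `(c : a)` is the ideal of denominators of `y = a / c`. If `y` carried it into itself, then `y`
would be integral; otherwise `(c : a)` is minimal over a principal ideal. -/
lemma height_colon_singleton_eq_one {a c : R} (hc : c ≠ 0)
    (hP : ((Ideal.span {c}).colon {a}).IsPrime) : ((Ideal.span {c}).colon {a}).height = 1 := by
  set P := (Ideal.span {c}).colon {a} with P_def
  have mem_P {x : R} : x ∈ P ↔ c ∣ x * a := by
    rw [P_def, Submodule.mem_colon_singleton, smul_eq_mul, Ideal.mem_span_singleton]
  have hP0 : P ≠ ⊥ := Submodule.ne_bot_iff _ |>.2 ⟨c, mem_P.2 (dvd_mul_right c a), hc⟩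
  obtain ⟨p, hp, u, hu, hpu⟩ : ∃ p ∈ P, ∃ u ∉ P, p * a = c * u := by
    by_contra! hcon
    refine hP.ne_top ((Ideal.eq_top_iff_one _).2 (mem_P.2 ?_))
    rw [one_mul]
    refine dvd_of_forall_mem_exists_mul_eq hP0 P.fg_of_isNoetherianRing hc fun x hx ↦ ?_
    obtain ⟨y, hy⟩ := mem_P.1 hx
    exact ⟨y, not_not.1 fun hyP ↦ hcon x hx y hyP hy, hy⟩
  have hmin : P ∈ (Ideal.span {p}).minimalPrimes := by
    refine ⟨⟨hP, (Ideal.span_singleton_le_iff_mem _).2 hp⟩, fun Q ⟨hQ, hpQ⟩ hQP x hx ↦ ?_⟩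
    obtain ⟨v, hv⟩ := mem_P.1 hx
    have hxu : x * u = p * v := mul_left_cancel₀ hc (by linear_combination p * hv - x * hpu)
    have hpv : p * v ∈ Q := Q.mul_mem_right v (hpQ (Ideal.mem_span_singleton_self p))
    exact (hQ.mem_or_mem (hxu ▸ hpv)).resolve_right fun h ↦ hu (hQP h)
  refine le_antisymm (Ideal.height_le_one_of_isPrincipal_of_mem_minimalPrimes _ _ hmin) ?_
  rwa [Order.one_le_iff_ne_zero, Ne, Ideal.height_eq_zero_iff_eq_bot]

lemma exists_height_eq_one_of_colon_singleton_le {a c : R} (hc : c ≠ 0) {q : Ideal R} [q.IsPrime]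
    (hq : (Ideal.span {c}).colon {a} ≤ q) :
    ∃ P : Ideal R, P.IsPrime ∧ P.height = 1 ∧ (Ideal.span {c}).colon {a} ≤ P ∧ P ≤ q := by
  obtain ⟨P, hPmin, hPq⟩ := Ideal.exists_minimalPrimes_le hq
  have hP : P.IsPrime := hPmin.1.1
  obtain ⟨b, rfl⟩ := Submodule.exists_eq_colon_of_mem_minimalPrimes hPmin
  exact ⟨_, hP, height_colon_singleton_eq_one hc hP, hPmin.1.2, hPq⟩

lemma valuationRing_localization_atPrime {q : Ideal R} [q.IsPrime] (hq : q.height ≤ 1) :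
    ValuationRing (Localization.AtPrime q) := by
  have : IsNoetherianRing (Localization.AtPrime q) :=
    IsLocalization.isNoetherianRing q.primeCompl _ inferInstance
  have : IsIntegrallyClosed (Localization.AtPrime q) :=
    isIntegrallyClosed_of_isLocalization _ q.primeCompl q.primeCompl_le_nonZeroDivisors
  have hdim : Ring.KrullDimLE 1 (Localization.AtPrime q) := by
    rw [Ring.krullDimLE_iff, IsLocalization.AtPrime.ringKrullDim_eq_height q]
    exact_mod_cast hq
  have hnormal : IsIntegrallyClosed (Localization.AtPrime q) ∧
      ∀ Q : Ideal (Localization.AtPrime q), Q ≠ ⊥ → Q.IsPrime → Q = IsLocalRing.maximalIdeal _ :=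
    ⟨inferInstance, fun Q hQ0 hQ ↦ IsLocalRing.eq_maximalIdeal
      (Ring.krullDimLE_one_iff_of_noZeroDivisors.1 hdim Q hQ0 hQ)⟩
  exact ((tfae_of_isNoetherianRing_of_isLocalRing_of_isDomain _).out 1 3).2 hnormal

lemma exists_notMem_dvd_mul_or_dvd_mul {q : Ideal R} [q.IsPrime] (hq : q.height ≤ 1) (a c : R) :
    ∃ s ∉ q, c ∣ s * a ∨ a ∣ s * c := by
  have clear_denominators {x y : R} (h : algebraMap R (Localization.AtPrime q) x ∣
      algebraMap R (Localization.AtPrime q) y) : ∃ s ∉ q, x ∣ s * y := by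
    rw [← Ideal.mem_span_singleton, ← Set.image_singleton, ← Ideal.map_span,
      IsLocalization.algebraMap_mem_map_algebraMap_iff q.primeCompl] at h
    obtain ⟨s, hs, h⟩ := h
    exact ⟨s, hs, Ideal.mem_span_singleton.1 h⟩
  have := valuationRing_localization_atPrime hq
  rcases ValuationRing.dvd_total (algebraMap R (Localization.AtPrime q) c) (algebraMap R _ a)
    with h | h
  · obtain ⟨s, hs, h⟩ := clear_denominators h
    exact ⟨s, hs, .inl h⟩
  · obtain ⟨s, hs, h⟩ := clear_denominators h
    exact ⟨s, hs, .inr h⟩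

end IntegrallyClosed

section IsIsoOver

variable {A B : Type*} [CommRing A] [CommRing B]

/-- Every element of `B` is a fraction of elements of `A` whose denominator lies outside `q`. For an
injective homomorphism `G` of domains and a prime `q` this says that `Spec G` is an isomorphism over
the local scheme `Spec A_q`; for `q = ⊥` it says that `Spec G` is birational. -/
def IsIsoOver (G : A →+* B) (q : Ideal A) : Prop :=
  ∀ b : B, ∃ c ∉ q, ∃ a : A, G c * b = G a

variable {G : A →+* B} {q : Ideal A}

lemma IsIsoOver.eq_of_comap_eq {P Q : Ideal B} [P.IsPrime] [Q.IsPrime]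
    (hP : IsIsoOver G (P.comap G)) (h : P.comap G = Q.comap G) : P = Q := by
  have mem_iff {I : Ideal B} [I.IsPrime] {c a : A} {b : B} (hc : c ∉ I.comap G)
      (hb : G c * b = G a) : b ∈ I ↔ a ∈ I.comap G := by
    rw [Ideal.mem_comap, ← hb, Ideal.IsPrime.mul_mem_iff_mem_or_mem ‹_›, or_iff_right]
    exact hc
  ext b
  obtain ⟨c, hc, a, hb⟩ := hP b
  rw [mem_iff hc hb, h, ← mem_iff (h ▸ hc) hb]

lemma surjective_of_forall_isMaximal_isIsoOver (h : ∀ q : Ideal A, q.IsMaximal → IsIsoOver G q) :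
    Function.Surjective G := by
  intro b
  let denominators : Ideal A :=
    { carrier := {s | ∃ a, G s * b = G a}
      zero_mem' := ⟨0, by simp⟩
      add_mem' := fun ⟨a, ha⟩ ⟨a', ha'⟩ ↦ ⟨a + a', by rw [map_add, add_mul, ha, ha', map_add]⟩
      smul_mem' := fun r s ⟨a, ha⟩ ↦ ⟨r * a, by rw [smul_eq_mul, map_mul, mul_assoc, ha, map_mul]⟩ }
  have htop : denominators = ⊤ := by
    by_contra hne
    obtain ⟨q, hq, hle⟩ := Ideal.exists_le_maximal _ hne
    obtain ⟨s, hs, hsb⟩ := h q hq b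
    exact hs (hle hsb)
  obtain ⟨a, ha⟩ : ∃ a, G 1 * b = G a := (Ideal.eq_top_iff_one _).1 htop
  exact ⟨a, by rw [← ha, map_one, one_mul]⟩

variable [IsDomain B]

lemma exists_map_mul_eq_map_iff (hG : Function.Injective G) {c a : A} {b : B} (hc : c ≠ 0)
    (hb : G c * b = G a) (s : A) : (∃ x, G s * b = G x) ↔ c ∣ s * a := by
  have hGc : G c ≠ 0 := (map_ne_zero_iff G hG).2 hc
  refine exists_congr fun x ↦ ?_
  rw [← hG.eq_iff, map_mul, map_mul, ← hb, ← mul_right_inj' hGc, mul_left_comm]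

lemma IsIsoOver.height_comap (hG : Function.Injective G) {P : Ideal B} [P.IsPrime]
    (h : IsIsoOver G (P.comap G)) : (P.comap G).height = P.height := by
  let := ((algebraMap B (Localization.AtPrime P)).comp G).toAlgebra
  have algebraMap_eq (a : A) :
      algebraMap A (Localization.AtPrime P) a = algebraMap B _ (G a) := rfl
  have hloc : IsLocalization.AtPrime (Localization.AtPrime P) (P.comap G) := by
    refine (isLocalization_iff _ _).2 ⟨fun s ↦ ?_, fun z ↦ ?_, fun {x y} hxy ↦ ?_⟩
    · exact IsLocalization.map_units (M := P.primeCompl) _ ⟨G s, s.2⟩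
    · obtain ⟨⟨b, t⟩, hz⟩ := IsLocalization.surj P.primeCompl z
      obtain ⟨c, hc, a, hb⟩ := h b
      obtain ⟨d, hd, u, ht⟩ := h t
      have hu : G u ∉ P := ht ▸ P.primeCompl.mul_mem hd t.2
      refine ⟨(d * a, ⟨c * u, (P.comap G).primeCompl.mul_mem hc hu⟩), ?_⟩
      simp only [algebraMap_eq, map_mul, ← ht, ← hb, ← hz]
      ring
    · rw [algebraMap_eq, algebraMap_eq,
        (IsLocalization.injective _ P.primeCompl_le_nonZeroDivisors).eq_iff] at hxy
      exact ⟨1, by rw [hG hxy]⟩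
  have hdim := IsLocalization.AtPrime.ringKrullDim_eq_height (P.comap G) (Localization.AtPrime P)
  rw [IsLocalization.AtPrime.ringKrullDim_eq_height P] at hdim
  exact_mod_cast hdim.symm

variable [IsDomain A] [IsNoetherianRing A] [IsIntegrallyClosed A]

/- With `q = G⁻¹(P)`, the valuation ring `A_q` is dominated by no other local ring of its fraction
field, so `A_q = B_P`. -/
lemma IsIsoOver.comap_of_height_le_one (hG : Function.Injective G) (hbir : IsIsoOver G ⊥)
    {P : Ideal B} [P.IsPrime] (hP : (P.comap G).height ≤ 1) : IsIsoOver G (P.comap G) := by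
  intro b
  obtain ⟨c, hc, a, hb⟩ := hbir b
  have hc0 : c ≠ 0 := hc
  obtain ⟨s, hs, hca | ⟨d, hd⟩⟩ := exists_notMem_dvd_mul_or_dvd_mul hP a c
  · exact ⟨s, hs, (exists_map_mul_eq_map_iff hG hc0 hb s).2 hca⟩
  · have hdb : G d * b = G s := by
      refine mul_left_cancel₀ ((map_ne_zero_iff G hG).2 hc0) ?_
      rw [mul_left_comm, hb, ← map_mul, ← map_mul, mul_comm d, ← hd, mul_comm]
    refine ⟨d, fun hdP ↦ hs ?_, s, hdb⟩
    rw [Ideal.mem_comap, ← hdb]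
    exact P.mul_mem_right b hdP

/- For `b = a / c` in `Frac A`, the denominators of `b` form the ideal `(c : a)`. -/
lemma IsIsoOver.of_forall_height_eq_one (hG : Function.Injective G) (hbir : IsIsoOver G ⊥)
    [q.IsPrime] (h : ∀ P : Ideal A, P.IsPrime → P.height = 1 → P ≤ q → IsIsoOver G P) :
    IsIsoOver G q := by
  intro b
  obtain ⟨c, hc, a, hb⟩ := hbir b
  have mem_colon {s : A} : s ∈ (Ideal.span {c}).colon {a} ↔ ∃ x, G s * b = G x := by
    rw [exists_map_mul_eq_map_iff hG hc hb, Submodule.mem_colon_singleton, smul_eq_mul,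
      Ideal.mem_span_singleton]
  by_contra! hcon
  obtain ⟨P, hP, hP1, hle, hPq⟩ := exists_height_eq_one_of_colon_singleton_le (c := c) (a := a)
    hc (q := q) fun s hs ↦ by
      by_contra hsq
      obtain ⟨x, hx⟩ := mem_colon.1 hs
      exact hcon s hsq x hx
  obtain ⟨s, hs, hx⟩ := h P hP hP1 hPq b
  exact hs (hle (mem_colon.2 hx))

end IsIsoOver

/-- `P` is the generic point of a hypersurface missed by the map `g`, where `codim` is the
codimension function on the points of the target. -/
def IsMissed {X Y : Type*} (codim : X → ℕ∞) (g : Y → X) (P : X) : Prop :=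
  codim P = 1 ∧ P ∉ Set.range g

section IsMissed

variable {A B : Type*} [CommRing A] [IsDomain A] [IsNoetherianRing A] [IsIntegrallyClosed A]
  [CommRing B] [IsDomain B] {G : A →+* B}

lemma IsIsoOver.of_forall_not_isMissed (hG : Function.Injective G) (hbir : IsIsoOver G ⊥)
    {q : PrimeSpectrum A}
    (h : ∀ P ≤ q, ¬ IsMissed (·.asIdeal.height) (PrimeSpectrum.comap G) P) :
    IsIsoOver G q.asIdeal := by
  refine hbir.of_forall_height_eq_one hG fun P hP hP1 hPq ↦ ?_
  obtain ⟨p, hp⟩ := not_not.1 fun hrange ↦ h ⟨P, hP⟩ hPq ⟨hP1, hrange⟩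
  obtain rfl : p.asIdeal.comap G = P := congrArg PrimeSpectrum.asIdeal hp
  exact hbir.comap_of_height_le_one hG hP1.le

lemma exists_isMissed_le_comap (hG : Function.Injective G) (hbir : IsIsoOver G ⊥)
    {p : PrimeSpectrum B}
    (hp : p.asIdeal.height < (PrimeSpectrum.comap G p).asIdeal.height) :
    ∃ P ≤ PrimeSpectrum.comap G p, IsMissed (·.asIdeal.height) (PrimeSpectrum.comap G) P := by
  by_contra! hno
  exact hp.ne' ((IsIsoOver.of_forall_not_isMissed hG hbir hno).height_comap hG)

lemma exists_isMissed (hG : Function.Injective G) (hbir : IsIsoOver G ⊥)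
    (hsurj : ¬ Function.Surjective G) :
    ∃ P, IsMissed (·.asIdeal.height) (PrimeSpectrum.comap G) P := by
  by_contra! hno
  refine hsurj (surjective_of_forall_isMaximal_isIsoOver fun q hq ↦ ?_)
  exact IsIsoOver.of_forall_not_isMissed (q := ⟨q, hq.isPrime⟩) hG hbir fun P _ ↦ hno P

end IsMissed

lemma exists_rel_self {α : Type*} [Finite α] [Nonempty α] {r : α → α → Prop} [IsTrans α r]
    (h : ∀ a, ∃ b, r b a) : ∃ a, r a a := by
  by_contra! hirrefl
  have : Std.Irrefl r := ⟨hirrefl⟩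
  obtain ⟨a, -, hmin⟩ := (Finite.wellFounded_of_trans_of_irrefl r).has_min Set.univ
    Set.univ_nonempty
  obtain ⟨b, hb⟩ := h a
  exact hmin b trivial hb

section Dynamics

variable {X : Type*} {codim : X → ℕ∞} {g : X → X}

lemma codim_iterate_eq (hcodim : ∀ p, codim (g p) ≤ 1 → codim (g p) = codim p) {p : X} (n : ℕ)
    (hp : codim (g^[n] p) ≤ 1) : codim (g^[n] p) = codim p := by
  induction n generalizing p with
  | zero => rfl
  | succ n ih =>
    have hgp : codim (g^[n + 1] p) = codim (g p) := ih hp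
    rw [hgp, hcodim p (hgp ▸ hp)]

lemma eq_of_iterate_eq (hcodim : ∀ p, codim (g p) ≤ 1 → codim (g p) = codim p)
    (hinj : ∀ p p', codim (g p) ≤ 1 → g p = g p' → p = p') {p p' : X} (n : ℕ)
    (hp : codim (g^[n] p) ≤ 1) (h : g^[n] p = g^[n] p') : p = p' := by
  induction n generalizing p p' with
  | zero => exact h
  | succ n ih =>
    refine hinj p p' ?_ (ih hp h)
    rwa [← codim_iterate_eq hcodim n hp]

lemma IsMissed.exists_two_le_codim_iterate
    (hcodim : ∀ p, codim (g p) ≤ 1 → codim (g p) = codim p)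
    (hinj : ∀ p p', codim (g p) ≤ 1 → g p = g p' → p = p')
    (hfin : {P | codim P = 1 ∧ ∃ n, P ∉ Set.range g^[n]}.Finite) {P : X}
    (hP : IsMissed codim g P) : ∃ k, 2 ≤ codim (g^[k] P) := by
  by_contra! hlt
  have hle (k : ℕ) : codim (g^[k] P) ≤ 1 := Order.le_of_lt_add_one (hlt k)
  have notMem_range (k : ℕ) : g^[k] P ∉ Set.range g^[k + 1] := by
    rintro ⟨p, hp⟩
    exact hP.2 ⟨p, (eq_of_iterate_eq hcodim hinj k (hle k) hp.symm).symm⟩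
  have mem_set (k : ℕ) : g^[k] P ∈ {P | codim P = 1 ∧ ∃ n, P ∉ Set.range g^[n]} :=
    ⟨(codim_iterate_eq hcodim k (hle k)).trans hP.1, k + 1, notMem_range k⟩
  obtain ⟨i, j, hij, h⟩ := hfin.exists_lt_map_eq_of_forall_mem mem_set
  refine notMem_range i ⟨g^[j - (i + 1)] P, ?_⟩
  rw [← Function.iterate_add_apply, Nat.add_sub_cancel' hij, ← h]

lemma IsMissed.exists_isMissed_le_iterate [LE X]
    (hcodim : ∀ p, codim (g p) ≤ 1 → codim (g p) = codim p)
    (hinj : ∀ p p', codim (g p) ≤ 1 → g p = g p' → p = p')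
    (hcontr : ∀ p, codim p ≤ 1 → 2 ≤ codim (g p) → ∃ P ≤ g p, IsMissed codim g P)
    (hfin : {P | codim P = 1 ∧ ∃ n, P ∉ Set.range g^[n]}.Finite) {P : X}
    (hP : IsMissed codim g P) :
    ∃ P', IsMissed codim g P' ∧ ∃ m, 1 ≤ m ∧ 2 ≤ codim (g^[m] P) ∧ P' ≤ g^[m] P := by
  classical
  have hex := hP.exists_two_le_codim_iterate hcodim hinj hfin
  obtain ⟨j, hj⟩ : ∃ j, Nat.find hex = j + 1 := by
    refine Nat.exists_eq_add_one_of_ne_zero fun h0 ↦ ?_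
    have hP2 : 2 ≤ codim P := (Nat.find_eq_zero hex).1 h0
    rw [hP.1] at hP2
    exact absurd hP2 (by decide)
  have hlarge : 2 ≤ codim (g (g^[j] P)) := by
    rw [← Function.iterate_succ_apply' g, Nat.succ_eq_add_one, ← hj]
    exact Nat.find_spec hex
  have hsmall : codim (g^[j] P) < 2 := not_le.1 (Nat.find_min hex (hj ▸ j.lt_succ_self))
  obtain ⟨P', hle, hP'⟩ := hcontr _ (Order.le_of_lt_add_one hsmall) hlarge
  rw [← Function.iterate_succ_apply' g] at hle hlarge
  exact ⟨P', hP', j + 1, j.succ_pos, hlarge, hle⟩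

/- Containing the image under a contracting iterate is a transitive relation without dead ends on
the finite set of missed points, so it relates some missed point to itself. -/
lemma exists_codim_eq_one_le_iterate [Preorder X] (hg : Monotone g)
    (hcodim : ∀ p, codim (g p) ≤ 1 → codim (g p) = codim p)
    (hinj : ∀ p p', codim (g p) ≤ 1 → g p = g p' → p = p')
    (hcontr : ∀ p, codim p ≤ 1 → 2 ≤ codim (g p) → ∃ P ≤ g p, IsMissed codim g P)
    (hfin : {P | codim P = 1 ∧ ∃ n, P ∉ Set.range g^[n]}.Finite)
    (hmissed : ∃ P, IsMissed codim g P) :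
    ∃ P, codim P = 1 ∧ ∃ m, 1 ≤ m ∧ 2 ≤ codim (g^[m] P) ∧ P ≤ g^[m] P := by
  let r (P' P : {P // IsMissed codim g P}) : Prop :=
    ∃ m, 1 ≤ m ∧ 2 ≤ codim (g^[m] P) ∧ P'.1 ≤ g^[m] P
  have : Finite {P // IsMissed codim g P} :=
    (hfin.subset fun P (hP : IsMissed codim g P) ↦ ⟨hP.1, 1, hP.2⟩).to_subtype
  have : Nonempty {P // IsMissed codim g P} := nonempty_subtype.2 hmissed
  have : IsTrans _ r := by
    refine ⟨fun P'' P' P ⟨m', _, _, hle'⟩ ⟨m, hm, h2, hle⟩ ↦ ⟨m' + m, le_add_left hm, ?_, ?_⟩⟩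
    · rw [Function.iterate_add_apply]
      by_contra! hlt
      rw [← codim_iterate_eq hcodim m' (Order.le_of_lt_add_one hlt)] at h2
      exact hlt.not_ge h2
    · rw [Function.iterate_add_apply]
      exact hle'.trans (hg.iterate m' hle)
  obtain ⟨⟨P, hP⟩, h⟩ := exists_rel_self (r := r) fun P ↦
    let ⟨P', hP', h⟩ := P.2.exists_isMissed_le_iterate hcodim hinj hcontr hfin
    ⟨⟨P', hP'⟩, h⟩
  exact ⟨P, hP.1, h⟩

end Dynamics

lemma asIdeal_iterate_comap {A : Type*} [CommRing A] (G : A →+* A) (P : PrimeSpectrum A) (n : ℕ) :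
    ((PrimeSpectrum.comap G)^[n] P).asIdeal = P.asIdeal.comap (G ^ n) := by
  induction n with
  | zero => rfl
  | succ n ih =>
    rw [Function.iterate_succ_apply', PrimeSpectrum.comap_asIdeal, ih, Ideal.comap_comap, pow_succ]
    rfl

lemma exists_height_eq_one_le_iterate_comap {A : Type*} [CommRing A] [IsDomain A]
    [IsNoetherianRing A] [IsIntegrallyClosed A] {G : A →+* A} (hG : Function.Injective G)
    (hbir : IsIsoOver G ⊥) (hsurj : ¬ Function.Surjective G)
    (hfin : {P : PrimeSpectrum A | P.asIdeal.height = 1 ∧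
      ∃ n, P ∉ Set.range (PrimeSpectrum.comap G)^[n]}.Finite) :
    ∃ P : PrimeSpectrum A, P.asIdeal.height = 1 ∧ ∃ m, 1 ≤ m ∧
      2 ≤ ((PrimeSpectrum.comap G)^[m] P).asIdeal.height ∧ P ≤ (PrimeSpectrum.comap G)^[m] P := by
  have hiso (p : PrimeSpectrum A) (hp : (PrimeSpectrum.comap G p).asIdeal.height ≤ 1) :
      IsIsoOver G (p.asIdeal.comap G) :=
    hbir.comap_of_height_le_one hG hp
  refine exists_codim_eq_one_le_iterate (X := PrimeSpectrum A) (codim := (·.asIdeal.height))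
    (g := PrimeSpectrum.comap G) (fun _ _ h ↦ Ideal.comap_mono h)
    (fun p hp ↦ (hiso p hp).height_comap hG) (fun p p' hp h ↦ ?_) (fun p hp hlarge ↦ ?_) hfin
    (exists_isMissed hG hbir hsurj)
  · exact PrimeSpectrum.ext ((hiso p hp).eq_of_comap_eq (congrArg PrimeSpectrum.asIdeal h))
  · exact exists_isMissed_le_comap hG hbir (hp.trans_lt (Nat.one_lt_ofNat.trans_le hlarge))

lemma exists_basicOpen_subset_of_isConstructible {R : Type*} [CommRing R] [IsDomain R]
    {s : Set (PrimeSpectrum R)} (hs : Topology.IsConstructible s) (hbot : ⊥ ∈ s) :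
    ∃ f : R, f ≠ 0 ∧ (PrimeSpectrum.basicOpen f : Set (PrimeSpectrum R)) ⊆ s := by
  obtain ⟨C, rfl⟩ := PrimeSpectrum.exists_constructibleSetData_iff.2 hs
  simp only [PrimeSpectrum.ConstructibleSetData.toSet, Set.mem_iUnion] at hbot ⊢
  obtain ⟨c, hc, hzero, hf⟩ := hbot
  refine ⟨c.f, fun h ↦ hf (by simp [h]), fun P hP ↦ Set.mem_biUnion hc ⟨fun x hx ↦ ?_, ?_⟩⟩
  · obtain rfl : x = 0 := hzero hx
    exact P.asIdeal.zero_mem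
  · exact fun h ↦ hP (h rfl)

lemma finite_setOf_height_eq_one_and_mem {R : Type*} [CommRing R] [IsDomain R]
    [IsNoetherianRing R] {f : R} (hf : f ≠ 0) :
    {P : PrimeSpectrum R | P.asIdeal.height = 1 ∧ f ∈ P.asIdeal}.Finite := by
  have injective_asIdeal : Function.Injective (PrimeSpectrum.asIdeal (R := R)) :=
    fun _ _ ↦ PrimeSpectrum.ext
  refine ((Ideal.finite_minimalPrimes_of_isNoetherianRing R (Ideal.span {f})).preimage
    injective_asIdeal.injOn).subset fun P ⟨hP1, hfP⟩ ↦ ?_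
  refine Ideal.mem_minimalPrimes_of_height_le ((Ideal.span_singleton_le_iff_mem _).2 hfP) ?_
  rwa [hP1, Order.one_le_iff_ne_zero, Ne, Ideal.height_eq_zero_iff_eq_bot,
    Ideal.span_singleton_eq_bot]

lemma finite_setOf_isMissed_comap {R S : Type*} [CommRing R] [IsDomain R] [IsNoetherianRing R]
    [CommRing S] {f : R →+* S} (hf : Function.Injective f) (hft : f.FiniteType) :
    {P | IsMissed (·.asIdeal.height) (PrimeSpectrum.comap f) P}.Finite := by
  have hfp : f.FinitePresentation := RingHom.FinitePresentation.of_finiteType.1 hft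
  have hbot : ⊥ ∈ Set.range (PrimeSpectrum.comap f) := by
    refine (PrimeSpectrum.denseRange_comap_iff_minimalPrimes f).1
      ((PrimeSpectrum.denseRange_comap_iff_ker_le_nilRadical f).2 ?_) ⊥ ?_
    · rw [(RingHom.injective_iff_ker_eq_bot f).1 hf]
      exact bot_le
    · rw [IsDomain.minimalPrimes_eq_singleton_bot]
      rfl
  obtain ⟨x, hx, hsub⟩ := exists_basicOpen_subset_of_isConstructible
    (PrimeSpectrum.isConstructible_range_comap hfp) hbot
  exact (finite_setOf_height_eq_one_and_mem hx).subset fun P ⟨hP1, hP⟩ ↦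
    ⟨hP1, not_not.1 fun hxP ↦ hP (hsub hxP)⟩

section Birational

open TensorProduct

lemma exists_algebraMap_mul_eq_of_tmul_one_eq_one_tmul {A S : Type*} [CommRing A] [CommRing S]
    [IsDomain S] [Algebra A S] [FaithfulSMul A S] {x : S} (hx : x ⊗ₜ[A] (1 : S) = 1 ⊗ₜ x) :
    ∃ c ≠ 0, ∃ a : A, algebraMap A S c * x = algebraMap A S a := by
  have := (FaithfulSMul.algebraMap_injective A S).isDomain
  let K := FractionRing A
  let L := FractionRing S
  have : FaithfulSMul A L := .trans A S L
  let := FractionRing.liftAlgebra A L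
  let toTensor : S ⊗[A] S →ₐ[A] L ⊗[K] L :=
    (Algebra.TensorProduct.mapOfCompatibleSMul K A A L L).comp
      (Algebra.TensorProduct.map (IsScalarTower.toAlgHom A S L) (IsScalarTower.toAlgHom A S L))
  have hxL : algebraMap S L x ⊗ₜ[K] (1 : L) = 1 ⊗ₜ algebraMap S L x := by
    simpa [toTensor] using congrArg toTensor hx
  obtain ⟨y, hy⟩ := (Algebra.IsEffective.of_faithfullyFlat K L (algebraMap S L x)).1
    (sub_eq_zero.2 hxL)
  obtain ⟨a, c, hc, rfl⟩ := IsFractionRing.div_surjective (A := A) y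
  have hcL : algebraMap A L c ≠ 0 := by
    simpa using nonZeroDivisors.ne_zero hc
  refine ⟨c, nonZeroDivisors.ne_zero hc, a, IsFractionRing.injective S L ?_⟩
  rw [Algebra.linearMap_apply, map_div₀, ← IsScalarTower.algebraMap_apply,
    ← IsScalarTower.algebraMap_apply, div_eq_iff hcL] at hy
  rw [map_mul, ← IsScalarTower.algebraMap_apply, ← IsScalarTower.algebraMap_apply, hy, mul_comm]

lemma exists_mem_mul_mem_of_mem_span_includeLeftSubRight {k S : Type*} [CommRing k] [CommRing S]
    [IsDomain S] [Algebra k S] {A : Subalgebra k S} {x : S}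
    (hx : Algebra.TensorProduct.includeLeftSubRight k S x ∈
      Ideal.span (Algebra.TensorProduct.includeLeftSubRight k S '' A)) :
    ∃ c ∈ A, c ≠ 0 ∧ c * x ∈ A := by
  let toTensor : S ⊗[k] S →ₐ[k] S ⊗[A] S := Algebra.TensorProduct.mapOfCompatibleSMul A k k S S
  have toTensor_apply (s : S) : toTensor (Algebra.TensorProduct.includeLeftSubRight k S s) =
      Algebra.TensorProduct.includeLeftSubRight A S s := by
    simp [toTensor]
  have hker : Ideal.span (Algebra.TensorProduct.includeLeftSubRight k S '' A) ≤
      RingHom.ker toTensor := by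
    rw [Ideal.span_le, Set.image_subset_iff]
    intro a ha
    rw [Set.mem_preimage, SetLike.mem_coe, RingHom.mem_ker, toTensor_apply]
    exact Algebra.TensorProduct.includeLeftSubRight_algebraMap_zero (⟨a, ha⟩ : A)
  have hx0 : Algebra.TensorProduct.includeLeftSubRight A S x = 0 := toTensor_apply x ▸ hker hx
  obtain ⟨c, hc, a, h⟩ := exists_algebraMap_mul_eq_of_tmul_one_eq_one_tmul (sub_eq_zero.1 hx0)
  exact ⟨c, c.2, Subtype.coe_ne_coe.2 hc, h ▸ a.2⟩

lemma exists_forall_mem_exists_mul_mem_of_monotone {k S : Type*} [CommRing k] [CommRing S]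
    [IsDomain S] [Algebra k S] [IsNoetherianRing (S ⊗[k] S)] {A : ℕ → Subalgebra k S}
    (hA : Monotone A) : ∃ n, ∀ m, n ≤ m → ∀ x ∈ A m, ∃ c ∈ A n, c ≠ 0 ∧ c * x ∈ A n := by
  let I : ℕ →o Ideal (S ⊗[k] S) :=
    { toFun n := Ideal.span (Algebra.TensorProduct.includeLeftSubRight k S '' A n)
      monotone' := fun _ _ h ↦ Ideal.span_mono (Set.image_mono (hA h)) }
  obtain ⟨n, hn⟩ := monotone_stabilizes_iff_noetherian.2 ‹_› I
  refine ⟨n, fun m hm x hx ↦ exists_mem_mul_mem_of_mem_span_includeLeftSubRight ?_⟩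
  change _ ∈ I n
  rw [hn m hm]
  exact Ideal.subset_span (Set.mem_image_of_mem _ hx)

end Birational

section Intertwining

open TensorProduct

variable {k R S : Type*} [CommRing k] [CommRing R] [Algebra k R] [CommRing S] [Algebra k S]
  {ι : R →ₐ[k] S} {F : S →ₐ[k] S} {G : R →ₐ[k] R}

lemma isIsoOver_bot_of_semiconj [IsDomain S] [IsNoetherianRing (S ⊗[k] S)]
    (hι : Function.Injective ι) (hF : Function.Bijective F) (hcomm : Function.Semiconj ι G F) :
    IsIsoOver (G : R →+* R) ⊥ := by
  intro b
  let A (n : ℕ) : Subalgebra k S := ι.range.comap (F ^ n)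
  have mem_A {n : ℕ} {s : S} : s ∈ A n ↔ ∃ r, ι r = F^[n] s := by
    rw [← AlgHom.coe_pow]
    rfl
  have hA : Monotone A := monotone_nat_of_le_succ fun n s hs ↦ by
    obtain ⟨r, hr⟩ := mem_A.1 hs
    exact mem_A.2 ⟨G r, by rw [hcomm, hr, Function.iterate_succ_apply']⟩
  obtain ⟨n, hn⟩ := exists_forall_mem_exists_mul_mem_of_monotone hA
  obtain ⟨x, hx⟩ := hF.surjective.iterate (n + 1) (ι b)
  obtain ⟨s, hs, hs0, hsx⟩ := hn (n + 1) n.le_succ x (mem_A.2 ⟨b, hx.symm⟩)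
  obtain ⟨c, hc⟩ := mem_A.1 hs
  obtain ⟨a, ha⟩ := mem_A.1 hsx
  refine ⟨c, fun hc0 ↦ hs0 (hF.injective.iterate n ?_), a, hι ?_⟩
  · rw [← hc, (hc0 : c = 0), map_zero, iterate_map_zero]
  · rw [AlgHom.coe_toRingHom, map_mul, hcomm, hcomm, hc, ha, ← hx, iterate_map_mul,
      Function.iterate_succ_apply', map_mul]

lemma finite_setOf_exists_notMem_range_iterate_comap [IsDomain R] [IsNoetherianRing R]
    [Algebra.FiniteType k S] (hι : Function.Injective ι) (hF : Function.Bijective F)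
    (hcomm : Function.Semiconj ι G F) :
    {P : PrimeSpectrum R | P.asIdeal.height = 1 ∧
      ∃ n, P ∉ Set.range (PrimeSpectrum.comap (G : R →+* R))^[n]}.Finite := by
  have hιft : (ι : R →+* S).FiniteType := by
    refine RingHom.FiniteType.of_comp_finiteType (f := algebraMap k R) ?_
    rw [AlgHom.comp_algebraMap]
    exact RingHom.finiteType_algebraMap.2 ‹_›
  have hsemi : Function.Semiconj (PrimeSpectrum.comap (ι : R →+* S))
      (PrimeSpectrum.comap (F : S →+* S)) (PrimeSpectrum.comap (G : R →+* R)) := fun Q ↦ by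
    rw [← PrimeSpectrum.comap_comp_apply, ← PrimeSpectrum.comap_comp_apply]
    exact congrArg (PrimeSpectrum.comap · Q) (RingHom.ext fun r ↦ (hcomm r).symm)
  have hFspec : Function.Surjective (PrimeSpectrum.comap (F : S →+* S)) :=
    (PrimeSpectrum.comapEquiv (RingEquiv.ofBijective F hF)).symm.surjective
  refine (finite_setOf_isMissed_comap hι hιft).subset fun P ⟨hP1, n, hPn⟩ ↦ ⟨hP1, ?_⟩
  rintro ⟨Q, rfl⟩
  obtain ⟨Q', rfl⟩ := hFspec.iterate n Q
  exact hPn ⟨PrimeSpectrum.comap ι Q', (hsemi.iterate_right n Q').symm⟩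

theorem exists_invariant_exceptional_divisor_of_not_bijective_general [IsDomain R]
    [IsNoetherianRing R] [IsIntegrallyClosed R] [IsDomain S] [IsNoetherianRing S]
    [Algebra.FiniteType k S] (hι : Function.Injective ι) (hF : Function.Bijective F)
    (hcomm : Function.Semiconj ι G F) (hG : ¬ Function.Bijective G) :
    ∃ m : ℕ, 1 ≤ m ∧ ∃ p : Ideal R, p.IsPrime ∧ p.height = 1 ∧
      2 ≤ (p.comap (G ^ m)).height ∧ p.map (G ^ m) ≤ p := by
  have := Algebra.FiniteType.isNoetherianRing S (S ⊗[k] S)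
  have hinj : Function.Injective (G : R →+* R) := by
    refine .of_comp (f := ι) ?_
    rw [AlgHom.coe_toRingHom, hcomm.comp_eq]
    exact hF.injective.comp hι
  obtain ⟨P, hP1, m, hm, hlarge, hle⟩ := exists_height_eq_one_le_iterate_comap hinj
    (isIsoOver_bot_of_semiconj hι hF hcomm) (fun hsurj ↦ hG ⟨hinj, hsurj⟩)
    (finite_setOf_exists_notMem_range_iterate_comap hι hF hcomm)
  have hiter : ((PrimeSpectrum.comap (G : R →+* R))^[m] P).asIdeal = P.asIdeal.comap (G ^ m) := by
    ext r
    rw [asIdeal_iterate_comap, Ideal.mem_comap, Ideal.mem_comap, RingHom.coe_pow, AlgHom.coe_pow,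
      AlgHom.coe_toRingHom]
  rw [hiter] at hlarge
  exact ⟨m, hm, P.asIdeal, P.isPrime, hP1, hlarge, Ideal.map_le_iff_le_comap.2 (hiter ▸ hle)⟩

end Intertwining

lemma heightOf_eq_height_s13 {R : Type*} [CommRing R] (p : Ideal R) [hp : p.IsPrime] :
    p.heightOf = p.height := by
  rw [PrimeSpectrum.height_eq_orderHeight ⟨p, hp⟩]
  exact le_antisymm (iInf₂_le (⟨p, hp⟩ : PrimeSpectrum R) le_rfl)
    (le_iInf₂ fun q hq ↦ Order.height_mono hq)

/-- Corollary 2.4.  Let `R`, `S` be affine domains over `ℂ`, `ι : R → S` an injective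
`ℂ`-algebra homomorphism, `R` integrally closed in its fraction field, `F : S → S` a
bijective `ℂ`-algebra homomorphism and `G : R → R` a `ℂ`-algebra homomorphism with
`ι ∘ G = F ∘ ι`.  If `G` is not bijective, then for some `m ≥ 1` there is a height-one
prime `p` of `R` with `height (G^m)⁻¹(p) ≥ 2` and `G^m(p) ⊆ p`: an exceptional divisor
`D ⊂ Spec R` for `g^m` with `g^m(D) ⊆ D`. -/
theorem exists_invariant_exceptional_divisor_of_not_bijective
    {R S : Type*} [CommRing R] [IsDomain R] [CommRing S] [IsDomain S]
    [Algebra ℂ R] [Algebra ℂ S] [Algebra.FiniteType ℂ R] [Algebra.FiniteType ℂ S]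
    [IsIntegrallyClosed R]
    (ι : R →ₐ[ℂ] S) (hι : Function.Injective ι)
    (F : S →ₐ[ℂ] S) (hF : Function.Bijective F)
    (G : R →ₐ[ℂ] R) (hcomm : ∀ r, ι (G r) = F (ι r))
    (hG : ¬ Function.Bijective G) :
    ∃ m : ℕ, 1 ≤ m ∧ ∃ p : Ideal R, p.IsPrime ∧ p.heightOf = 1 ∧
      2 ≤ (Ideal.comap (G ^ m) p).heightOf ∧ Ideal.map (G ^ m) p ≤ p := by
  have := Algebra.FiniteType.isNoetherianRing ℂ R
  have := Algebra.FiniteType.isNoetherianRing ℂ S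
  obtain ⟨m, hm, p, hp, hp1, hlarge, hle⟩ :=
    exists_invariant_exceptional_divisor_of_not_bijective_general hι hF hcomm hG
  exact ⟨m, hm, p, hp, by rwa [heightOf_eq_height_s13], by rwa [heightOf_eq_height_s13], hle⟩
end

section
/- Let k be a field of characteristic 0, let A = k[x,y] be the polynomial ring in two variables, and let S be the localization of A away from x (so S = k[x, x⁻¹, y]), with A identified with its image R in S. There is a k-algebra automorphism F of S determined by F(x) = x and F(y) = x·y; it satisfies F(R) ⊆ R, but the restriction of F to R is an injective k-algebra endomorphism of R that is not surjective (hence not an automorphism of R). In particular, the element x of R is invertible in S but not in R. -/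
/-!
Scaling `y` by the unit `x` is invertible on `S = k[x, x⁻¹, y]`, with inverse scaling by `x⁻¹`.
It maps `R = k[x, y]` onto `k[x, x * y]`, whose elements are constant on the line `x = 0`;
hence `y` is not in the image of `R`.
-/

/-- The polynomial ring `A = k[x,y]` in two variables. -/
abbrev CounterexamplePolyRing (k : Type*) [Field k] := MvPolynomial (Fin 2) k

/-- The localization `S = k[x, x⁻¹, y]` of `k[x,y]` away from `x`. -/
abbrev CounterexampleLocRing (k : Type*) [Field k] :=
  Localization.Away (MvPolynomial.X 0 : CounterexamplePolyRing k)

/-- The image `R` of `A = k[x,y]` in `S = k[x, x⁻¹, y]`. -/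
noncomputable abbrev CounterexampleSubring (k : Type*) [Field k] :
    Subalgebra k (CounterexampleLocRing k) :=
  (IsScalarTower.toAlgHom k (CounterexamplePolyRing k) (CounterexampleLocRing k)).range

theorem surjective_of_semiconj_of_surjOn_range {α β : Type*} {f : α → β} {φ : α → α}
    {g : β → β} (hf : Function.Injective f) (hg : Function.Semiconj f φ g)
    (hsurj : Set.SurjOn g (Set.range f) (Set.range f)) : Function.Surjective φ := by
  intro a
  obtain ⟨_, ⟨b, rfl⟩, hb⟩ := hsurj (Set.mem_range_self a)
  exact ⟨b, hf ((hg b).trans hb)⟩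

theorem isUnit_range_mk_iff {R A B : Type*} [CommSemiring R] [Semiring A] [Semiring B]
    [Algebra R A] [Algebra R B] {f : A →ₐ[R] B} (hf : Function.Injective f) {a : A}
    (ha : f a ∈ f.range) : IsUnit (⟨f a, ha⟩ : f.range) ↔ IsUnit a :=
  isUnit_map_iff (AlgEquiv.ofInjective f hf) a

section Scaling

open MvPolynomial

section Polynomial

variable {σ k : Type*} [CommSemiring k]

theorem not_isUnit_mvPolynomial_X [Nontrivial k] (i : σ) :
    ¬ IsUnit (X i : MvPolynomial σ k) := fun h =>
  not_isUnit_zero (constantCoeff_X (R := k) i ▸ h.map constantCoeff)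

/-- The endomorphism of the polynomial ring that scales each variable `X l` by `X i ^ e l`. -/
noncomputable def scaleVars (k : Type*) [CommSemiring k] (i : σ) (e : σ → ℕ) :
    MvPolynomial σ k →ₐ[k] MvPolynomial σ k :=
  aeval fun l => X i ^ e l * X l

theorem aeval_scaleVars {B : Type*} [CommSemiring B] [Algebra k B] (b : σ → B) (i : σ)
    (e : σ → ℕ) (p : MvPolynomial σ k) :
    aeval b (scaleVars k i e p) = aeval (fun l => b i ^ e l * b l) p := by
  rw [scaleVars, comp_aeval_apply]
  simp only [map_mul, map_pow, aeval_X]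

theorem X_notMem_range_scaleVars [Nontrivial k] {i j : σ} (hij : i ≠ j) {e : σ → ℕ}
    (he : e j ≠ 0) : X j ∉ (scaleVars k i e).range := by
  classical
  rintro ⟨p, hp : scaleVars k i e p = X j⟩
  have scaled_point (c : k) : (fun l => (Pi.single j c : σ → k) i ^ e l *
      (Pi.single j c : σ → k) l) = 0 := by
    funext l
    rcases eq_or_ne l j with rfl | hl
    · simp [hij, he]
    · simp [hl]
  have const (c : k) : c = aeval (0 : σ → k) p := calc
    c = aeval (Pi.single j c) (X j : MvPolynomial σ k) := by simp
    _ = aeval (0 : σ → k) p := by rw [← hp, aeval_scaleVars, scaled_point]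
  exact zero_ne_one ((const 0).trans (const 1).symm)

end Polynomial

section Away

variable {σ : Type*} (k S : Type*) [CommSemiring k] [CommSemiring S]
  [Algebra (MvPolynomial σ k) S] (i : σ) [IsLocalization.Away (X i : MvPolynomial σ k) S]

include i in
theorem algebraMap_injective_of_away_X : Function.Injective (algebraMap (MvPolynomial σ k) S) :=
  IsLocalization.injectiveₛ (M := Submonoid.powers (X i)) S <| by
    rintro _ ⟨n, rfl⟩
    exact isRegular_X_pow n

/-- The variable `X i` as a unit of a localization `S` away from it. -/
noncomputable def unitX : Sˣ :=
  (IsLocalization.Away.algebraMap_isUnit (S := S) (X i : MvPolynomial σ k)).unit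

@[simp]
theorem coe_unitX : (unitX k S i : S) = algebraMap (MvPolynomial σ k) S (X i) :=
  IsUnit.unit_spec _

variable [Algebra k S] [IsScalarTower k (MvPolynomial σ k) S]

/-- The endomorphism of a localization of the polynomial ring away from `X i` that scales each
variable `X l` by `X i ^ e l`; exponents may be negative, as `X i` is invertible. -/
noncomputable def awayScaleVars (e : σ → ℤ) : S →ₐ[k] S :=
  IsLocalization.Away.liftAlgHom (X i)
    (f := aeval fun l => ↑(unitX k S i ^ e l) * algebraMap (MvPolynomial σ k) S (X l)) <| by
      rw [aeval_X, ← coe_unitX, ← Units.val_mul]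
      exact Units.isUnit _

variable {k S i}

@[simp]
theorem awayScaleVars_X (e : σ → ℤ) (l : σ) :
    awayScaleVars k S i e (algebraMap (MvPolynomial σ k) S (X l)) =
      ↑(unitX k S i ^ e l) * algebraMap (MvPolynomial σ k) S (X l) := by
  simp [awayScaleVars]

variable (i) in
include i in
theorem algHom_ext_of_away_X {B : Type*} [Semiring B] [Algebra k B] {f g : S →ₐ[k] B}
    (h : ∀ l, f (algebraMap (MvPolynomial σ k) S (X l)) =
      g (algebraMap (MvPolynomial σ k) S (X l))) : f = g :=
  IsLocalization.algHom_ext (Submonoid.powers (X i : MvPolynomial σ k))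
    (MvPolynomial.algHom_ext h)

theorem awayScaleVars_unitX_zpow {e : σ → ℤ} (he : e i = 0) (n : ℤ) :
    awayScaleVars k S i e ↑(unitX k S i ^ n) = ↑(unitX k S i ^ n) := by
  have fixes_unitX : Units.map (awayScaleVars k S i e : S →* S) (unitX k S i) =
      unitX k S i := by
    ext
    simp [he]
  calc awayScaleVars k S i e ↑(unitX k S i ^ n)
    _ = ↑(Units.map (awayScaleVars k S i e : S →* S) (unitX k S i ^ n)) := rfl
    _ = ↑(unitX k S i ^ n) := by rw [map_zpow, fixes_unitX]

theorem awayScaleVars_comp {d : σ → ℤ} (hd : d i = 0) (e : σ → ℤ) :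
    (awayScaleVars k S i d).comp (awayScaleVars k S i e) = awayScaleVars k S i (d + e) :=
  algHom_ext_of_away_X i fun l => by
    rw [AlgHom.comp_apply, awayScaleVars_X, map_mul, awayScaleVars_unitX_zpow hd,
      awayScaleVars_X, awayScaleVars_X, Pi.add_apply, add_comm, zpow_add, Units.val_mul, mul_assoc]

theorem awayScaleVars_zero : awayScaleVars k S i 0 = AlgHom.id k S :=
  algHom_ext_of_away_X i fun l => by simp

variable (k S) in
/-- The scaling `awayScaleVars` as an automorphism, when it fixes the inverted variable. -/
noncomputable def awayScaleVarsEquiv (e : σ → ℤ) (he : e i = 0) : S ≃ₐ[k] S :=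
  AlgEquiv.ofAlgHom (awayScaleVars k S i e) (awayScaleVars k S i (-e))
    (by rw [awayScaleVars_comp he, add_neg_cancel, awayScaleVars_zero])
    (by rw [awayScaleVars_comp (by simp [he]), neg_add_cancel, awayScaleVars_zero])

theorem semiconj_algebraMap_scaleVars (e : σ → ℕ) :
    Function.Semiconj (IsScalarTower.toAlgHom k (MvPolynomial σ k) S) (scaleVars k i e)
      (awayScaleVars k S i fun l => e l) := by
  have comp_eq : (IsScalarTower.toAlgHom k (MvPolynomial σ k) S).comp (scaleVars k i e) =
      (awayScaleVars k S i fun l => e l).comp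
        (IsScalarTower.toAlgHom k (MvPolynomial σ k) S) :=
    MvPolynomial.algHom_ext fun l => by simp [scaleVars]
  exact DFunLike.congr_fun comp_eq

end Away

theorem counterexample_subring_not_automorphism_general {σ k : Type*} [CommSemiring k]
    [Nontrivial k] {i j : σ} (hij : i ≠ j) (S : Type*) [CommSemiring S] [Algebra k S]
    [Algebra (MvPolynomial σ k) S] [IsScalarTower k (MvPolynomial σ k) S]
    [IsLocalization.Away (X i : MvPolynomial σ k) S] :
    let ι := IsScalarTower.toAlgHom k (MvPolynomial σ k) S
    ∃ F : S ≃ₐ[k] S,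
      (∀ l ≠ j, F (ι (X l)) = ι (X l)) ∧
      F (ι (X j)) = ι (X i * X j) ∧
      (∃ hF : Set.MapsTo F ι.range ι.range,
        Function.Injective (hF.restrict F ι.range ι.range) ∧
        ¬ Function.Surjective (hF.restrict F ι.range ι.range)) ∧
      IsUnit (ι (X i)) ∧
      ∀ hx : ι (X i) ∈ ι.range, ¬ IsUnit (⟨ι (X i), hx⟩ : ι.range) := by
  classical
  intro ι
  let e : σ → ℕ := Pi.single j 1
  let F : S ≃ₐ[k] S := awayScaleVarsEquiv k S (i := i) (fun l => e l) (by simp [e, hij])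
  have hι : Function.Injective ι := algebraMap_injective_of_away_X k S i
  have hF : Function.Semiconj ι (scaleVars k i e) F := semiconj_algebraMap_scaleVars e
  have hF_X (l : σ) : F (ι (X l)) = ι (X i ^ e l * X l) :=
    (hF (X l)).symm.trans (by simp [scaleVars, ι])
  have hFR : Set.MapsTo F ι.range ι.range := hF.mapsTo_range
  refine ⟨F, fun l hl => by simp [hF_X, e, hl], by simp [hF_X, e], ⟨hFR, ?_, ?_⟩,
    IsLocalization.Away.algebraMap_isUnit _, fun hx => ?_⟩
  · exact hFR.restrict_inj.mpr F.injective.injOn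
  · rw [hFR.restrict_surjective_iff]
    intro hsurj
    exact X_notMem_range_scaleVars hij (by simp [e])
      (surjective_of_semiconj_of_surjOn_range hι hF hsurj (X j))
  · rw [isUnit_range_mk_iff hι]
    exact not_isUnit_mvPolynomial_X i

end Scaling

/-- The counterexample: let `k` be a field of characteristic 0, `A = k[x,y]`,
`S = k[x,x⁻¹,y]` the localization of `A` away from `x`, and `R` the image of `A` in
`S`.  There is a `k`-algebra automorphism `F` of `S` with `F(x) = x` and `F(y) = x·y`;
it maps `R` into `R`, but its restriction to `R` is an injective `k`-algebra
endomorphism of `R` which is not surjective.  In particular `x ∈ R` is invertible in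
`S` but not in `R`. -/
theorem counterexample_subring_not_automorphism (k : Type*) [Field k] [CharZero k] :
    ∃ F : CounterexampleLocRing k ≃ₐ[k] CounterexampleLocRing k,
      F (algebraMap (CounterexamplePolyRing k) (CounterexampleLocRing k)
          (MvPolynomial.X 0)) =
        algebraMap (CounterexamplePolyRing k) (CounterexampleLocRing k)
          (MvPolynomial.X 0) ∧
      F (algebraMap (CounterexamplePolyRing k) (CounterexampleLocRing k)
          (MvPolynomial.X 1)) =
        algebraMap (CounterexamplePolyRing k) (CounterexampleLocRing k)
          (MvPolynomial.X 0 * MvPolynomial.X 1) ∧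
      (∃ hFR : ∀ a ∈ CounterexampleSubring k, F a ∈ CounterexampleSubring k,
        Function.Injective (fun r : ↥(CounterexampleSubring k) =>
          (⟨F r.1, hFR r.1 r.2⟩ : ↥(CounterexampleSubring k))) ∧
        ¬ Function.Surjective (fun r : ↥(CounterexampleSubring k) =>
          (⟨F r.1, hFR r.1 r.2⟩ : ↥(CounterexampleSubring k)))) ∧
      IsUnit (algebraMap (CounterexamplePolyRing k) (CounterexampleLocRing k)
        (MvPolynomial.X 0)) ∧
      ∀ hx : algebraMap (CounterexamplePolyRing k) (CounterexampleLocRing k)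
          (MvPolynomial.X 0) ∈ CounterexampleSubring k,
        ¬ IsUnit (⟨algebraMap (CounterexamplePolyRing k) (CounterexampleLocRing k)
            (MvPolynomial.X 0), hx⟩ : ↥(CounterexampleSubring k)) := by
  obtain ⟨F, hF_fix, hF⟩ := counterexample_subring_not_automorphism_general (k := k)
    (zero_ne_one' (Fin 2)) (CounterexampleLocRing k)
  exact ⟨F, hF_fix 0 zero_ne_one, hF⟩
end

section
/- Let k be a field of characteristic 0, let A = k[x,y], let S be the localization of A away from x (so S = k[x, x⁻¹, y]), and let R' be the subring of A consisting of all polynomials p with p(0,0) = p(1,1), viewed as a subring of S. Let F be the k-algebra automorphism of S determined by F(x) = x and F(y) = x·y. Then: F(R') ⊆ R'; every ideal of height 1 in R' generates a proper ideal in S; but the restriction of F to R' is not a surjective map R' → R' (hence not an automorphism). (Thus the hypothesis that the variety Spec R' has no selfintersection points cannot be dropped from the main theorem: R' is the coordinate ring of the plane with the points (0,0) and (1,1) identified, which has a selfintersection point.) -/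
/-- The polynomial ring `A = k[x,y]` in two variables. -/
abbrev SelfintPolyRing (k : Type*) [Field k] := MvPolynomial (Fin 2) k

/-- The localization `S = k[x, x⁻¹, y]` of `k[x,y]` away from `x`. -/
abbrev SelfintLocRing (k : Type*) [Field k] :=
  Localization.Away (MvPolynomial.X 0 : SelfintPolyRing k)

/-- The subring `R' = {p ∈ k[x,y] : p(0,0) = p(1,1)}` of `k[x,y]`, viewed inside
`S = k[x, x⁻¹, y]`.  It is the coordinate ring of the plane with the points `(0,0)` and
`(1,1)` identified, a variety with a selfintersection point. -/
noncomputable abbrev SelfintSubring (k : Type*) [Field k] :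
    Subalgebra k (SelfintLocRing k) :=
  (AlgHom.equalizer
      (MvPolynomial.aeval (fun _ : Fin 2 => (0 : k)))
      (MvPolynomial.aeval (fun _ : Fin 2 => (1 : k)))).map
    (IsScalarTower.toAlgHom k (SelfintPolyRing k) (SelfintLocRing k))

open MvPolynomial

namespace Selfintersection

section Height

variable {R : Type*} [CommRing R]

theorem exists_prime_height_le_of_heightOf_le {I : Ideal R} {n : ℕ} (hI : I.heightOf ≤ n) :
    ∃ p : PrimeSpectrum R, I ≤ p.asIdeal ∧ Order.height p ≤ n := by
  have hlt : I.heightOf < n + 1 := ENat.lt_natCast_add_one_iff.2 hI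
  simp only [Ideal.heightOf, iInf_lt_iff] at hlt
  obtain ⟨p, hIp, hp⟩ := hlt
  exact ⟨p, hIp, ENat.lt_natCast_add_one_iff.1 hp⟩

theorem eq_of_le_of_height_le_one [IsDomain R] {q p : PrimeSpectrum R} (hq : q.asIdeal ≠ ⊥)
    (hqp : q ≤ p) (hp : Order.height p ≤ 1) : q = p := by
  refine hqp.eq_of_not_lt fun hlt => hq ?_
  have hfin : Order.height q < ⊤ :=
    (Order.height_mono hqp).trans_lt (hp.trans_lt (ENat.natCast_lt_top 1))
  have hq₀ : Order.height q = 0 :=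
    Order.lt_one_iff.1 ((Order.height_strictMono hlt hfin).trans_le hp)
  have hbot : (⟨⊥, Ideal.isPrime_bot⟩ : PrimeSpectrum R) ≤ q := bot_le (a := q.asIdeal)
  exact le_bot_iff.1 (Order.height_eq_zero.1 hq₀ hbot)

end Height

section Denominators

variable {R S : Type*} [CommRing R] [CommRing S] [Algebra R S]

theorem exists_pow_mul_eq_of_mem_map {g : R} {I : Ideal R} {s : S}
    (hg : ∀ s : S, ∃ (n : ℕ) (r : R), algebraMap R S r = algebraMap R S g ^ n * s)
    (hs : s ∈ I.map (algebraMap R S)) :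
    ∃ (n : ℕ), ∃ r ∈ I, algebraMap R S r = algebraMap R S g ^ n * s := by
  induction hs using Submodule.span_induction with
  | mem s hs =>
    obtain ⟨r, hr, rfl⟩ := hs
    exact ⟨0, r, hr, by simp⟩
  | zero => exact ⟨0, 0, I.zero_mem, by simp⟩
  | add s t _ _ ihs iht =>
    obtain ⟨n, r, hr, hrs⟩ := ihs
    obtain ⟨m, r', hr', hrt⟩ := iht
    refine ⟨n + m, g ^ m * r + g ^ n * r',
      I.add_mem (I.mul_mem_left _ hr) (I.mul_mem_left _ hr'), ?_⟩
    simp only [map_add, map_mul, map_pow, hrs, hrt]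
    ring
  | smul t s _ ih =>
    obtain ⟨n, r, hr, hrs⟩ := ih
    obtain ⟨m, r', hrt⟩ := hg t
    refine ⟨m + n, r' * r, I.mul_mem_left _ hr, ?_⟩
    rw [map_mul, hrt, hrs, smul_eq_mul]
    ring

theorem mem_radical_of_map_eq_top [FaithfulSMul R S] {g : R} {I : Ideal R}
    (hg : ∀ s : S, ∃ (n : ℕ) (r : R), algebraMap R S r = algebraMap R S g ^ n * s)
    (hI : I.map (algebraMap R S) = ⊤) : g ∈ I.radical := by
  obtain ⟨n, r, hr, hrg⟩ := exists_pow_mul_eq_of_mem_map hg ((Ideal.eq_top_iff_one _).1 hI)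
  have hgr : r = g ^ n := FaithfulSMul.algebraMap_injective R S (by rw [hrg, mul_one, map_pow])
  exact ⟨n, hgr ▸ hr⟩

theorem map_ne_top_of_heightOf_le_one [IsDomain R] [FaithfulSMul R S] {q : Ideal R} [q.IsPrime]
    (hq : q ≠ ⊥)
    (hclear : ∀ g ∈ q, ∀ s : S, ∃ (n : ℕ) (r : R), algebraMap R S r = algebraMap R S g ^ n * s)
    (hqS : q.map (algebraMap R S) ≠ ⊤) {I : Ideal R} (hI : I.heightOf ≤ 1) :
    I.map (algebraMap R S) ≠ ⊤ := by
  intro hIS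
  obtain ⟨p, hIp, hp⟩ := exists_prime_height_le_of_heightOf_le (n := 1) (by exact_mod_cast hI)
  have hpS : p.asIdeal.map (algebraMap R S) = ⊤ := top_le_iff.1 (hIS ▸ Ideal.map_mono hIp)
  have hqp : q ≤ p.asIdeal := fun g hg =>
    p.isPrime.radical ▸ mem_radical_of_map_eq_top (hclear g hg) hpS
  have heq : q = p.asIdeal := congrArg PrimeSpectrum.asIdeal <|
    eq_of_le_of_height_le_one (q := ⟨q, ‹_›⟩) hq hqp (by exact_mod_cast hp)
  exact hqS (heq ▸ hpS)

end Denominators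

section Gluing

variable {R A S K : Type*} [CommRing R] [CommRing A] [CommRing S] [CommRing K]
  [Algebra R A] {φ ψ : A →+* K} {x : A}

theorem map_cofactor_eq_zero (hR : (algebraMap R A).range ≤ φ.eqLocus ψ) (hφ : φ x = 0)
    (hψ : IsUnit (ψ x)) {g : R} {h : A} (hg : algebraMap R A g = x * h) : ψ h = 0 := by
  have hglue : φ (x * h) = ψ (x * h) := hR ⟨g, hg⟩
  rw [map_mul, map_mul, hφ, zero_mul] at hglue
  exact hψ.mul_right_eq_zero.1 hglue.symm

theorem under_span_ne_bot [IsDomain A] (hR : φ.eqLocus ψ ≤ (algebraMap R A).range)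
    (hx : x ≠ 0) (hφ : φ x = 0) (hψ : RingHom.ker ψ ≠ ⊥) : (Ideal.span {x}).under R ≠ ⊥ := by
  obtain ⟨h, hh, hh₀⟩ := Submodule.exists_mem_ne_zero_of_ne_bot hψ
  have hglue : φ (x * h) = ψ (x * h) := by
    rw [map_mul, map_mul, hφ, RingHom.mem_ker.1 hh, zero_mul, mul_zero]
  obtain ⟨g, hg⟩ := hR hglue
  refine Submodule.ne_bot_iff _ |>.2 ⟨g, Ideal.mem_span_singleton.2 ⟨h, hg⟩, ?_⟩
  rintro rfl
  exact mul_ne_zero hx hh₀ (by rw [← hg, map_zero])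

variable [Algebra A S] [Algebra R S] [IsScalarTower R A S] [IsLocalization.Away x S]

theorem exists_pow_mul_eq_of_mem_under_span (hR : (algebraMap R A).range = φ.eqLocus ψ)
    (hφ : φ x = 0) (hψ : IsUnit (ψ x)) {g : R} (hg : g ∈ (Ideal.span {x}).under R) (s : S) :
    ∃ (n : ℕ) (r : R), algebraMap R S r = algebraMap R S g ^ n * s := by
  obtain ⟨h, hgh⟩ := Ideal.mem_span_singleton.1 hg
  obtain ⟨n, a, ha⟩ := IsLocalization.Away.surj x s
  have hglue : x * h * (h ^ n * a) ∈ φ.eqLocus ψ := by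
    simp only [RingHom.mem_eqLocus, map_mul, hφ, map_cofactor_eq_zero hR.le hφ hψ hgh, zero_mul,
      mul_zero]
  obtain ⟨r, hr⟩ := hR.ge hglue
  refine ⟨n + 1, r, ?_⟩
  rw [IsScalarTower.algebraMap_apply R A S, IsScalarTower.algebraMap_apply R A S, hr, hgh]
  simp only [map_mul, map_pow, ← ha]
  ring

theorem map_under_span_ne_top [Nontrivial K] (hR : (algebraMap R A).range ≤ φ.eqLocus ψ)
    (hφ : φ x = 0) (hψ : IsUnit (ψ x)) :
    ((Ideal.span {x}).under R).map (algebraMap R S) ≠ ⊤ := by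
  have hle : ((Ideal.span {x}).under R).map (algebraMap R S) ≤
      RingHom.ker (IsLocalization.Away.lift (S := S) x hψ) := by
    refine Ideal.map_le_iff_le_comap.2 fun g hg => ?_
    obtain ⟨h, hgh⟩ := Ideal.mem_span_singleton.1 hg
    rw [Ideal.mem_comap, RingHom.mem_ker, IsScalarTower.algebraMap_apply R A S,
      IsLocalization.Away.lift_eq, hgh, map_mul, map_cofactor_eq_zero hR hφ hψ hgh, mul_zero]
  exact ne_top_of_le_ne_top (RingHom.ker_ne_top _) hle

theorem map_ne_top_of_range_eq_eqLocus [IsDomain A] [Nontrivial K] [FaithfulSMul R A]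
    (hR : (algebraMap R A).range = φ.eqLocus ψ) (hx : Prime x) (hφ : φ x = 0)
    (hψ : IsUnit (ψ x)) (hker : RingHom.ker ψ ≠ ⊥) {I : Ideal R} (hI : I.heightOf ≤ 1) :
    I.map (algebraMap R S) ≠ ⊤ := by
  have hRA : Function.Injective (algebraMap R A) := FaithfulSMul.algebraMap_injective R A
  have hAS : Function.Injective (algebraMap A S) :=
    IsLocalization.injective S (powers_le_nonZeroDivisors_of_noZeroDivisors hx.ne_zero)
  have : FaithfulSMul R S := (faithfulSMul_iff_algebraMap_injective R S).2 <| by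
    rw [IsScalarTower.algebraMap_eq R A S]
    exact hAS.comp hRA
  have : IsDomain R := hRA.isDomain
  have : (Ideal.span {x}).IsPrime := (Ideal.span_singleton_prime hx.ne_zero).2 hx
  exact map_ne_top_of_heightOf_le_one (under_span_ne_bot hR.ge hx.ne_zero hφ hker)
    (fun g hg => exists_pow_mul_eq_of_mem_under_span hR hφ hψ hg)
    (map_under_span_ne_top hR.le hφ hψ) hI

end Gluing

section Plane

variable (k : Type*) [Field k]

theorem algebraMap_locRing_injective :
    Function.Injective (algebraMap (SelfintPolyRing k) (SelfintLocRing k)) :=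
  IsLocalization.injective _ (powers_le_nonZeroDivisors_of_noZeroDivisors (X_ne_zero 0))

variable {k} in
theorem algebraMap_mem_subring_iff {a : SelfintPolyRing k} :
    algebraMap (SelfintPolyRing k) (SelfintLocRing k) a ∈ SelfintSubring k ↔
      aeval (fun _ : Fin 2 => (0 : k)) a = aeval (fun _ : Fin 2 => (1 : k)) a :=
  (algebraMap_locRing_injective k).mem_set_image

/-- The inclusion `R' → A`, which is not a coercion because `SelfintSubring` encodes `R'` as a
subring of `S`. -/
noncomputable def subringToPolyRing : SelfintSubring k →ₐ[k] SelfintPolyRing k :=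
  (Subalgebra.val _).comp
    (Subalgebra.equivMapOfInjective _ _ (algebraMap_locRing_injective k)).symm.toAlgHom

theorem algebraMap_subringToPolyRing (r : SelfintSubring k) :
    algebraMap (SelfintPolyRing k) (SelfintLocRing k) (subringToPolyRing k r) = r :=
  congrArg Subtype.val
    ((Subalgebra.equivMapOfInjective _ _ (algebraMap_locRing_injective k)).apply_symm_apply r)

theorem subringToPolyRing_injective : Function.Injective (subringToPolyRing k) := fun r r' h =>
  Subtype.ext <| by
    rw [← algebraMap_subringToPolyRing, ← algebraMap_subringToPolyRing, h]

theorem range_subringToPolyRing :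
    (subringToPolyRing k : SelfintSubring k →+* SelfintPolyRing k).range =
      (aeval fun _ : Fin 2 => (0 : k) : SelfintPolyRing k →ₐ[k] k).toRingHom.eqLocus
        (aeval fun _ : Fin 2 => (1 : k) : SelfintPolyRing k →ₐ[k] k).toRingHom := by
  ext a
  refine Iff.trans ⟨?_, fun ha => ?_⟩ algebraMap_mem_subring_iff
  · rintro ⟨r, rfl⟩
    exact (algebraMap_subringToPolyRing k r).symm ▸ r.2
  · exact ⟨⟨_, ha⟩, algebraMap_locRing_injective k (algebraMap_subringToPolyRing k ⟨_, ha⟩)⟩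

variable {k} in
theorem map_subring_ne_top_of_heightOf_le_one {I : Ideal (SelfintSubring k)}
    (hI : I.heightOf ≤ 1) : I.map (algebraMap (SelfintSubring k) (SelfintLocRing k)) ≠ ⊤ := by
  let : Algebra (SelfintSubring k) (SelfintPolyRing k) := (subringToPolyRing k).toAlgebra
  have : IsScalarTower (SelfintSubring k) (SelfintPolyRing k) (SelfintLocRing k) :=
    .of_algebraMap_eq fun r => (algebraMap_subringToPolyRing k r).symm
  have : FaithfulSMul (SelfintSubring k) (SelfintPolyRing k) :=
    (faithfulSMul_iff_algebraMap_injective _ _).2 (subringToPolyRing_injective k)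
  refine map_ne_top_of_range_eq_eqLocus (range_subringToPolyRing k) (X_prime (i := 0))
    (by simp) (by simp) ?_ hI
  refine Submodule.ne_bot_iff _ |>.2 ⟨X 0 - 1, by simp [RingHom.mem_ker], fun h => ?_⟩
  simpa using congrArg (aeval fun _ : Fin 2 => (0 : k)) h

end Plane

section Automorphism

variable (k : Type*) [Field k]

/-- The coordinate `x` as a unit of `S`. -/
noncomputable def unitX : (SelfintLocRing k)ˣ :=
  (IsLocalization.Away.algebraMap_isUnit (X 0 : SelfintPolyRing k)).unit

/-- The endomorphism `x ↦ x`, `y ↦ xⁿ y` of `S`. Allowing all integers `n` makes these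
endomorphisms a one-parameter group, which provides the inverse of `scaleEquiv`. -/
noncomputable def scaleHom (n : ℤ) : SelfintLocRing k →ₐ[k] SelfintLocRing k :=
  IsLocalization.Away.liftAlgHom (X 0)
    (f := aeval ![↑(unitX k), ↑(unitX k ^ n) * algebraMap (SelfintPolyRing k) _ (X 1)])
    (by simp)

theorem scaleHom_X_zero (n : ℤ) :
    scaleHom k n (algebraMap (SelfintPolyRing k) _ (X 0)) =
      algebraMap (SelfintPolyRing k) _ (X 0) := by
  rw [scaleHom, IsLocalization.Away.liftAlgHom_apply, IsLocalization.Away.lift_eq]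
  exact aeval_X _ 0

theorem scaleHom_X_one (n : ℤ) :
    scaleHom k n (algebraMap (SelfintPolyRing k) _ (X 1)) =
      ↑(unitX k ^ n) * algebraMap (SelfintPolyRing k) _ (X 1) := by
  rw [scaleHom, IsLocalization.Away.liftAlgHom_apply, IsLocalization.Away.lift_eq]
  exact aeval_X _ 1

theorem scaleHom_unitX_zpow (m n : ℤ) :
    scaleHom k m ↑(unitX k ^ n) = ↑(unitX k ^ n) := by
  have hfix : Units.map (scaleHom k m : SelfintLocRing k →* SelfintLocRing k) (unitX k) =
      unitX k := Units.ext (scaleHom_X_zero k m)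
  calc scaleHom k m ↑(unitX k ^ n)
      = ↑(Units.map (scaleHom k m : SelfintLocRing k →* SelfintLocRing k) (unitX k ^ n)) := rfl
    _ = ↑(unitX k ^ n) := by rw [map_zpow, hfix]

variable {k} in
theorem locRing_algHom_ext {B : Type*} [CommRing B] [Algebra k B]
    {f g : SelfintLocRing k →ₐ[k] B}
    (h₀ : f (algebraMap (SelfintPolyRing k) _ (X 0)) = g (algebraMap (SelfintPolyRing k) _ (X 0)))
    (h₁ : f (algebraMap (SelfintPolyRing k) _ (X 1)) = g (algebraMap (SelfintPolyRing k) _ (X 1))) :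
    f = g :=
  Localization.algHom_ext _ (MvPolynomial.algHom_ext (Fin.forall_fin_two.2 ⟨h₀, h₁⟩))

theorem scaleHom_comp (m n : ℤ) :
    (scaleHom k m).comp (scaleHom k n) = scaleHom k (m + n) := by
  refine locRing_algHom_ext ?_ ?_
  · simp only [AlgHom.comp_apply, scaleHom_X_zero]
  · simp only [AlgHom.comp_apply, scaleHom_X_one, map_mul, scaleHom_unitX_zpow, zpow_add,
      Units.val_mul]
    ring

theorem scaleHom_zero : scaleHom k 0 = AlgHom.id k _ :=
  locRing_algHom_ext (scaleHom_X_zero k 0) <| by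
    rw [scaleHom_X_one, zpow_zero, Units.val_one, one_mul, AlgHom.id_apply]

/-- The automorphism `F` of `S` with `F(x) = x` and `F(y) = x y`. -/
noncomputable def scaleEquiv : SelfintLocRing k ≃ₐ[k] SelfintLocRing k :=
  AlgEquiv.ofAlgHom (scaleHom k 1) (scaleHom k (-1))
    (by rw [scaleHom_comp, add_neg_cancel, scaleHom_zero])
    (by rw [scaleHom_comp, neg_add_cancel, scaleHom_zero])

theorem scaleEquiv_X_zero :
    scaleEquiv k (algebraMap (SelfintPolyRing k) _ (X 0)) =
      algebraMap (SelfintPolyRing k) _ (X 0) :=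
  scaleHom_X_zero k 1

theorem scaleEquiv_X_one :
    scaleEquiv k (algebraMap (SelfintPolyRing k) _ (X 1)) =
      algebraMap (SelfintPolyRing k) _ (X 0 * X 1) :=
  (scaleHom_X_one k 1).trans <| by
    rw [zpow_one, map_mul, unitX, IsUnit.unit_spec]

/-- The endomorphism `p ↦ p(x, xy)` of `A`, the restriction of `scaleEquiv` to `A`; geometrically it
is a chart of the blow-up of the plane at the origin. -/
noncomputable def blowupChart : SelfintPolyRing k →ₐ[k] SelfintPolyRing k :=
  aeval ![X 0, X 0 * X 1]

theorem scaleEquiv_algebraMap (a : SelfintPolyRing k) :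
    scaleEquiv k (algebraMap _ _ a) = algebraMap _ (SelfintLocRing k) (blowupChart k a) := by
  have hcomp : (scaleEquiv k : SelfintLocRing k →ₐ[k] SelfintLocRing k).comp
      (IsScalarTower.toAlgHom k (SelfintPolyRing k) (SelfintLocRing k)) =
      (IsScalarTower.toAlgHom k (SelfintPolyRing k) (SelfintLocRing k)).comp (blowupChart k) := by
    refine MvPolynomial.algHom_ext (Fin.forall_fin_two.2 ⟨?_, ?_⟩)
    · simpa [blowupChart] using scaleEquiv_X_zero k
    · simpa [blowupChart] using scaleEquiv_X_one k
  exact DFunLike.congr_fun hcomp a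

variable {k}

theorem aeval_blowupChart {B : Type*} [CommRing B] [Algebra k B] {c d : Fin 2 → B}
    (h₀ : d 0 = c 0) (h₁ : d 1 = c 0 * c 1) (a : SelfintPolyRing k) :
    aeval c (blowupChart k a) = aeval d a := by
  have hcomp : (aeval c).comp (blowupChart k) = aeval d := by
    ext i
    fin_cases i <;> simp [blowupChart, h₀, h₁]
  exact DFunLike.congr_fun hcomp a

theorem blowupChart_ne_X_sub_X (a : SelfintPolyRing k) : blowupChart k a ≠ X 1 - X 0 := by
  intro h
  have hcontract : aeval ![(0 : k), 0] (blowupChart k a) = aeval ![0, 1] (blowupChart k a) :=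
    (aeval_blowupChart (d := 0) (by simp) (by simp) a).trans
      (aeval_blowupChart (by simp) (by simp) a).symm
  simp [h] at hcontract

theorem scaleEquiv_mem_subring {s : SelfintLocRing k} (hs : s ∈ SelfintSubring k) :
    scaleEquiv k s ∈ SelfintSubring k := by
  obtain ⟨a, ha, rfl⟩ := hs
  have hfix (c : k) (hc : c = c * c) :
      aeval (fun _ : Fin 2 => c) (blowupChart k a) = aeval (fun _ => c) a :=
    aeval_blowupChart rfl hc a
  refine (scaleEquiv_algebraMap k a).symm ▸ algebraMap_mem_subring_iff.2 ?_
  rw [hfix 0 (by simp), hfix 1 (by simp)]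
  exact ha

theorem exists_mem_subring_forall_scaleEquiv_ne :
    ∃ t ∈ SelfintSubring k, ∀ s ∈ SelfintSubring k, scaleEquiv k s ≠ t := by
  refine ⟨algebraMap _ _ (X 1 - X 0), algebraMap_mem_subring_iff.2 (by simp), ?_⟩
  rintro _ ⟨a, -, rfl⟩ h
  exact blowupChart_ne_X_sub_X a
    (algebraMap_locRing_injective k ((scaleEquiv_algebraMap k a).symm.trans h))

end Automorphism

end Selfintersection

open Selfintersection in
theorem counterexample_selfintersection_general (k : Type*) [Field k] :
    ∃ F : SelfintLocRing k ≃ₐ[k] SelfintLocRing k,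
      F (algebraMap (SelfintPolyRing k) (SelfintLocRing k) (X 0)) =
        algebraMap (SelfintPolyRing k) (SelfintLocRing k) (X 0) ∧
      F (algebraMap (SelfintPolyRing k) (SelfintLocRing k) (X 1)) =
        algebraMap (SelfintPolyRing k) (SelfintLocRing k) (X 0 * X 1) ∧
      (∀ I : Ideal (SelfintSubring k), I.heightOf ≤ 1 →
        I.map (algebraMap (SelfintSubring k) (SelfintLocRing k)) ≠ ⊤) ∧
      ∃ hFR : ∀ a ∈ SelfintSubring k, F a ∈ SelfintSubring k,
        ¬ Function.Surjective (fun r : SelfintSubring k =>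
          (⟨F r, hFR r r.2⟩ : SelfintSubring k)) := by
  refine ⟨scaleEquiv k, scaleEquiv_X_zero k, scaleEquiv_X_one k,
    fun _ => map_subring_ne_top_of_heightOf_le_one, fun _ => scaleEquiv_mem_subring,
    fun hsurj => ?_⟩
  obtain ⟨t, ht, hne⟩ := exists_mem_subring_forall_scaleEquiv_ne (k := k)
  obtain ⟨r, hr⟩ := hsurj ⟨t, ht⟩
  exact hne r r.2 (congrArg Subtype.val hr)

/-- The selfintersection counterexample: let `k` be a field of characteristic 0,
`A = k[x,y]`, `S = k[x,x⁻¹,y]` the localization of `A` away from `x`, and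
`R' = {p : p(0,0) = p(1,1)} ⊆ A ⊆ S`.  The `k`-algebra automorphism `F` of `S` with
`F(x) = x`, `F(y) = x·y` maps `R'` into `R'`; every ideal of height 1 in `R'` generates
a proper ideal in `S`; but the restriction of `F` to `R'` is not surjective, hence not
an automorphism of `R'`. -/
theorem counterexample_selfintersection (k : Type*) [Field k] [CharZero k] :
    ∃ F : SelfintLocRing k ≃ₐ[k] SelfintLocRing k,
      F (algebraMap (SelfintPolyRing k) (SelfintLocRing k) (MvPolynomial.X 0)) =
        algebraMap (SelfintPolyRing k) (SelfintLocRing k) (MvPolynomial.X 0) ∧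
      F (algebraMap (SelfintPolyRing k) (SelfintLocRing k) (MvPolynomial.X 1)) =
        algebraMap (SelfintPolyRing k) (SelfintLocRing k)
          (MvPolynomial.X 0 * MvPolynomial.X 1) ∧
      (∀ I : Ideal ↥(SelfintSubring k), Ideal.heightOf (R := ↥(SelfintSubring k)) I = 1 →
        Ideal.map (algebraMap ↥(SelfintSubring k) (SelfintLocRing k)) I ≠ ⊤) ∧
      ∃ hFR : ∀ a ∈ SelfintSubring k, F a ∈ SelfintSubring k,
        ¬ Function.Surjective (fun r : ↥(SelfintSubring k) =>
          (⟨F r.1, hFR r.1 r.2⟩ : ↥(SelfintSubring k))) := by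
  obtain ⟨F, hF₀, hF₁, hheight, hFR⟩ := counterexample_selfintersection_general k
  exact ⟨F, hF₀, hF₁, fun I hI => hheight I hI.le, hFR⟩
end
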